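/- arXiv:1301.6616 — 12 statements merged into one kernel-verified Lean document; each statement's English description precedes it below -/
import Mathlib

section
/- Let X be an element of the primal feasible region 𝒫, written as X = P Pᵀ where P is an n×r real matrix and r = rank X. Then the space of perturbations of X with respect to 𝒫 equals Pert_𝒫(X) = { P R Pᵀ : R a symmetric r×r matrix with ⟨P R Pᵀ, A_i⟩ = 0 for all i ∈ I ∪ J_X }. -/
/- STATEMENT 0: characterization of the perturbation space Pert_𝒫(X) of a feasible
matrix X = P Pᵀ of a semidefinite program with equality constraints (indexed by I)
and inequality constraints (indexed by J). -/

open Matrix BigOperators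
open scoped Classical

namespace Stmt0

variable {n r : ℕ} {ι : Type*}

/-- The primal feasible region 𝒫 of the SDP with data `A`, `b`, equality index set `I`
and inequality index set `J`; the trace inner product is `⟨A,X⟩ = (A * X).trace`. -/
def Feas (A : ι → Matrix (Fin n) (Fin n) ℝ) (b : ι → ℝ) (I J : Finset ι) :
    Set (Matrix (Fin n) (Fin n) ℝ) :=
  {X | X.PosSemidef ∧ (∀ i ∈ I, (A i * X).trace = b i) ∧ (∀ i ∈ J, (A i * X).trace ≤ b i)}

/-- The space of perturbations of `X` with respect to a convex set `C`:
all `Z` such that `X ± ε Z ∈ C` for some `ε > 0`. -/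
def Pert (C : Set (Matrix (Fin n) (Fin n) ℝ)) (X : Matrix (Fin n) (Fin n) ℝ) :
    Set (Matrix (Fin n) (Fin n) ℝ) :=
  {Z | ∃ ε : ℝ, 0 < ε ∧ X + ε • Z ∈ C ∧ X - ε • Z ∈ C}

/-- The set `J_X` of inequality constraints active at `X`. -/
noncomputable def activeJ (A : ι → Matrix (Fin n) (Fin n) ℝ) (b : ι → ℝ) (J : Finset ι)
    (X : Matrix (Fin n) (Fin n) ℝ) : Finset ι :=
  J.filter fun i => (A i * X).trace = b i

theorem one_add_smul_psd (R : Matrix (Fin r) (Fin r) ℝ) (hR : R.IsSymm) :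
    ∀ᶠ t : ℝ in nhds 0, (1 + t • R).PosSemidef := by
  have hc : ∀ᶠ t : ℝ in nhds 0, |t| * (∑ i, ∑ j, |R i j|) < 1 := by
    have : Continuous fun t : ℝ => |t| * (∑ i, ∑ j, |R i j|) := by fun_prop
    exact this.continuousAt.eventually_lt continuousAt_const (by simp)
  filter_upwards [hc] with t ht
  refine PosSemidef.of_dotProduct_mulVec_nonneg ?_ ?_
  · have hR' : Rᵀ = R := hR
    simp [Matrix.IsHermitian, conjTranspose_eq_transpose_of_trivial, hR']
  · intro v
    have hb : |v ⬝ᵥ (R *ᵥ v)| ≤ (∑ i, ∑ j, |R i j|) * (v ⬝ᵥ v) := by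
      simp only [dotProduct, mulVec]
      rw [Finset.sum_mul]
      refine (Finset.abs_sum_le_sum_abs _ _).trans (Finset.sum_le_sum fun i _ => ?_)
      rw [Finset.mul_sum, Finset.sum_mul]
      refine (Finset.abs_sum_le_sum_abs _ _).trans (Finset.sum_le_sum fun j _ => ?_)
      have h1 : ∀ k, v k * v k ≤ ∑ k, v k * v k := fun k =>
        Finset.single_le_sum (f := fun k => v k * v k)
          (fun k _ => mul_self_nonneg _) (Finset.mem_univ k)
      have h2 : |v i| * |v j| ≤ ∑ k, v k * v k := by
        have := h1 i
        have := h1 j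
        rw [← abs_mul_abs_self (v _)] at *
        nlinarith [sq_nonneg (|v i| - |v j|), abs_mul_abs_self (v i), abs_mul_abs_self (v j)]
      calc |v i * (R i j * v j)| = |R i j| * (|v i| * |v j|) := by
            rw [abs_mul, abs_mul]; ring
        _ ≤ _ := mul_le_mul_of_nonneg_left h2 (abs_nonneg _)
    have hv : 0 ≤ v ⬝ᵥ v := Finset.sum_nonneg fun i _ => mul_self_nonneg _
    have h3 : |t * (v ⬝ᵥ (R *ᵥ v))| ≤ v ⬝ᵥ v := by
      rw [abs_mul]
      nlinarith [mul_le_mul_of_nonneg_left hb (abs_nonneg t),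
        mul_le_mul_of_nonneg_right ht.le hv]
    have := neg_abs_le (t * (v ⬝ᵥ (R *ᵥ v)))
    simp only [star_trivial, add_mulVec, one_mulVec, smul_mulVec, dotProduct_add,
      dotProduct_smul, smul_eq_mul]
    linarith

theorem ker_of_pert (X Z : Matrix (Fin n) (Fin n) ℝ) (ε : ℝ) (hε : 0 < ε)
    (h1 : (X + ε • Z).PosSemidef) (h2 : (X - ε • Z).PosSemidef)
    (v : Fin n → ℝ) (hv : X *ᵥ v = 0) : Z *ᵥ v = 0 := by
  have a1 := h1.dotProduct_mulVec_nonneg v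
  have a2 := h2.dotProduct_mulVec_nonneg v
  have a3 : star v ⬝ᵥ ((X + ε • Z) *ᵥ v) = 0 := by
    simp only [star_trivial, add_mulVec, sub_mulVec, hv, smul_mulVec, dotProduct_add,
      dotProduct_sub, dotProduct_zero] at *
    linarith
  rw [h1.dotProduct_mulVec_zero_iff, add_mulVec, hv, zero_add, smul_mulVec] at a3
  exact (smul_eq_zero.mp a3).resolve_left hε.ne'

theorem forward (X Z : Matrix (Fin n) (Fin n) ℝ) (ε : ℝ) (hε : 0 < ε)
    (h1 : (X + ε • Z).PosSemidef) (h2 : (X - ε • Z).PosSemidef)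
    (P : Matrix (Fin n) (Fin r) ℝ) (hr : r = X.rank) (hfact : X = P * Pᵀ) :
    ∃ R : Matrix (Fin r) (Fin r) ℝ, R.IsSymm ∧ Z = P * R * Pᵀ := by
  have hZ : Zᵀ = Z := by
    have e1 := h1.isHermitian
    have e2 := h2.isHermitian
    simp only [Matrix.IsHermitian, conjTranspose_eq_transpose_of_trivial] at e1 e2
    ext i j
    have e1 := congrFun (congrFun e1 i) j
    have e2 := congrFun (congrFun e2 i) j
    simp at e1 e2 ⊢
    have : ε * Z j i = ε * Z i j := by linarith
    exact mul_left_cancel₀ hε.ne' this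
  have hrk : (Pᵀ * P).rank = r := by
    rw [rank_transpose_mul_self]
    conv_rhs => rw [hr, hfact, rank_self_mul_transpose]
  have hU : IsUnit (Pᵀ * P) := by
    rw [← Matrix.linearIndependent_rows_iff_isUnit, linearIndependent_iff_card_eq_finrank_span,
      Set.finrank, ← rank_eq_finrank_span_row, hrk]
    simp
  have hdet := (isUnit_iff_isUnit_det _).mp hU
  obtain ⟨G, hG⟩ : ∃ G, G = (Pᵀ * P)⁻¹ := ⟨_, rfl⟩
  have hG1 : G * (Pᵀ * P) = 1 := by rw [hG]; exact nonsing_inv_mul _ hdet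
  have hG2 : (Pᵀ * P) * G = 1 := by rw [hG]; exact mul_nonsing_inv _ hdet
  have hGt : Gᵀ = G := by rw [hG, transpose_nonsing_inv]; simp
  have key : Z * (1 - P * G * Pᵀ) = 0 := by
    have hX0 : X * (1 - P * G * Pᵀ) = 0 := by
      have : X * (P * G * Pᵀ) = P * ((Pᵀ * P) * G) * Pᵀ := by
        rw [hfact]; simp only [Matrix.mul_assoc]
      rw [mul_sub, this, hG2, mul_one, Matrix.mul_one, hfact, sub_self]
    apply Matrix.ext_of_mulVec_single
    intro i
    rw [← mulVec_mulVec, zero_mulVec]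
    apply ker_of_pert X Z ε hε h1 h2
    rw [mulVec_mulVec, hX0, zero_mulVec]
  have k1 : Z * (P * G * Pᵀ) = Z := by
    rw [mul_sub, mul_one, sub_eq_zero] at key
    exact key.symm
  have k2 : (P * G * Pᵀ) * Z = Z := by
    have := congrArg transpose k1
    simpa [transpose_mul, hZ, hGt, Matrix.mul_assoc] using this
  refine ⟨G * Pᵀ * Z * P * G, ?_, ?_⟩
  · simp [Matrix.IsSymm, transpose_mul, hZ, hGt, Matrix.mul_assoc]
  · calc Z = (P * G * Pᵀ) * (Z * (P * G * Pᵀ)) := by rw [k1, k2]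
      _ = _ := by simp only [Matrix.mul_assoc]

theorem pert_eq_of_rank_factorization
    (A : ι → Matrix (Fin n) (Fin n) ℝ) (b : ι → ℝ) (I J : Finset ι)
    (hIJ : Disjoint I J) (hA : ∀ i, (A i).IsSymm)
    (X : Matrix (Fin n) (Fin n) ℝ) (hX : X ∈ Feas A b I J)
    (P : Matrix (Fin n) (Fin r) ℝ) (hr : r = X.rank) (hfact : X = P * Pᵀ) :
    Pert (Feas A b I J) X =
      {Y | ∃ R : Matrix (Fin r) (Fin r) ℝ, R.IsSymm ∧ Y = P * R * Pᵀ ∧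
        ∀ i ∈ I ∪ activeJ A b J X, (P * R * Pᵀ * A i).trace = 0} := by
  obtain ⟨hXp, hXI, hXJ⟩ := hX
  ext Z
  constructor
  · rintro ⟨ε, hε, ⟨p1, i1, j1⟩, ⟨p2, i2, j2⟩⟩
    obtain ⟨R, hR, hZ⟩ := forward X Z ε hε p1 p2 P hr hfact
    refine ⟨R, hR, hZ, ?_⟩
    rw [← hZ]
    intro i hi
    rw [Matrix.trace_mul_comm]
    simp only [mul_add, mul_sub, Matrix.mul_smul, trace_add, trace_sub, trace_smul,
      smul_eq_mul] at i1 i2 j1 j2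
    have : ε * (A i * Z).trace = 0 := by
      rcases Finset.mem_union.mp hi with h | h
      · linarith [i1 i h, hXI i h]
      · obtain ⟨hJ, hb⟩ := Finset.mem_filter.mp h
        linarith [j1 i hJ, j2 i hJ]
    exact (mul_eq_zero.mp this).resolve_left hε.ne'
  · rintro ⟨R, hR, hZ, h0⟩
    rw [← hZ] at h0
    have hF : ∀ᶠ t : ℝ in nhds 0, X + t • Z ∈ Feas A b I J := by
      have hJ : ∀ᶠ t : ℝ in nhds 0, ∀ i ∈ J, (A i * (X + t • Z)).trace ≤ b i := by
        rw [Filter.eventually_all_finset]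
        intro i hi
        simp only [mul_add, Matrix.mul_smul, trace_add, trace_smul, smul_eq_mul]
        by_cases hb : (A i * X).trace = b i
        · have := h0 i (Finset.mem_union_right _ (Finset.mem_filter.mpr ⟨hi, hb⟩))
          rw [Matrix.trace_mul_comm] at this
          simp [this, hb]
        · have hlt := lt_of_le_of_ne (hXJ i hi) hb
          have hc : Continuous fun t : ℝ => (A i * X).trace + t * (A i * Z).trace := by fun_prop
          filter_upwards [hc.continuousAt.eventually_lt
            (continuousAt_const (x := (0 : ℝ)) (y := b i)) (by simpa using hlt)] with t ht
          exact ht.le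
      filter_upwards [hJ, one_add_smul_psd R hR] with t h1 h2
      refine ⟨?_, ?_, h1⟩
      · have := h2.mul_mul_conjTranspose_same P
        rw [conjTranspose_eq_transpose_of_trivial] at this
        convert this using 1
        rw [hZ, hfact]
        simp [Matrix.mul_add, Matrix.add_mul]
      · intro i hi
        have := h0 i (Finset.mem_union_left _ hi)
        rw [Matrix.trace_mul_comm] at this
        simp [mul_add, this, hXI i hi]
    have hF' : ∀ᶠ t : ℝ in nhds 0, X + (-t) • Z ∈ Feas A b I J := by
      have : Filter.Tendsto (fun t : ℝ => -t) (nhds 0) (nhds 0) := by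
        simpa using (continuous_neg (G := ℝ)).tendsto 0
      exact this.eventually hF
    have hboth := (hF.and hF').filter_mono (nhdsWithin_le_nhds (s := Set.Ioi (0:ℝ)))
    obtain ⟨t, ⟨a, c⟩, ht⟩ := (hboth.and self_mem_nhdsWithin).exists
    refine ⟨t, ht, a, ?_⟩
    rwa [neg_smul, ← sub_eq_add_neg] at c

end Stmt0
end

section
/- Let X be an element of the primal feasible region 𝒫, written as X = P Pᵀ where P is an n×r real matrix and r = rank X. The following are equivalent: (i) X is an extreme point of 𝒫; (ii) the only symmetric r×r matrix R satisfying ⟨Pᵀ A_i P, R⟩ = 0 for all i ∈ I ∪ J_X is R = 0; (iii) the linear span of { Pᵀ A_i P : i ∈ I ∪ J_X } is the whole space of symmetric r×r matrices. -/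
/- STATEMENT 1: for X = P Pᵀ in the primal feasible region 𝒫 (with r = rank X),
TFAE: (i) X is an extreme point of 𝒫; (ii) the only symmetric r×r matrix R with
⟨Pᵀ A_i P, R⟩ = 0 for all i ∈ I ∪ J_X is R = 0; (iii) span{Pᵀ A_i P : i ∈ I ∪ J_X}
is the whole space of symmetric r×r matrices. -/

open Matrix BigOperators
open scoped Classical

namespace Stmt1

variable {n r : ℕ} {ι : Type*}

/-- The primal feasible region 𝒫. -/
def Feas (A : ι → Matrix (Fin n) (Fin n) ℝ) (b : ι → ℝ) (I J : Finset ι) :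
    Set (Matrix (Fin n) (Fin n) ℝ) :=
  {X | X.PosSemidef ∧ (∀ i ∈ I, (A i * X).trace = b i) ∧ (∀ i ∈ J, (A i * X).trace ≤ b i)}

/-- The set `J_X` of inequality constraints active at `X`. -/
noncomputable def activeJ (A : ι → Matrix (Fin n) (Fin n) ℝ) (b : ι → ℝ) (J : Finset ι)
    (X : Matrix (Fin n) (Fin n) ℝ) : Finset ι :=
  J.filter fun i => (A i * X).trace = b i

/-- `x` is an extreme point of the convex set `C`. -/
def IsExtremePt {M : Type*} [AddCommGroup M] [Module ℝ M] (C : Set M) (x : M) : Prop :=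
  x ∈ C ∧ ∀ y ∈ C, ∀ z ∈ C, ∀ t : ℝ, 0 < t → t < 1 → x = t • y + (1 - t) • z →
    y = x ∧ z = x

/-- The subspace of symmetric m×m real matrices. -/
def symmSub (m : ℕ) : Submodule ℝ (Matrix (Fin m) (Fin m) ℝ) where
  carrier := {X | X.IsSymm}
  add_mem' := fun hx hy => hx.add hy
  zero_mem' := by simp [Matrix.IsSymm]
  smul_mem' := fun c X hX => hX.smul c

lemma exists_left_inv (P : Matrix (Fin n) (Fin r) ℝ) (hr : r = (P * Pᵀ).rank) :
    ∃ Q : Matrix (Fin r) (Fin n) ℝ, Q * P = 1 := by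
  rw [Matrix.rank_self_mul_transpose] at hr
  apply Matrix.vecMul_surjective_iff_exists_left_inverse.1
  have h : LinearMap.range (Pᵀ).mulVecLin = ⊤ := by
    apply Submodule.eq_top_of_finrank_eq
    have h2 : Module.finrank ℝ (LinearMap.range (Pᵀ).mulVecLin) = (Pᵀ).rank := rfl
    rw [h2, Matrix.rank_transpose, ← hr]
    simp
  intro v
  obtain ⟨w, hw⟩ := LinearMap.range_eq_top.1 h v
  refine ⟨w, ?_⟩
  rw [← hw]
  simp

lemma quad_bound (R : Matrix (Fin r) (Fin r) ℝ) (x : Fin r → ℝ) :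
    |x ⬝ᵥ (R *ᵥ x)| ≤ (∑ i, ∑ j, |R i j|) * (x ⬝ᵥ x) := by
  have hs : ∀ i, x i ^ 2 ≤ x ⬝ᵥ x := by
    intro i
    have := Finset.single_le_sum (f := fun i => x i * x i)
      (fun i _ => mul_self_nonneg (x i)) (Finset.mem_univ i)
    simpa [dotProduct, sq] using this
  have he : x ⬝ᵥ (R *ᵥ x) = ∑ i, ∑ j, x i * (R i j * x j) := by
    simp only [dotProduct, mulVec, Finset.mul_sum]
  rw [he]
  generalize x ⬝ᵥ x = q at hs ⊢
  simp only [Finset.sum_mul]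
  refine (Finset.abs_sum_le_sum_abs _ _).trans (Finset.sum_le_sum fun i _ => ?_)
  refine (Finset.abs_sum_le_sum_abs _ _).trans (Finset.sum_le_sum fun j _ => ?_)
  have h1 := hs i
  have h2 := hs j
  have h3 : |x i * (R i j * x j)| = |R i j| * (|x i| * |x j|) := by
    rw [abs_mul, abs_mul]; ring
  rw [h3]
  apply mul_le_mul_of_nonneg_left _ (abs_nonneg _)
  nlinarith [sq_nonneg (|x i| - |x j|), sq_abs (x i), sq_abs (x j)]

lemma psd_eventually (R : Matrix (Fin r) (Fin r) ℝ) (hR : R.IsSymm) :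
    ∀ᶠ e in nhds (0 : ℝ), (1 + e • R).PosSemidef := by
  have hc : Filter.Tendsto (fun e : ℝ => |e| * (∑ i, ∑ j, |R i j|)) (nhds 0) (nhds 0) := by
    have : Continuous (fun e : ℝ => |e| * (∑ i, ∑ j, |R i j|)) := by fun_prop
    simpa using this.tendsto 0
  filter_upwards [hc.eventually (gt_mem_nhds one_pos)] with e he
  refine Matrix.PosSemidef.of_dotProduct_mulVec_nonneg ?_ ?_
  · have : (1 + e • R).IsSymm := Matrix.isSymm_one.add (hR.smul e)
    simpa [Matrix.IsHermitian, Matrix.IsSymm, Matrix.conjTranspose_eq_transpose_of_trivial] using this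
  · intro x
    have h1 := quad_bound R x
    have h2 : 0 ≤ x ⬝ᵥ x := Finset.sum_nonneg fun i _ => mul_self_nonneg (x i)
    rw [star_trivial, Matrix.add_mulVec, Matrix.one_mulVec, Matrix.smul_mulVec, dotProduct_add,
      dotProduct_smul, smul_eq_mul]
    have h3 : |e * (x ⬝ᵥ (R *ᵥ x))| ≤ x ⬝ᵥ x := by
      rw [abs_mul]
      calc _ ≤ |e| * ((∑ i, ∑ j, |R i j|) * (x ⬝ᵥ x)) :=
            mul_le_mul_of_nonneg_left h1 (abs_nonneg e)
        _ = (|e| * (∑ i, ∑ j, |R i j|)) * (x ⬝ᵥ x) := by ring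
        _ ≤ 1 * (x ⬝ᵥ x) := mul_le_mul_of_nonneg_right he.le h2
        _ = _ := one_mul _
    linarith [neg_abs_le (e * (x ⬝ᵥ (R *ᵥ x)))]

lemma trace_conj (B : Matrix (Fin n) (Fin n) ℝ) (P : Matrix (Fin n) (Fin r) ℝ)
    (R : Matrix (Fin r) (Fin r) ℝ) :
    (B * (P * R * Pᵀ)).trace = (Pᵀ * B * P * R).trace := by
  rw [← Matrix.mul_assoc, Matrix.trace_mul_comm]
  simp only [Matrix.mul_assoc]

lemma feas_eventually
    (A : ι → Matrix (Fin n) (Fin n) ℝ) (b : ι → ℝ) (I J : Finset ι)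
    (P : Matrix (Fin n) (Fin r) ℝ) (hX : P * Pᵀ ∈ Feas A b I J)
    (R : Matrix (Fin r) (Fin r) ℝ) (hR : R.IsSymm)
    (h0 : ∀ i ∈ I ∪ activeJ A b J (P * Pᵀ), (Pᵀ * A i * P * R).trace = 0) :
    ∀ᶠ e in nhds (0 : ℝ), P * (1 + e • R) * Pᵀ ∈ Feas A b I J := by
  have htr : ∀ i (e : ℝ), (A i * (P * (1 + e • R) * Pᵀ)).trace =
      (A i * (P * Pᵀ)).trace + e * (Pᵀ * A i * P * R).trace := by
    intro i e
    rw [← trace_conj]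
    simp [Matrix.mul_add, Matrix.add_mul]
  have hJ : ∀ i ∈ J, ∀ᶠ e in nhds (0 : ℝ), (A i * (P * (1 + e • R) * Pᵀ)).trace ≤ b i := by
    intro i hi
    simp only [htr]
    by_cases ha : (A i * (P * Pᵀ)).trace = b i
    · have := h0 i (Finset.mem_union_right _ (by simp [activeJ, hi, ha]))
      simp [this, ha]
    · have hlt := lt_of_le_of_ne (hX.2.2 i hi) ha
      have hc : Continuous (fun e : ℝ =>
        (A i * (P * Pᵀ)).trace + e * (Pᵀ * A i * P * R).trace) := by fun_prop
      have := (hc.tendsto 0).eventually_lt_const (u := b i) (by simpa using hlt)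
      exact this.mono fun e he => he.le
  filter_upwards [psd_eventually R hR, (Filter.eventually_all_finset J).2 hJ] with e h1 h2
  refine ⟨?_, ?_, h2⟩
  · simpa [Matrix.conjTranspose_eq_transpose_of_trivial] using h1.mul_mul_conjTranspose_same P
  · intro i hi
    rw [htr, h0 i (Finset.mem_union_left _ hi), mul_zero, add_zero]
    exact hX.2.1 i hi

lemma ext_imp
    (A : ι → Matrix (Fin n) (Fin n) ℝ) (b : ι → ℝ) (I J : Finset ι)
    (P : Matrix (Fin n) (Fin r) ℝ) (Q : Matrix (Fin r) (Fin n) ℝ) (hQ : Q * P = 1)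
    (hE : IsExtremePt (Feas A b I J) (P * Pᵀ))
    (R : Matrix (Fin r) (Fin r) ℝ) (hR : R.IsSymm)
    (h0 : ∀ i ∈ I ∪ activeJ A b J (P * Pᵀ), (Pᵀ * A i * P * R).trace = 0) : R = 0 := by
  have h1 := feas_eventually A b I J P hE.1 R hR h0
  have h2 : ∀ᶠ e in nhds (0 : ℝ), P * (1 + (-e) • R) * Pᵀ ∈ Feas A b I J := by
    have : Filter.Tendsto (fun e : ℝ => -e) (nhds 0) (nhds 0) := by
      simpa using (continuous_neg (G := ℝ)).tendsto 0
    exact this.eventually h1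
  obtain ⟨e, ⟨he1, he2⟩, he⟩ := (((h1.and h2).filter_mono nhdsWithin_le_nhds).and
    (self_mem_nhdsWithin : Set.Ioi (0:ℝ) ∈ nhdsWithin 0 (Set.Ioi 0))).exists
  have he0 : e ≠ 0 := ne_of_gt he
  have key := (hE.2 _ he1 _ he2 (1/2) (by norm_num) (by norm_num) (by
    simp only [Matrix.mul_add, Matrix.add_mul, Matrix.mul_one, Matrix.mul_smul, Matrix.smul_mul]
    module)).1
  have hz : P * R * Pᵀ = 0 := by
    simp only [Matrix.mul_add, Matrix.add_mul, Matrix.mul_one, Matrix.mul_smul,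
      Matrix.smul_mul, add_eq_left] at key
    exact (smul_eq_zero.1 key).resolve_left he0
  have hQ' : Pᵀ * Qᵀ = 1 := by rw [← Matrix.transpose_mul, hQ, Matrix.transpose_one]
  calc R = (Q * P) * R * (Pᵀ * Qᵀ) := by rw [hQ, hQ', Matrix.one_mul, Matrix.mul_one]
    _ = Q * (P * R * Pᵀ) * Qᵀ := by simp only [Matrix.mul_assoc]
    _ = 0 := by rw [hz]; simp

lemma imp_eq
    (A : ι → Matrix (Fin n) (Fin n) ℝ) (b : ι → ℝ) (I J : Finset ι)
    (P : Matrix (Fin n) (Fin r) ℝ) (Q : Matrix (Fin r) (Fin n) ℝ) (hQ : Q * P = 1)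
    (hX : P * Pᵀ ∈ Feas A b I J)
    (H : ∀ R : Matrix (Fin r) (Fin r) ℝ, R.IsSymm →
        (∀ i ∈ I ∪ activeJ A b J (P * Pᵀ), (Pᵀ * A i * P * R).trace = 0) → R = 0)
    (Y Z : Matrix (Fin n) (Fin n) ℝ) (hY : Y ∈ Feas A b I J) (hZ : Z ∈ Feas A b I J)
    (s t : ℝ) (hs : 0 < s) (ht : 0 < t) (hst : s + t = 1) (hXe : P * Pᵀ = s • Y + t • Z) :
    Y = P * Pᵀ := by
  have hQ' : Pᵀ * Qᵀ = 1 := by rw [← Matrix.transpose_mul, hQ, Matrix.transpose_one]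
  have hYs : Yᵀ = Y := by
    have := hY.1.isHermitian
    rwa [Matrix.IsHermitian, Matrix.conjTranspose_eq_transpose_of_trivial] at this
  have hker : ∀ v : Fin n → ℝ, Pᵀ *ᵥ v = 0 → Y *ᵥ v = 0 := by
    intro v hv
    have h1 : v ⬝ᵥ ((P * Pᵀ) *ᵥ v) = 0 := by
      rw [← Matrix.mulVec_mulVec, hv]; simp
    have hy := hY.1.dotProduct_mulVec_nonneg v
    have hz := hZ.1.dotProduct_mulVec_nonneg v
    rw [star_trivial] at hy hz
    rw [hXe, Matrix.add_mulVec, Matrix.smul_mulVec, Matrix.smul_mulVec, dotProduct_add,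
      dotProduct_smul, dotProduct_smul, smul_eq_mul, smul_eq_mul] at h1
    have h3 : v ⬝ᵥ (Y *ᵥ v) = 0 := by
      have := mul_nonneg ht.le hz
      have := mul_nonneg hs.le hy
      have h4 : s * (v ⬝ᵥ (Y *ᵥ v)) = 0 := by linarith
      exact (mul_eq_zero.1 h4).resolve_left hs.ne'
    exact (hY.1.dotProduct_mulVec_zero_iff v).1 (by rwa [star_trivial])
  have hYr : Y * (Qᵀ * Pᵀ) = Y := by
    apply Matrix.ext_of_mulVec_single
    intro i
    have := hker (((1 : Matrix (Fin n) (Fin n) ℝ) - Qᵀ * Pᵀ) *ᵥ (Pi.single i 1)) (by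
      rw [Matrix.mulVec_mulVec, Matrix.mul_sub, ← Matrix.mul_assoc, hQ',
        Matrix.mul_one, Matrix.one_mul, sub_self, Matrix.zero_mulVec])
    rw [Matrix.mulVec_mulVec, Matrix.mul_sub, Matrix.mul_one, Matrix.sub_mulVec, sub_eq_zero] at this
    exact this.symm
  have hYl : P * Q * Y = Y := by
    have := congrArg Matrix.transpose hYr
    simpa [Matrix.transpose_mul, hYs] using this
  have hfac : P * (Q * Y * Qᵀ - 1) * Pᵀ = Y - P * Pᵀ := by
    rw [Matrix.mul_sub, Matrix.sub_mul, Matrix.mul_one]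
    congr 1
    calc P * (Q * Y * Qᵀ) * Pᵀ = (P * Q * Y) * (Qᵀ * Pᵀ) := by simp only [Matrix.mul_assoc]
      _ = Y := by rw [hYl, hYr]
  have hR := H (Q * Y * Qᵀ - 1) (by
      rw [Matrix.IsSymm]
      simp [Matrix.transpose_mul, hYs, Matrix.mul_assoc]) (by
    intro i hi
    rw [← trace_conj, hfac, Matrix.mul_sub, Matrix.trace_sub, sub_eq_zero]
    rcases Finset.mem_union.1 hi with hi | hi
    · rw [hY.2.1 i hi, hX.2.1 i hi]
    · obtain ⟨hiJ, hact⟩ := Finset.mem_filter.1 hi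
      have h1 := hY.2.2 i hiJ
      have h2 := hZ.2.2 i hiJ
      have h3 : (A i * (P * Pᵀ)).trace = s * (A i * Y).trace + t * (A i * Z).trace := by
        rw [hXe]; simp [Matrix.mul_add]
      rw [hact] at h3 ⊢
      apply le_antisymm h1
      have h4 : t = 1 - s := by linarith
      subst h4
      nlinarith [mul_le_mul_of_nonneg_left h2 ht.le])
  rw [hR] at hfac
  simp only [Matrix.mul_zero, Matrix.zero_mul] at hfac
  exact sub_eq_zero.1 hfac.symm

lemma imp_ext
    (A : ι → Matrix (Fin n) (Fin n) ℝ) (b : ι → ℝ) (I J : Finset ι)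
    (P : Matrix (Fin n) (Fin r) ℝ) (Q : Matrix (Fin r) (Fin n) ℝ) (hQ : Q * P = 1)
    (hX : P * Pᵀ ∈ Feas A b I J)
    (H : ∀ R : Matrix (Fin r) (Fin r) ℝ, R.IsSymm →
        (∀ i ∈ I ∪ activeJ A b J (P * Pᵀ), (Pᵀ * A i * P * R).trace = 0) → R = 0) :
    IsExtremePt (Feas A b I J) (P * Pᵀ) :=
  ⟨hX, fun Y hY Z hZ t h0 h1 he =>
    ⟨imp_eq A b I J P Q hQ hX H Y Z hY hZ t (1 - t) h0 (by linarith) (by ring) he,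
     imp_eq A b I J P Q hQ hX H Z Y hZ hY (1 - t) t (by linarith) h0 (by ring)
      (by rw [he, add_comm])⟩⟩

lemma functional_rep (f : Matrix (Fin r) (Fin r) ℝ →ₗ[ℝ] ℝ) :
    ∃ R : Matrix (Fin r) (Fin r) ℝ, ∀ N, f N = (N * R).trace := by
  refine ⟨Matrix.of fun j i => f (Matrix.single i j 1), fun N => ?_⟩
  conv_lhs => rw [Matrix.matrix_eq_sum_single N]
  simp only [map_sum, Matrix.trace, Matrix.diag, Matrix.mul_apply, Matrix.of_apply]
  refine Finset.sum_congr rfl fun i _ => Finset.sum_congr rfl fun j _ => ?_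
  have : Matrix.single i j (N i j) = N i j • Matrix.single i j (1 : ℝ) := by simp
  rw [this, map_smul, smul_eq_mul]

lemma span_iff (S : Set (Matrix (Fin r) (Fin r) ℝ)) (hS : ∀ M ∈ S, M.IsSymm) :
    (∀ R : Matrix (Fin r) (Fin r) ℝ, R.IsSymm → (∀ M ∈ S, (M * R).trace = 0) → R = 0) ↔
      Submodule.span ℝ S = symmSub r := by
  have hle : Submodule.span ℝ S ≤ symmSub r := Submodule.span_le.2 hS
  constructor
  · intro H
    refine le_antisymm hle fun M hM => ?_
    by_contra hn
    obtain ⟨f, hf, hk⟩ := Submodule.exists_le_ker_of_notMem hn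
    obtain ⟨R, hR⟩ := functional_rep f
    have hsym : ∀ N : Matrix (Fin r) (Fin r) ℝ, N.IsSymm → (N * (R + Rᵀ)).trace = 2 * f N := by
      intro N hN
      have : (N * Rᵀ).trace = (N * R).trace := by
        rw [← Matrix.trace_transpose (N * Rᵀ), Matrix.transpose_mul, Matrix.transpose_transpose,
          hN.eq, Matrix.trace_mul_comm]
      rw [Matrix.mul_add, Matrix.trace_add, this, hR]; ring
    have h0 : R + Rᵀ = 0 := H _ (Matrix.isSymm_add_transpose_self R) (by
      intro N hN
      rw [hsym N (hS N hN), LinearMap.mem_ker.1 (hk (Submodule.subset_span hN)), mul_zero])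
    have := hsym M hM
    rw [h0] at this
    simp only [Matrix.mul_zero, Matrix.trace_zero] at this
    exact hf (by linarith)
  · intro H R hR h0
    have hmem : R ∈ Submodule.span ℝ S := by rw [H]; exact hR
    have hz : ∀ N ∈ Submodule.span ℝ S, (N * R).trace = 0 := by
      intro N hN
      induction hN using Submodule.span_induction with
      | mem x hx => exact h0 x hx
      | zero => simp
      | add x y _ _ hx hy => rw [Matrix.add_mul, Matrix.trace_add, hx, hy, add_zero]
      | smul a x _ hx => rw [Matrix.smul_mul, Matrix.trace_smul, hx, smul_zero]
    apply Matrix.trace_conjTranspose_mul_self_eq_zero_iff.1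
    rw [Matrix.conjTranspose_eq_transpose_of_trivial, hR.eq]
    exact hz R hmem

theorem extremePoint_tfae
    (A : ι → Matrix (Fin n) (Fin n) ℝ) (b : ι → ℝ) (I J : Finset ι)
    (hIJ : Disjoint I J) (hA : ∀ i, (A i).IsSymm)
    (X : Matrix (Fin n) (Fin n) ℝ) (hX : X ∈ Feas A b I J)
    (P : Matrix (Fin n) (Fin r) ℝ) (hr : r = X.rank) (hfact : X = P * Pᵀ) :
    (IsExtremePt (Feas A b I J) X ↔
      ∀ R : Matrix (Fin r) (Fin r) ℝ, R.IsSymm →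
        (∀ i ∈ I ∪ activeJ A b J X, (Pᵀ * A i * P * R).trace = 0) → R = 0) ∧
    (IsExtremePt (Feas A b I J) X ↔
      Submodule.span ℝ {M | ∃ i ∈ I ∪ activeJ A b J X, M = Pᵀ * A i * P} = symmSub r) := by
  subst hfact
  obtain ⟨Q, hQ⟩ := exists_left_inv P hr
  have h1 : IsExtremePt (Feas A b I J) (P * Pᵀ) ↔
      ∀ R : Matrix (Fin r) (Fin r) ℝ, R.IsSymm →
        (∀ i ∈ I ∪ activeJ A b J (P * Pᵀ), (Pᵀ * A i * P * R).trace = 0) → R = 0 :=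
    ⟨fun h R hR h0 => ext_imp A b I J P Q hQ h R hR h0, imp_ext A b I J P Q hQ hX⟩
  refine ⟨h1, h1.trans ?_⟩
  rw [← span_iff]
  · refine forall_congr' fun R => imp_congr_right fun _ => imp_congr ?_ Iff.rfl
    constructor
    · rintro h _ ⟨i, hi, rfl⟩
      exact h i hi
    · intro h i hi
      exact h _ ⟨i, hi, rfl⟩
  · rintro _ ⟨i, _, rfl⟩
    rw [Matrix.IsSymm]
    simp [Matrix.transpose_mul, (hA i).eq, Matrix.mul_assoc]

end Stmt1
end

section
/- Assume the optimal values of the primal SDP (P) and the dual SDP (D) are equal and both are attained. Let X and (y,Z) be a strict complementary pair of primal and dual optimal solutions with J_X = J_Z. If X is the unique optimal solution of (P), then (y,Z) is dual nondegenerate. Analogously, if (y,Z) is the unique optimal solution of (D), then X is primal nondegenerate. -/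
/- STATEMENT 4: under strong duality, for a strict complementary pair X, (y,Z) of primal
and dual optimal solutions with J_X = J_Z: if X is the unique optimal solution of (P)
then (y,Z) is dual nondegenerate; analogously, if (y,Z) is the unique optimal solution
of (D) then X is primal nondegenerate. -/

open Matrix BigOperators
open scoped Classical

namespace Stmt4

variable {n : ℕ} {ι : Type*}

/-- The primal feasible region 𝒫. -/
def PrimalFeas (A : ι → Matrix (Fin n) (Fin n) ℝ) (b : ι → ℝ) (I J : Finset ι)
    (X : Matrix (Fin n) (Fin n) ℝ) : Prop :=
  X.PosSemidef ∧ (∀ i ∈ I, (A i * X).trace = b i) ∧ (∀ i ∈ J, (A i * X).trace ≤ b i)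

/-- Dual feasibility of the pair `(y, Z)`: `Z = Σ_{i∈I∪J} y_i A_i − C ⪰ 0`, `y_i ≥ 0` on `J`. -/
def DualFeas (C : Matrix (Fin n) (Fin n) ℝ) (A : ι → Matrix (Fin n) (Fin n) ℝ)
    (I J : Finset ι) (y : ι → ℝ) (Z : Matrix (Fin n) (Fin n) ℝ) : Prop :=
  Z = (∑ i ∈ I ∪ J, y i • A i) - C ∧ Z.PosSemidef ∧ ∀ i ∈ J, 0 ≤ y i

/-- The dual objective value `Σ_{i∈I∪J} b_i y_i`. -/
noncomputable def dualObj (b : ι → ℝ) (I J : Finset ι) (y : ι → ℝ) : ℝ := ∑ i ∈ I ∪ J, b i * y i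

/-- `X` is an optimal solution of the primal SDP (P). -/
def PrimalOpt (C : Matrix (Fin n) (Fin n) ℝ) (A : ι → Matrix (Fin n) (Fin n) ℝ) (b : ι → ℝ)
    (I J : Finset ι) (X : Matrix (Fin n) (Fin n) ℝ) : Prop :=
  PrimalFeas A b I J X ∧ ∀ X', PrimalFeas A b I J X' → (C * X').trace ≤ (C * X).trace

/-- `(y, Z)` is an optimal solution of the dual SDP (D). -/
def DualOpt (C : Matrix (Fin n) (Fin n) ℝ) (A : ι → Matrix (Fin n) (Fin n) ℝ) (b : ι → ℝ)
    (I J : Finset ι) (y : ι → ℝ) (Z : Matrix (Fin n) (Fin n) ℝ) : Prop :=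
  DualFeas C A I J y Z ∧
    ∀ y' Z', DualFeas C A I J y' Z' → dualObj b I J y ≤ dualObj b I J y'

/-- The set `J_X` of inequality constraints active at a primal feasible `X`. -/
noncomputable def activeJX (A : ι → Matrix (Fin n) (Fin n) ℝ) (b : ι → ℝ) (J : Finset ι)
    (X : Matrix (Fin n) (Fin n) ℝ) : Finset ι :=
  J.filter fun i => (A i * X).trace = b i

/-- The set `J_Z = {i ∈ J : y_i > 0}` for a dual feasible `(y, Z)`. -/
noncomputable def activeJZ (J : Finset ι) (y : ι → ℝ) : Finset ι :=
  J.filter fun i => 0 < y i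

/-- Membership in the tangent space 𝒯_X (the orthogonal complement, inside the symmetric
matrices, of `𝒯_X^⊥ = {M symmetric : X M = 0}`). -/
def InTangent (X T : Matrix (Fin n) (Fin n) ℝ) : Prop :=
  T.IsSymm ∧ ∀ M : Matrix (Fin n) (Fin n) ℝ, M.IsSymm → X * M = 0 → (T * M).trace = 0

/-- `X` is primal nondegenerate: `𝒯_X + span{A_i : i ∈ I ∪ J_X}^⊥ = 𝒮ⁿ`. -/
def PrimalNondeg (A : ι → Matrix (Fin n) (Fin n) ℝ) (b : ι → ℝ) (I J : Finset ι)
    (X : Matrix (Fin n) (Fin n) ℝ) : Prop :=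
  ∀ W : Matrix (Fin n) (Fin n) ℝ, W.IsSymm →
    ∃ T S : Matrix (Fin n) (Fin n) ℝ, InTangent X T ∧
      (S.IsSymm ∧ ∀ i ∈ I ∪ activeJX A b J X, (S * A i).trace = 0) ∧ W = T + S

/-- `(y, Z)` is dual nondegenerate: `𝒯_Z + span{A_i : i ∈ I ∪ J_Z} = 𝒮ⁿ`. -/
def DualNondeg (A : ι → Matrix (Fin n) (Fin n) ℝ) (I J : Finset ι)
    (y : ι → ℝ) (Z : Matrix (Fin n) (Fin n) ℝ) : Prop :=
  ∀ W : Matrix (Fin n) (Fin n) ℝ, W.IsSymm →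
    ∃ T : Matrix (Fin n) (Fin n) ℝ, InTangent Z T ∧
      ∃ c : ι → ℝ, W = T + ∑ i ∈ I ∪ activeJZ J y, c i • A i


open Filter Topology in
lemma ev_nonneg (u v : ℝ) (hu : 0 ≤ u) (h : u = 0 → v = 0) :
    ∀ᶠ t : ℝ in 𝓝[>] 0, 0 ≤ u + t * v := by
  rcases hu.eq_or_lt with h0 | h0
  · refine Eventually.of_forall fun t => ?_
    rw [h h0.symm, ← h0]; simp
  · have hc : Tendsto (fun t : ℝ => u + t * v) (𝓝 0) (𝓝 (u + 0 * v)) :=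
      Continuous.tendsto (by fun_prop) 0
    have := hc.eventually (lt_mem_nhds (a := 0) (by simpa using h0))
    exact (this.filter_mono nhdsWithin_le_nhds).mono fun t ht => ht.le

lemma one_add_psd (S : Matrix (Fin n) (Fin n) ℝ) (hS : S.IsHermitian) :
    ∃ c : ℝ, 0 < c ∧ (c • (1 : Matrix (Fin n) (Fin n) ℝ) + S).PosSemidef := by
  have hsum : 0 ≤ ∑ i, |hS.eigenvalues i| := Finset.sum_nonneg fun i _ => abs_nonneg _
  refine ⟨∑ i, |hS.eigenvalues i| + 1, by positivity, ?_⟩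
  set c := ∑ i, |hS.eigenvalues i| + 1 with hc
  obtain ⟨U, hU, hXd⟩ : ∃ (U : Matrix (Fin n) (Fin n) ℝ),
      U * Uᴴ = 1 ∧ S = U * diagonal hS.eigenvalues * Uᴴ := by
    refine ⟨hS.eigenvectorUnitary, ?_, ?_⟩
    · exact Unitary.coe_mul_star_self _
    · have := hS.spectral_theorem
      rw [Unitary.conjStarAlgAut_apply] at this
      exact this
  have hd : (diagonal (fun i => c + hS.eigenvalues i)).PosSemidef := by
    apply Matrix.PosSemidef.diagonal
    intro i
    have h1 := Finset.single_le_sum (f := fun i => |hS.eigenvalues i|)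
      (fun i _ => abs_nonneg _) (Finset.mem_univ i)
    have h2 := neg_abs_le (hS.eigenvalues i)
    simp only [Pi.zero_apply]
    linarith
  have h3 := hd.mul_mul_conjTranspose_same U
  have h4 : c • (1 : Matrix (Fin n) (Fin n) ℝ) + S
      = U * diagonal (fun i => c + hS.eigenvalues i) * Uᴴ := by
    have : diagonal (fun i => c + hS.eigenvalues i)
        = c • (1 : Matrix (Fin n) (Fin n) ℝ) + diagonal hS.eigenvalues := by
      rw [← Matrix.diagonal_one, ← Matrix.diagonal_smul, Matrix.diagonal_add]
      simp
    rw [this, Matrix.mul_add, Matrix.add_mul, ← hXd, Matrix.mul_smul, Matrix.smul_mul,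
      Matrix.mul_one, hU]
  rw [h4]; exact h3

open scoped MatrixOrder Matrix.Norms.L2Operator in
lemma sqrt_decomp (X : Matrix (Fin n) (Fin n) ℝ) (hX : X.PosSemidef) :
    ∃ R : Matrix (Fin n) (Fin n) ℝ, X = Rᴴ * R :=
  CStarAlgebra.nonneg_iff_eq_star_mul_self.mp hX.nonneg

/-- A generalized inverse. -/
lemma exists_ginv (X : Matrix (Fin n) (Fin n) ℝ) (hX : X.IsHermitian) :
    ∃ P : Matrix (Fin n) (Fin n) ℝ, X * P * X = X := by
  obtain ⟨U, V, d, hVU, hXd⟩ : ∃ (U V : Matrix (Fin n) (Fin n) ℝ) (d : Fin n → ℝ),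
      V * U = 1 ∧ X = U * diagonal d * V := by
    refine ⟨hX.eigenvectorUnitary, star (hX.eigenvectorUnitary : Matrix (Fin n) (Fin n) ℝ),
      hX.eigenvalues, ?_, ?_⟩
    · exact Unitary.coe_star_mul_self _
    · have := hX.spectral_theorem
      rw [Unitary.conjStarAlgAut_apply] at this
      exact this
  refine ⟨U * diagonal (fun i => (d i)⁻¹) * V, ?_⟩
  have hd : diagonal d * diagonal (fun i => (d i)⁻¹) * diagonal d = diagonal d := by
    simp [diagonal_mul_diagonal, mul_inv_mul_cancel]
  calc X * (U * diagonal (fun i => (d i)⁻¹) * V) * X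
      = U * diagonal d * (V * U) * diagonal (fun i => (d i)⁻¹) * (V * U) * diagonal d * V := by
        rw [hXd]; simp only [Matrix.mul_assoc]
    _ = U * (diagonal d * diagonal (fun i => (d i)⁻¹) * diagonal d) * V := by
        rw [hVU]; simp only [Matrix.mul_assoc, Matrix.mul_one, Matrix.one_mul]
    _ = X := by rw [hd, hXd]

open Filter Topology in
lemma ev_psd (X Z M : Matrix (Fin n) (Fin n) ℝ) (hX : X.PosSemidef)
    (hZX : Z * X = 0) (hr : X.rank + Z.rank = n) (hM : M.IsSymm) (hZM : Z * M = 0) :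
    ∀ᶠ t : ℝ in 𝓝[>] 0, (X + t • M).PosSemidef := by
  have hMH : Mᴴ = M := by
    rw [conjTranspose_eq_transpose_of_trivial]; exact hM
  have hker : LinearMap.range X.mulVecLin = LinearMap.ker Z.mulVecLin := by
    apply Submodule.eq_of_le_of_finrank_eq
    · rintro _ ⟨v, rfl⟩
      simp [LinearMap.mem_ker, hZX]
    · have h1 := LinearMap.finrank_range_add_finrank_ker Z.mulVecLin
      simp only [Module.finrank_fintype_fun_eq_card, Fintype.card_fin] at h1
      unfold Matrix.rank at hr
      omega
  obtain ⟨P, hP⟩ := exists_ginv X hX.1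
  have hXPM : X * P * M = M := by
    apply Matrix.ext_of_mulVec_single
    intro j
    have : M *ᵥ Pi.single j 1 ∈ LinearMap.range X.mulVecLin := by
      rw [hker]; simp [LinearMap.mem_ker, -mulVec_single, hZM]
    obtain ⟨v, hv⟩ := this
    rw [Matrix.mulVecLin_apply] at hv
    rw [← Matrix.mulVec_mulVec, ← hv, Matrix.mulVec_mulVec, hP]
  have hK : X * (P * M * Pᴴ) * X = M := by
    have h2 : M * Pᴴ * X = M := by
      have := congrArg conjTranspose hXPM
      rw [conjTranspose_mul, conjTranspose_mul, hMH, hX.1.eq, ← Matrix.mul_assoc] at this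
      exact this
    calc X * (P * M * Pᴴ) * X = (X * P * M) * Pᴴ * X := by simp only [Matrix.mul_assoc]
      _ = M := by rw [hXPM, h2]
  obtain ⟨R, hR⟩ : ∃ R : Matrix (Fin n) (Fin n) ℝ, X = Rᴴ * R :=
    sqrt_decomp X hX
  set S := R * (P * M * Pᴴ) * Rᴴ with hSdef
  have hS : S.IsHermitian := by
    unfold Matrix.IsHermitian
    simp only [hSdef, conjTranspose_mul, conjTranspose_conjTranspose, hMH, Matrix.mul_assoc]
  obtain ⟨c, hc, hpsd⟩ := one_add_psd S hS
  have hMS : M = Rᴴ * S * R := by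
    rw [← hK, hR]; simp only [hSdef, Matrix.mul_assoc]
  have hbase : (c • X + M).PosSemidef := by
    have := hpsd.conjTranspose_mul_mul_same R
    convert this using 1
    rw [Matrix.mul_add, Matrix.add_mul, ← hMS, hR]
    simp
  have hev : ∀ᶠ t : ℝ in 𝓝[>] 0, 0 ≤ 1 + t * (-c) :=
    ev_nonneg 1 (-c) zero_le_one (by simp)
  filter_upwards [hev, self_mem_nhdsWithin] with t h1 h2
  have h2' : (0 : ℝ) ≤ t := le_of_lt h2
  have := (hX.smul h1).add (hbase.smul h2')
  convert this using 1
  module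

lemma symm_sep (U : Submodule ℝ (Matrix (Fin n) (Fin n) ℝ)) (hU : ∀ u ∈ U, u.IsSymm)
    (W : Matrix (Fin n) (Fin n) ℝ) (hW : W.IsSymm) (hWU : W ∉ U) :
    ∃ H : Matrix (Fin n) (Fin n) ℝ, H.IsSymm ∧ (H * W).trace ≠ 0 ∧
      ∀ u ∈ U, (H * u).trace = 0 := by
  obtain ⟨f, hfW, hfU⟩ := Submodule.exists_le_ker_of_notMem hWU
  let G : Matrix (Fin n) (Fin n) ℝ := Matrix.of fun i j => f (Matrix.single j i 1)
  have hG : ∀ B, (G * B).trace = f B := by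
    intro B
    conv_rhs => rw [Matrix.matrix_eq_sum_single B]
    simp only [map_sum, Matrix.trace, Matrix.diag, Matrix.mul_apply]
    rw [Finset.sum_comm]
    refine Finset.sum_congr rfl fun i _ => Finset.sum_congr rfl fun j _ => ?_
    have : Matrix.single i j (B i j) = B i j • Matrix.single i j (1 : ℝ) := by
      simp [Matrix.smul_single]
    rw [this, map_smul]
    simp [G, mul_comm]
  have hH : ∀ B : Matrix (Fin n) (Fin n) ℝ, B.IsSymm → ((G + Gᵀ) * B).trace = 2 * f B := by
    intro B hB
    have : (Gᵀ * B).trace = (G * B).trace := by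
      rw [← Matrix.trace_transpose, Matrix.transpose_mul, Matrix.transpose_transpose, hB.eq,
        Matrix.trace_mul_comm]
    rw [Matrix.add_mul, Matrix.trace_add, this, hG]; ring
  refine ⟨G + Gᵀ, ?_, ?_, ?_⟩
  · simp [Matrix.IsSymm, add_comm]
  · rw [hH W hW]; simpa using hfW
  · intro u hu
    rw [hH u (hU u hu), LinearMap.mem_ker.mp (hfU hu), mul_zero]

/-- The space `𝒯_X` as a submodule. -/
def tang (X : Matrix (Fin n) (Fin n) ℝ) : Submodule ℝ (Matrix (Fin n) (Fin n) ℝ) where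
  carrier := {T | InTangent X T}
  zero_mem' := ⟨Matrix.isSymm_zero, by simp⟩
  add_mem' := fun ha hb => ⟨ha.1.add hb.1, fun M h1 h2 => by
    rw [Matrix.add_mul, Matrix.trace_add, ha.2 M h1 h2, hb.2 M h1 h2, add_zero]⟩
  smul_mem' := fun c a ha => ⟨ha.1.smul c, fun M h1 h2 => by
    rw [Matrix.smul_mul, Matrix.trace_smul, ha.2 M h1 h2, smul_zero]⟩

/-- The space `𝒯_X^⊥` as a submodule. -/
def nul (X : Matrix (Fin n) (Fin n) ℝ) : Submodule ℝ (Matrix (Fin n) (Fin n) ℝ) where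
  carrier := {M | M.IsSymm ∧ X * M = 0}
  zero_mem' := ⟨Matrix.isSymm_zero, by simp⟩
  add_mem' := fun ha hb => ⟨ha.1.add hb.1, by rw [Matrix.mul_add, ha.2, hb.2, add_zero]⟩
  smul_mem' := fun c a ha => ⟨ha.1.smul c, by rw [Matrix.mul_smul, ha.2, smul_zero]⟩

/-- The orthogonal complement of the `A i`, `i ∈ s`, in the symmetric matrices. -/
def perpA (A : ι → Matrix (Fin n) (Fin n) ℝ) (s : Finset ι) :
    Submodule ℝ (Matrix (Fin n) (Fin n) ℝ) where
  carrier := {S | S.IsSymm ∧ ∀ i ∈ s, (S * A i).trace = 0}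
  zero_mem' := ⟨Matrix.isSymm_zero, by simp⟩
  add_mem' := fun ha hb => ⟨ha.1.add hb.1, fun i hi => by
    rw [Matrix.add_mul, Matrix.trace_add, ha.2 i hi, hb.2 i hi, add_zero]⟩
  smul_mem' := fun c a ha => ⟨ha.1.smul c, fun i hi => by
    rw [Matrix.smul_mul, Matrix.trace_smul, ha.2 i hi, smul_zero]⟩

/-- The span of the `A i`, `i ∈ s`. -/
noncomputable def spanA (A : ι → Matrix (Fin n) (Fin n) ℝ) (s : Finset ι) :
    Submodule ℝ (Matrix (Fin n) (Fin n) ℝ) :=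
  LinearMap.range (∑ i ∈ s, (LinearMap.proj i : (ι → ℝ) →ₗ[ℝ] ℝ).smulRight (A i))

lemma mem_spanA (A : ι → Matrix (Fin n) (Fin n) ℝ) (s : Finset ι) (M) :
    M ∈ spanA A s ↔ ∃ c : ι → ℝ, ∑ i ∈ s, c i • A i = M := by
  simp [spanA, LinearMap.mem_range, LinearMap.sum_apply]

lemma spanA_symm (A : ι → Matrix (Fin n) (Fin n) ℝ) (hA : ∀ i, (A i).IsSymm) (s : Finset ι)
    (M) (hM : M ∈ spanA A s) : M.IsSymm := by
  obtain ⟨c, rfl⟩ := (mem_spanA A s M).mp hM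
  unfold Matrix.IsSymm
  rw [Matrix.transpose_sum]
  exact Finset.sum_congr rfl fun i _ => by rw [Matrix.transpose_smul, (hA i).eq]

lemma mem_spanA_self (A : ι → Matrix (Fin n) (Fin n) ℝ) (s : Finset ι) (i) (hi : i ∈ s) :
    A i ∈ spanA A s := by
  rw [mem_spanA]
  refine ⟨Pi.single i 1, ?_⟩
  rw [Finset.sum_eq_single i]
  · simp
  · intro j _ hj; simp [hj]
  · exact fun h => absurd hi h

lemma null_of_perp_tang (X H : Matrix (Fin n) (Fin n) ℝ) (hH : H.IsSymm)
    (h : ∀ T ∈ tang X, (H * T).trace = 0) : X * H = 0 := by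
  by_contra hne
  obtain ⟨T, hT, hTH, hTn⟩ := symm_sep (nul X) (fun u hu => hu.1) H hH (fun hh => hne hh.2)
  apply hTH
  rw [Matrix.trace_mul_comm]
  exact h T ⟨hT, fun M h1 h2 => hTn M ⟨h1, h2⟩⟩

lemma mem_spanA_of_perp (A : ι → Matrix (Fin n) (Fin n) ℝ) (hA : ∀ i, (A i).IsSymm)
    (s : Finset ι) (H : Matrix (Fin n) (Fin n) ℝ) (hH : H.IsSymm)
    (h : ∀ S ∈ perpA A s, (H * S).trace = 0) : H ∈ spanA A s := by
  by_contra hne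
  obtain ⟨T, hT, hTH, hTn⟩ := symm_sep (spanA A s) (spanA_symm A hA s) H hH hne
  apply hTH
  rw [Matrix.trace_mul_comm]
  exact h T ⟨hT, fun i hi => hTn _ (mem_spanA_self A s i hi)⟩

lemma sum_active (I J : Finset ι) (hIJ : Disjoint I J) (s : Finset ι) (hs : s ⊆ J)
    {β : Type*} [AddCommMonoid β] (f : ι → β) (hf : ∀ i ∈ J, i ∉ s → f i = 0) :
    ∑ i ∈ I ∪ J, f i = ∑ i ∈ I ∪ s, f i := by
  symm
  apply Finset.sum_subset (Finset.union_subset_union_right hs)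
  intro i hi hi'
  simp only [Finset.mem_union, not_or] at hi hi'
  exact hf i (hi.resolve_left hi'.1) hi'.2

theorem unique_implies_nondegenerate
    (C : Matrix (Fin n) (Fin n) ℝ) (A : ι → Matrix (Fin n) (Fin n) ℝ) (b : ι → ℝ)
    (I J : Finset ι) (hIJ : Disjoint I J) (hC : C.IsSymm) (hA : ∀ i, (A i).IsSymm)
    (X : Matrix (Fin n) (Fin n) ℝ) (y : ι → ℝ) (Z : Matrix (Fin n) (Fin n) ℝ)
    -- X, (y,Z) are optimal and the optimal values are equal (and attained):
    (hX : PrimalOpt C A b I J X) (hZ : DualOpt C A b I J y Z)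
    (heq : (C * X).trace = dualObj b I J y)
    -- strict complementarity:
    (hcompl : X * Z = 0) (hstrict : X.rank + Z.rank = n)
    -- J_X = J_Z:
    (hactive : activeJX A b J X = activeJZ J y) :
    -- if X is the unique optimal solution of (P), then (y,Z) is dual nondegenerate:
    ((∀ X', PrimalOpt C A b I J X' → X' = X) → DualNondeg A I J y Z) ∧
    -- if (y,Z) is the unique optimal solution of (D), then X is primal nondegenerate:
    ((∀ y' Z', DualOpt C A b I J y' Z' → Z' = Z ∧ ∀ i ∈ I ∪ J, y' i = y i) →
      PrimalNondeg A b I J X) := by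
  have hXp := hX.1.1
  have hZp := hZ.1.2.1
  have hZX : Z * X = 0 := by
    have := congrArg conjTranspose hcompl
    rwa [conjTranspose_mul, hXp.1.eq, hZp.1.eq, conjTranspose_zero] at this
  have hZdef := hZ.1.1
  constructor
  · intro huniq W hW
    set s := activeJZ J y with hs
    have hsJ : s ⊆ J := Finset.filter_subset _ _
    suffices hmem : W ∈ tang Z ⊔ spanA A (I ∪ s) by
      obtain ⟨T, hT, S, hS, rfl⟩ := Submodule.mem_sup.mp hmem
      obtain ⟨c, rfl⟩ := (mem_spanA _ _ _).mp hS
      exact ⟨T, hT, c, rfl⟩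
    by_contra hne
    obtain ⟨M, hM, hMW, hMU⟩ := symm_sep _ (by
      intro u hu
      obtain ⟨T, hT, S, hS, rfl⟩ := Submodule.mem_sup.mp hu
      exact hT.1.add (spanA_symm A hA _ S hS)) W hW hne
    have hZM : Z * M = 0 := null_of_perp_tang Z M hM
      fun T hT => hMU T (Submodule.mem_sup_left hT)
    have hMA : ∀ i ∈ I ∪ s, (A i * M).trace = 0 := fun i hi => by
      rw [Matrix.trace_mul_comm]
      exact hMU _ (Submodule.mem_sup_right (mem_spanA_self A _ i hi))
    have hy0 : ∀ i ∈ J, i ∉ s → y i = 0 := by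
      intro i hi his
      have h1 := hZ.1.2.2 i hi
      by_contra h0
      exact his (Finset.mem_filter.mpr ⟨hi, lt_of_le_of_ne h1 (Ne.symm h0)⟩)
    have hCM : (C * M).trace = 0 := by
      have hCe : C = (∑ i ∈ I ∪ J, y i • A i) - Z := by rw [hZdef]; abel
      rw [hCe, Matrix.sub_mul, hZM, sub_zero,
        sum_active I J hIJ s hsJ _ (fun i hi his => by rw [hy0 i hi his, zero_smul]),
        Matrix.sum_mul, Matrix.trace_sum]
      exact Finset.sum_eq_zero fun i hi => by
        rw [Matrix.smul_mul, Matrix.trace_smul, hMA i hi, smul_zero]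
    have hev1 := ev_psd X Z M hXp hZX hstrict hM hZM
    have hev2 : ∀ᶠ t : ℝ in nhdsWithin 0 (Set.Ioi 0), ∀ i ∈ J,
        0 ≤ (b i - (A i * X).trace) + t * (-(A i * M).trace) := by
      rw [Filter.eventually_all_finset]
      intro i hi
      refine ev_nonneg _ _ (sub_nonneg.mpr (hX.1.2.2 i hi)) fun h0 => ?_
      have : i ∈ s := by
        rw [← hactive]; exact Finset.mem_filter.mpr ⟨hi, by linarith⟩
      rw [hMA i (Finset.mem_union_right _ this), neg_zero]
    obtain ⟨t, ⟨h1, h2⟩, h3⟩ := ((hev1.and hev2).and self_mem_nhdsWithin).exists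
    have htr : ∀ B : Matrix (Fin n) (Fin n) ℝ,
        (B * (X + t • M)).trace = (B * X).trace + t * (B * M).trace := by
      intro B
      rw [Matrix.mul_add, Matrix.trace_add, Matrix.mul_smul, Matrix.trace_smul, smul_eq_mul]
    have hopt : PrimalOpt C A b I J (X + t • M) := by
      refine ⟨⟨h1, ?_, ?_⟩, ?_⟩
      · intro i hi
        rw [htr, hMA i (Finset.mem_union_left _ hi), mul_zero, add_zero, hX.1.2.1 i hi]
      · intro i hi
        rw [htr]; linarith [h2 i hi]
      · intro X' hX'
        rw [htr, hCM, mul_zero, add_zero]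
        exact hX.2 X' hX'
    have h0 := huniq _ hopt
    have hM0 : M = 0 := by
      have : t • M = 0 := by simpa using h0
      exact (smul_eq_zero.mp this).resolve_left (ne_of_gt h3)
    apply hMW
    rw [hM0]; simp
  · intro huniq W hW
    set s := activeJX A b J X with hs
    have hsJ : s ⊆ J := Finset.filter_subset _ _
    suffices hmem : W ∈ tang X ⊔ perpA A (I ∪ s) by
      obtain ⟨T, hT, S, hS, rfl⟩ := Submodule.mem_sup.mp hmem
      exact ⟨T, S, hT, hS, rfl⟩
    by_contra hne
    obtain ⟨M, hM, hMW, hMU⟩ := symm_sep _ (by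
      intro u hu
      obtain ⟨T, hT, S, hS, rfl⟩ := Submodule.mem_sup.mp hu
      exact hT.1.add hS.1) W hW hne
    have hXM : X * M = 0 := null_of_perp_tang X M hM
      fun T hT => hMU T (Submodule.mem_sup_left hT)
    have hMs : M ∈ spanA A (I ∪ s) := mem_spanA_of_perp A hA _ M hM
      fun S hS => hMU S (Submodule.mem_sup_right hS)
    obtain ⟨c, hc⟩ := (mem_spanA _ _ _).mp hMs
    let d : ι → ℝ := fun i => if i ∈ I ∪ s then c i else 0
    have hd0 : ∀ i ∈ J, i ∉ s → d i = 0 := by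
      intro i hi his
      have : i ∉ I := fun h => Finset.disjoint_left.mp hIJ h hi
      simp [d, his, this]
    have hd : ∑ i ∈ I ∪ J, d i • A i = M := by
      rw [sum_active I J hIJ s hsJ _ (fun i hi his => by rw [hd0 i hi his, zero_smul]), ← hc]
      exact Finset.sum_congr rfl fun i hi => by simp only [d, if_pos hi]
    have hbd : ∑ i ∈ I ∪ J, b i * d i = 0 := by
      have h1 : (M * X).trace = 0 := by
        rw [Matrix.trace_mul_comm, hXM, Matrix.trace_zero]
      rw [← hd, Matrix.sum_mul, Matrix.trace_sum] at h1
      rw [← h1]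
      refine Finset.sum_congr rfl fun i hi => ?_
      rw [Matrix.smul_mul, Matrix.trace_smul, smul_eq_mul, mul_comm]
      by_cases his : i ∈ I ∪ s
      · rcases Finset.mem_union.mp his with h | h
        · rw [hX.1.2.1 i h]
        · rw [(Finset.mem_filter.mp h).2]
      · simp only [d, if_neg his, zero_mul]
    have hev1 := ev_psd Z X M hZp hcompl (by omega) hM hXM
    have hev2 : ∀ᶠ t : ℝ in nhdsWithin 0 (Set.Ioi 0), ∀ i ∈ J, 0 ≤ y i + t * d i := by
      rw [Filter.eventually_all_finset]
      intro i hi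
      refine ev_nonneg _ _ (hZ.1.2.2 i hi) fun h0 => hd0 i hi fun his => ?_
      rw [hactive] at his
      exact absurd h0 (ne_of_gt (Finset.mem_filter.mp his).2)
    obtain ⟨t, ⟨h1, h2⟩, h3⟩ := ((hev1.and hev2).and self_mem_nhdsWithin).exists
    have hopt : DualOpt C A b I J (fun i => y i + t * d i) (Z + t • M) := by
      refine ⟨⟨?_, h1, h2⟩, ?_⟩
      · simp only [add_smul, mul_smul, Finset.sum_add_distrib, ← Finset.smul_sum]
        rw [hd, hZdef]; abel
      · intro y' Z' h'
        have : dualObj b I J (fun i => y i + t * d i) = dualObj b I J y := by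
          unfold dualObj
          have : ∀ i, b i * (y i + t * d i) = b i * y i + t * (b i * d i) := fun i => by ring
          simp only [this, Finset.sum_add_distrib, ← Finset.mul_sum, hbd, mul_zero, add_zero]
        rw [this]; exact hZ.2 y' Z' h'
    have h0 := (huniq _ _ hopt).1
    have hM0 : M = 0 := by
      have : t • M = 0 := by simpa using h0
      exact (smul_eq_zero.mp this).resolve_left (ne_of_gt h3)
    apply hMW
    rw [hM0]; simp

end Stmt4
end

section
/- Assume the optimal values of the primal SDP (P) and the dual SDP (D) are equal and both are attained. Let X and (y,Z) be a strict complementary pair of primal and dual optimal solutions with J_X = J_Z. The following are equivalent: (i) X is an extreme point of the primal feasible region 𝒫; (ii) X is the unique optimal solution of (P); (iii) (y,Z) is dual nondegenerate. -/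
/- STATEMENT 5: under strong duality, for a strict complementary pair X, (y,Z) of primal
and dual optimal solutions with J_X = J_Z, TFAE: (i) X is an extreme point of the primal
feasible region 𝒫; (ii) X is the unique optimal solution of (P); (iii) (y,Z) is dual
nondegenerate. -/

open Matrix BigOperators
open scoped Classical

namespace Stmt5

variable {n : ℕ} {ι : Type*}

/-- The primal feasible region 𝒫. -/
def PrimalFeas (A : ι → Matrix (Fin n) (Fin n) ℝ) (b : ι → ℝ) (I J : Finset ι)
    (X : Matrix (Fin n) (Fin n) ℝ) : Prop :=
  X.PosSemidef ∧ (∀ i ∈ I, (A i * X).trace = b i) ∧ (∀ i ∈ J, (A i * X).trace ≤ b i)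

/-- Dual feasibility of the pair `(y, Z)`: `Z = Σ_{i∈I∪J} y_i A_i − C ⪰ 0`, `y_i ≥ 0` on `J`. -/
def DualFeas (C : Matrix (Fin n) (Fin n) ℝ) (A : ι → Matrix (Fin n) (Fin n) ℝ)
    (I J : Finset ι) (y : ι → ℝ) (Z : Matrix (Fin n) (Fin n) ℝ) : Prop :=
  Z = (∑ i ∈ I ∪ J, y i • A i) - C ∧ Z.PosSemidef ∧ ∀ i ∈ J, 0 ≤ y i

/-- The dual objective value `Σ_{i∈I∪J} b_i y_i`. -/
noncomputable def dualObj (b : ι → ℝ) (I J : Finset ι) (y : ι → ℝ) : ℝ := ∑ i ∈ I ∪ J, b i * y i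

/-- `X` is an optimal solution of the primal SDP (P). -/
def PrimalOpt (C : Matrix (Fin n) (Fin n) ℝ) (A : ι → Matrix (Fin n) (Fin n) ℝ) (b : ι → ℝ)
    (I J : Finset ι) (X : Matrix (Fin n) (Fin n) ℝ) : Prop :=
  PrimalFeas A b I J X ∧ ∀ X', PrimalFeas A b I J X' → (C * X').trace ≤ (C * X).trace

/-- `(y, Z)` is an optimal solution of the dual SDP (D). -/
def DualOpt (C : Matrix (Fin n) (Fin n) ℝ) (A : ι → Matrix (Fin n) (Fin n) ℝ) (b : ι → ℝ)
    (I J : Finset ι) (y : ι → ℝ) (Z : Matrix (Fin n) (Fin n) ℝ) : Prop :=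
  DualFeas C A I J y Z ∧
    ∀ y' Z', DualFeas C A I J y' Z' → dualObj b I J y ≤ dualObj b I J y'

/-- The set `J_X` of inequality constraints active at a primal feasible `X`. -/
noncomputable def activeJX (A : ι → Matrix (Fin n) (Fin n) ℝ) (b : ι → ℝ) (J : Finset ι)
    (X : Matrix (Fin n) (Fin n) ℝ) : Finset ι :=
  J.filter fun i => (A i * X).trace = b i

/-- The set `J_Z = {i ∈ J : y_i > 0}` for a dual feasible `(y, Z)`. -/
noncomputable def activeJZ (J : Finset ι) (y : ι → ℝ) : Finset ι :=
  J.filter fun i => 0 < y i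

/-- Membership in the tangent space 𝒯_X (the orthogonal complement, inside the symmetric
matrices, of `𝒯_X^⊥ = {M symmetric : X M = 0}`). -/
def InTangent (X T : Matrix (Fin n) (Fin n) ℝ) : Prop :=
  T.IsSymm ∧ ∀ M : Matrix (Fin n) (Fin n) ℝ, M.IsSymm → X * M = 0 → (T * M).trace = 0

/-- `X` is primal nondegenerate: `𝒯_X + span{A_i : i ∈ I ∪ J_X}^⊥ = 𝒮ⁿ`. -/
def PrimalNondeg (A : ι → Matrix (Fin n) (Fin n) ℝ) (b : ι → ℝ) (I J : Finset ι)
    (X : Matrix (Fin n) (Fin n) ℝ) : Prop :=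
  ∀ W : Matrix (Fin n) (Fin n) ℝ, W.IsSymm →
    ∃ T S : Matrix (Fin n) (Fin n) ℝ, InTangent X T ∧
      (S.IsSymm ∧ ∀ i ∈ I ∪ activeJX A b J X, (S * A i).trace = 0) ∧ W = T + S

/-- `(y, Z)` is dual nondegenerate: `𝒯_Z + span{A_i : i ∈ I ∪ J_Z} = 𝒮ⁿ`. -/
def DualNondeg (A : ι → Matrix (Fin n) (Fin n) ℝ) (I J : Finset ι)
    (y : ι → ℝ) (Z : Matrix (Fin n) (Fin n) ℝ) : Prop :=
  ∀ W : Matrix (Fin n) (Fin n) ℝ, W.IsSymm →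
    ∃ T : Matrix (Fin n) (Fin n) ℝ, InTangent Z T ∧
      ∃ c : ι → ℝ, W = T + ∑ i ∈ I ∪ activeJZ J y, c i • A i


/-- `x` is an extreme point of the convex set `C`. -/
def IsExtremePt {M : Type*} [AddCommGroup M] [Module ℝ M] (C : Set M) (x : M) : Prop :=
  x ∈ C ∧ ∀ y ∈ C, ∀ z ∈ C, ∀ t : ℝ, 0 < t → t < 1 → x = t • y + (1 - t) • z →
    y = x ∧ z = x

lemma psd_factor {X : Matrix (Fin n) (Fin n) ℝ} (h : X.PosSemidef) :
    ∃ B : Matrix (Fin n) (Fin n) ℝ, X = Bᵀ * B := by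
  open scoped MatrixOrder in
  obtain ⟨B, hB⟩ := CStarAlgebra.nonneg_iff_eq_star_mul_self.mp h.nonneg
  exact ⟨B, by rw [hB, star_eq_conjTranspose, conjTranspose_eq_transpose_of_trivial]⟩

lemma trace_tmul_eq_zero {G : Matrix (Fin n) (Fin n) ℝ} (h : (Gᵀ * G).trace = 0) : G = 0 := by
  rw [← conjTranspose_eq_transpose_of_trivial] at h
  exact trace_conjTranspose_mul_self_eq_zero_iff.mp h

lemma trace_aux (F G : Matrix (Fin n) (Fin n) ℝ) :
    ((Fᵀ * F) * (Gᵀ * G)).trace = ((F * Gᵀ)ᵀ * (F * Gᵀ)).trace := by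
  rw [transpose_mul, transpose_transpose, ← Matrix.mul_assoc, Matrix.trace_mul_comm]
  simp only [Matrix.mul_assoc]

lemma psd_trace_nonneg {Z Y : Matrix (Fin n) (Fin n) ℝ} (hZ : Z.PosSemidef) (hY : Y.PosSemidef) :
    0 ≤ (Z * Y).trace := by
  obtain ⟨F, rfl⟩ := psd_factor hZ
  obtain ⟨G, rfl⟩ := psd_factor hY
  rw [trace_aux, ← conjTranspose_eq_transpose_of_trivial (F * Gᵀ)]
  exact (posSemidef_conjTranspose_mul_self _).trace_nonneg

lemma psd_trace_zero {Z Y : Matrix (Fin n) (Fin n) ℝ} (hZ : Z.PosSemidef) (hY : Y.PosSemidef)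
    (h : (Z * Y).trace = 0) : Z * Y = 0 := by
  obtain ⟨F, rfl⟩ := psd_factor hZ
  obtain ⟨G, rfl⟩ := psd_factor hY
  rw [trace_aux] at h
  have h0 := trace_tmul_eq_zero h
  calc Fᵀ * F * (Gᵀ * G) = Fᵀ * (F * Gᵀ) * G := by simp only [Matrix.mul_assoc]
    _ = 0 := by rw [h0]; simp

lemma psd_symm {X : Matrix (Fin n) (Fin n) ℝ} (h : X.PosSemidef) : X.IsSymm := by
  have := h.isHermitian
  rwa [Matrix.IsHermitian, conjTranspose_eq_transpose_of_trivial] at this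

lemma quad_bound (K : Matrix (Fin n) (Fin n) ℝ) (x : Fin n → ℝ) :
    |x ⬝ᵥ (K *ᵥ x)| ≤ (∑ i, ∑ j, |K i j|) * (x ⬝ᵥ x) := by
  have h1 : x ⬝ᵥ (K *ᵥ x) = ∑ i, ∑ j, x i * (K i j * x j) := by
    simp [dotProduct, mulVec, Finset.mul_sum]
  have hx : ∀ i, x i ^ 2 ≤ x ⬝ᵥ x := fun i => by
    have := Finset.single_le_sum (f := fun i => x i * x i) (fun i _ => mul_self_nonneg _)
      (Finset.mem_univ i)
    simpa [dotProduct, sq] using this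
  rw [h1, Finset.sum_mul]
  refine (Finset.abs_sum_le_sum_abs _ _).trans (Finset.sum_le_sum fun i _ => ?_)
  rw [Finset.sum_mul]
  refine (Finset.abs_sum_le_sum_abs _ _).trans (Finset.sum_le_sum fun j _ => ?_)
  have : |x i * (K i j * x j)| = |K i j| * (|x i| * |x j|) := by
    rw [abs_mul, abs_mul]; ring
  rw [this]
  refine mul_le_mul_of_nonneg_left ?_ (abs_nonneg _)
  nlinarith [sq_nonneg (|x i| - |x j|), sq_abs (x i), sq_abs (x j), hx i, hx j]

lemma one_add_psd (K : Matrix (Fin n) (Fin n) ℝ) (hK : K.IsSymm) :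
    ∀ᶠ t in nhds (0 : ℝ), (1 + t • K).PosSemidef := by
  have ht : Filter.Tendsto (fun t : ℝ => |t| * (∑ i, ∑ j, |K i j|)) (nhds 0) (nhds 0) := by
    have : Continuous (fun t : ℝ => |t| * (∑ i, ∑ j, |K i j|)) := by fun_prop
    simpa using this.tendsto 0
  filter_upwards [ht.eventually (gt_mem_nhds one_pos)] with t ht
  refine PosSemidef.of_dotProduct_mulVec_nonneg ?_ fun x => ?_
  · rw [Matrix.IsHermitian, conjTranspose_eq_transpose_of_trivial]
    simp [hK.eq]
  · simp only [star_trivial, add_mulVec, one_mulVec, smul_mulVec, dotProduct_add,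
      dotProduct_smul, smul_eq_mul]
    have h1 := quad_bound K x
    have h2 : 0 ≤ x ⬝ᵥ x := Finset.sum_nonneg fun i _ => mul_self_nonneg _
    have h3 : |t * (x ⬝ᵥ (K *ᵥ x))| ≤ x ⬝ᵥ x := by
      rw [abs_mul]
      calc _ ≤ |t| * ((∑ i, ∑ j, |K i j|) * (x ⬝ᵥ x)) :=
            mul_le_mul_of_nonneg_left h1 (abs_nonneg _)
        _ ≤ 1 * (x ⬝ᵥ x) := by
            rw [← mul_assoc]; exact mul_le_mul_of_nonneg_right ht.le h2
        _ = _ := one_mul _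
    linarith [neg_abs_le (t * (x ⬝ᵥ (K *ᵥ x)))]

lemma sum_isUnit {X Z : Matrix (Fin n) (Fin n) ℝ} (hX : X.PosSemidef) (hZ : Z.PosSemidef)
    (hcompl : X * Z = 0) (hstrict : X.rank + Z.rank = n) : IsUnit (X + Z) := by
  have hZs := psd_symm hZ
  have hXs := psd_symm hX
  have hZX : Z * X = 0 := by
    have := congrArg Matrix.transpose hcompl
    simpa [hZs.eq, hXs.eq] using this
  have hle : LinearMap.range Z.mulVecLin ≤ LinearMap.ker X.mulVecLin := by
    rintro _ ⟨w, rfl⟩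
    simp [hcompl]
  have hdim := LinearMap.finrank_range_add_finrank_ker X.mulVecLin
  have heq : LinearMap.range Z.mulVecLin = LinearMap.ker X.mulVecLin := by
    apply Submodule.eq_of_le_of_finrank_eq hle
    simp only [Module.finrank_fin_fun] at hdim
    simp only [Matrix.rank] at hstrict
    omega
  rw [← Matrix.mulVec_injective_iff_isUnit]
  have hinj : ∀ v, (X + Z) *ᵥ v = 0 → v = 0 := by
    intro v hv
    have hXX : (X * X) *ᵥ v = 0 := by
      have := congrArg (X *ᵥ ·) hv
      simpa [Matrix.mul_add, hcompl] using this
    have hZZ : (Z * Z) *ᵥ v = 0 := by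
      have := congrArg (Z *ᵥ ·) hv
      simpa [Matrix.mul_add, hZX] using this
    have sq0 : ∀ (Y : Matrix (Fin n) (Fin n) ℝ), Y.IsSymm → ∀ u, (Y * Y) *ᵥ u = 0 →
        Y *ᵥ u = 0 := by
      intro Y hY u hu
      apply dotProduct_self_eq_zero.mp
      have : (Y *ᵥ u) ⬝ᵥ (Y *ᵥ u) = u ⬝ᵥ ((Y * Y) *ᵥ u) := by
        rw [← Matrix.mulVec_mulVec, Matrix.dotProduct_mulVec u, ← Matrix.mulVec_transpose, hY.eq]
      rw [this, hu, dotProduct_zero]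
    have hXv := sq0 X hXs v hXX
    have hZv := sq0 Z hZs v hZZ
    have hm : v ∈ LinearMap.range Z.mulVecLin := by
      rw [heq]; simpa using hXv
    obtain ⟨w, rfl⟩ := hm
    apply sq0 Z hZs
    simpa using hZv
  intro v w hvw
  have := hinj (v - w) (by rw [Matrix.mulVec_sub]; exact sub_eq_zero.mpr hvw)
  exact sub_eq_zero.mp this

lemma pert_psd {X Z M : Matrix (Fin n) (Fin n) ℝ} (hX : X.PosSemidef) (hZ : Z.PosSemidef)
    (hcompl : X * Z = 0) (hstrict : X.rank + Z.rank = n) (hM : M.IsSymm) (hZM : Z * M = 0) :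
    ∀ᶠ t in nhds (0 : ℝ), (X + t • M).PosSemidef := by
  have hU := sum_isUnit hX hZ hcompl hstrict
  have hZs := psd_symm hZ
  have hXs := psd_symm hX
  have hZX : Z * X = 0 := by
    have := congrArg Matrix.transpose hcompl
    simpa [hZs.eq, hXs.eq] using this
  have hMZ : M * Z = 0 := by
    have := congrArg Matrix.transpose hZM
    simpa [hZs.eq, hM.eq] using this
  have hdet : IsUnit (X + Z).det := (Matrix.isUnit_iff_isUnit_det _).mp hU
  set Q := (X + Z)⁻¹ with hQ
  have hQ1 : Q * (X + Z) = 1 := Matrix.nonsing_inv_mul _ hdet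
  have hQ2 : (X + Z) * Q = 1 := Matrix.mul_nonsing_inv _ hdet
  have hQs : Qᵀ = Q := by
    rw [hQ, Matrix.transpose_nonsing_inv]; simp [hZs.eq, hXs.eq]
  have hcomm : Z * Q = Q * Z := by
    have h1 : (X + Z) * Z = Z * (X + Z) := by
      rw [Matrix.add_mul, Matrix.mul_add, hcompl, hZX]
    calc Z * Q = (Q * (X + Z)) * Z * Q := by rw [hQ1, Matrix.one_mul]
      _ = Q * ((X + Z) * Z) * Q := by simp only [Matrix.mul_assoc]
      _ = Q * Z * ((X + Z) * Q) := by rw [h1]; simp only [Matrix.mul_assoc]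
      _ = Q * Z := by rw [hQ2, Matrix.mul_one]
  have hXQM : X * Q * M = M := by
    have : (X + Z) * Q * M = X * Q * M + Z * Q * M := by simp only [Matrix.add_mul]
    rw [hQ2, Matrix.one_mul, hcomm, Matrix.mul_assoc Q, hZM, Matrix.mul_zero, add_zero] at this
    exact this.symm
  have hMQX : M * Q * X = M := by
    have := congrArg Matrix.transpose hXQM
    simpa [hXs.eq, hM.eq, hQs, Matrix.mul_assoc] using this
  obtain ⟨B, hB⟩ := psd_factor hX
  have hK : (B * (Q * M * Q) * Bᵀ).IsSymm := by
    rw [Matrix.IsSymm]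
    simp [hM.eq, hQs, Matrix.mul_assoc]
  have hMK : M = Bᵀ * (B * (Q * M * Q) * Bᵀ) * B := by
    calc M = X * Q * M * Q * X := by rw [hXQM, hMQX]
      _ = _ := by
        nth_rewrite 1 2 [hB]
        simp only [Matrix.mul_assoc]
  filter_upwards [one_add_psd _ hK] with t ht
  have h2 := ht.conjTranspose_mul_mul_same B
  rw [conjTranspose_eq_transpose_of_trivial, Matrix.mul_add, Matrix.add_mul, Matrix.mul_one,
    Matrix.mul_smul, Matrix.smul_mul, ← hMK, ← hB] at h2
  exact h2

/-- No nonzero symmetric direction in the kernel of `Z` orthogonal to the active constraints. -/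
def NoDir (A : ι → Matrix (Fin n) (Fin n) ℝ) (S : Finset ι)
    (Z : Matrix (Fin n) (Fin n) ℝ) : Prop :=
  ∀ M : Matrix (Fin n) (Fin n) ℝ, M.IsSymm → Z * M = 0 →
    (∀ i ∈ S, (A i * M).trace = 0) → M = 0

lemma functional_trace (f : Matrix (Fin n) (Fin n) ℝ →ₗ[ℝ] ℝ) :
    ∃ G : Matrix (Fin n) (Fin n) ℝ, ∀ Y, f Y = (Y * G).trace := by
  refine ⟨Matrix.of fun i j => f (Matrix.single j i 1), fun Y => ?_⟩
  conv_lhs => rw [Matrix.matrix_eq_sum_single Y]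
  simp only [map_sum, Matrix.trace, Matrix.diag, Matrix.mul_apply, Matrix.of_apply]
  refine Finset.sum_congr rfl fun i _ => Finset.sum_congr rfl fun j _ => ?_
  rw [← smul_eq_mul, ← map_smul, Matrix.smul_single, smul_eq_mul, mul_one]

lemma dualNondeg_iff (A : ι → Matrix (Fin n) (Fin n) ℝ) (hA : ∀ i, (A i).IsSymm)
    (I J : Finset ι) (y : ι → ℝ) (Z : Matrix (Fin n) (Fin n) ℝ) (hZ : Z.IsSymm) :
    DualNondeg A I J y Z ↔ NoDir A (I ∪ activeJZ J y) Z := by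
  constructor
  · intro h M hM hZM hAM
    obtain ⟨T, ⟨hT, hT2⟩, c, hc⟩ := h M hM
    apply trace_tmul_eq_zero
    rw [hM.eq]
    nth_rewrite 1 [hc]
    rw [Matrix.add_mul, trace_add, hT2 M hM hZM, Finset.sum_mul, trace_sum, zero_add]
    refine Finset.sum_eq_zero fun i hi => ?_
    rw [Matrix.smul_mul, trace_smul, hAM i hi, smul_zero]
  · intro h W hW
    let T : Submodule ℝ (Matrix (Fin n) (Fin n) ℝ) :=
      { carrier := {T | InTangent Z T}
        add_mem' := by
          rintro a b ⟨ha, ha2⟩ ⟨hb, hb2⟩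
          refine ⟨ha.add hb, fun M hM hZM => ?_⟩
          rw [Matrix.add_mul, trace_add, ha2 M hM hZM, hb2 M hM hZM, add_zero]
        zero_mem' := ⟨by simp [Matrix.IsSymm], fun M _ _ => by simp⟩
        smul_mem' := by
          rintro c a ⟨ha, ha2⟩
          refine ⟨ha.smul c, fun M hM hZM => ?_⟩
          rw [Matrix.smul_mul, trace_smul, ha2 M hM hZM, smul_zero] }
    let L : (ι → ℝ) →ₗ[ℝ] Matrix (Fin n) (Fin n) ℝ :=
      { toFun := fun c => ∑ i ∈ I ∪ activeJZ J y, c i • A i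
        map_add' := fun c d => by simp [add_smul, Finset.sum_add_distrib]
        map_smul' := fun r c => by simp [mul_smul, Finset.smul_sum] }
    by_cases hmem : W ∈ T ⊔ LinearMap.range L
    · obtain ⟨t, ht, _, ⟨c, rfl⟩, hs⟩ := Submodule.mem_sup.mp hmem
      exact ⟨t, ht, c, hs.symm⟩
    · exfalso
      obtain ⟨f, hfW, hf⟩ := Submodule.exists_le_ker_of_notMem hmem
      obtain ⟨G, hG⟩ := functional_trace f
      let M := G + Gᵀ
      have hMs : M.IsSymm := by
        simp only [M, Matrix.IsSymm, transpose_add, transpose_transpose]; exact add_comm _ _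
      have hfM : ∀ Y : Matrix (Fin n) (Fin n) ℝ, Y.IsSymm → (Y * M).trace = 2 * f Y := by
        intro Y hY
        have : (Y * Gᵀ).trace = (Y * G).trace := by
          rw [← Matrix.trace_transpose, transpose_mul, transpose_transpose, hY.eq,
            Matrix.trace_mul_comm]
        simp only [M]
        rw [Matrix.mul_add, trace_add, this, hG]; ring
      have hfT : ∀ Y, InTangent Z Y → f Y = 0 := fun Y hY =>
        hf (Submodule.mem_sup_left (show Y ∈ T from hY))
      have hfA : ∀ i ∈ I ∪ activeJZ J y, f (A i) = 0 := fun i hi => by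
        apply hf
        apply Submodule.mem_sup_right
        refine ⟨Pi.single i 1, ?_⟩
        change ∑ j ∈ I ∪ activeJZ J y, (Pi.single i (1 : ℝ) : ι → ℝ) j • A j = A i
        rw [Finset.sum_eq_single i]
        · simp
        · intro j _ hj; simp [Pi.single_eq_of_ne hj]
        · intro h; exact absurd hi h
      have htan : InTangent Z (Z * (Z * M) + (M * Z) * Z) := by
        constructor
        · simp only [Matrix.IsSymm, transpose_add, transpose_mul, hZ.eq, hMs.eq, Matrix.mul_assoc]
          exact add_comm _ _
        · intro N hN hZN
          have hNZ : N * Z = 0 := by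
            have := congrArg Matrix.transpose hZN
            simpa [hZ.eq, hN.eq] using this
          rw [Matrix.add_mul, trace_add, Matrix.mul_assoc (M * Z), hZN, Matrix.mul_zero,
            Matrix.trace_mul_comm, ← Matrix.mul_assoc, hNZ]
          simp
      have h0 := hfM _ htan.1
      rw [hfT _ htan, mul_zero, Matrix.add_mul, trace_add] at h0
      have e1 : (Z * (Z * M) * M).trace = ((M * Z)ᵀ * (M * Z)).trace := by
        rw [transpose_mul, hZ.eq, hMs.eq, Matrix.mul_assoc, Matrix.trace_mul_comm,
          Matrix.mul_assoc Z M]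
        simp only [Matrix.mul_assoc]
      have e2 : (M * Z * Z * M).trace = ((M * Z)ᵀ * (M * Z)).trace := by
        rw [transpose_mul, hZ.eq, hMs.eq, Matrix.mul_assoc, Matrix.trace_mul_comm (M * Z)]
      rw [e1, e2] at h0
      have hMZ : M * Z = 0 := trace_tmul_eq_zero (by linarith)
      have hZM : Z * M = 0 := by
        have := congrArg Matrix.transpose hMZ
        simpa [hZ.eq, hMs.eq] using this
      have hM0 := h M hMs hZM fun i hi => by rw [hfM _ (hA i), hfA i hi, mul_zero]
      have := hfM W hW
      rw [hM0, Matrix.mul_zero, trace_zero] at this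
      exact hfW (by linarith)

lemma pert_feas (A : ι → Matrix (Fin n) (Fin n) ℝ) (b : ι → ℝ)
    (I J : Finset ι) {X Z M : Matrix (Fin n) (Fin n) ℝ} (hX : PrimalFeas A b I J X)
    (hZ : Z.PosSemidef) (hcompl : X * Z = 0) (hstrict : X.rank + Z.rank = n) (hM : M.IsSymm)
    (hZM : Z * M = 0) (hAM : ∀ i ∈ I ∪ activeJX A b J X, (A i * M).trace = 0) :
    ∃ t : ℝ, 0 < t ∧ PrimalFeas A b I J (X + t • M) ∧ PrimalFeas A b I J (X + (-t) • M) := by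
  have hex : ∀ i (t : ℝ), (A i * (X + t • M)).trace = (A i * X).trace + t * (A i * M).trace := by
    intro i t
    rw [Matrix.mul_add, trace_add, Matrix.mul_smul, trace_smul, smul_eq_mul]
  have hJ : ∀ᶠ t in nhds (0 : ℝ), ∀ i ∈ J, (A i * (X + t • M)).trace ≤ b i := by
    rw [Filter.eventually_all_finset]
    intro i hi
    by_cases hact : (A i * X).trace = b i
    · refine Filter.Eventually.of_forall fun t => ?_
      rw [hex, hAM i (Finset.mem_union_right _ (Finset.mem_filter.mpr ⟨hi, hact⟩)), hact]
      simp
    · have hlt : (A i * X).trace < b i := lt_of_le_of_ne (hX.2.2 i hi) hact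
      have hc : Continuous fun t : ℝ => (A i * X).trace + t * (A i * M).trace := by fun_prop
      have := (hc.tendsto 0).eventually (gt_mem_nhds (by simpa using hlt))
      filter_upwards [this] with t ht
      rw [hex]; exact ht.le
  have hall : ∀ᶠ t in nhds (0 : ℝ), PrimalFeas A b I J (X + t • M) := by
    filter_upwards [hJ, pert_psd hX.1 hZ hcompl hstrict hM hZM] with t h1 h2
    refine ⟨h2, fun i hi => ?_, h1⟩
    rw [hex, hAM i (Finset.mem_union_left _ hi), hX.2.1 i hi]
    simp
  obtain ⟨ε, hε, h⟩ := Metric.eventually_nhds_iff.mp hall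
  refine ⟨ε / 2, by positivity, h ?_, h ?_⟩
  · rw [Real.dist_eq, sub_zero, abs_of_pos (by positivity)]; linarith
  · rw [Real.dist_eq, sub_zero, abs_neg, abs_of_pos (by positivity)]; linarith

theorem extreme_unique_nondegenerate_tfae
    (C : Matrix (Fin n) (Fin n) ℝ) (A : ι → Matrix (Fin n) (Fin n) ℝ) (b : ι → ℝ)
    (I J : Finset ι) (hIJ : Disjoint I J) (hC : C.IsSymm) (hA : ∀ i, (A i).IsSymm)
    (X : Matrix (Fin n) (Fin n) ℝ) (y : ι → ℝ) (Z : Matrix (Fin n) (Fin n) ℝ)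
    -- X, (y,Z) are optimal and the optimal values are equal (and attained):
    (hX : PrimalOpt C A b I J X) (hZ : DualOpt C A b I J y Z)
    (heq : (C * X).trace = dualObj b I J y)
    -- strict complementarity:
    (hcompl : X * Z = 0) (hstrict : X.rank + Z.rank = n)
    -- J_X = J_Z:
    (hactive : activeJX A b J X = activeJZ J y) :
    -- (i) ↔ (ii):
    (IsExtremePt {X' | PrimalFeas A b I J X'} X ↔
      (∀ X', PrimalOpt C A b I J X' → X' = X)) ∧
    -- (i) ↔ (iii):
    (IsExtremePt {X' | PrimalFeas A b I J X'} X ↔ DualNondeg A I J y Z) := by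
  have hfeas := hX.1
  have hZpsd := hZ.1.2.1
  have hZs := psd_symm hZpsd
  have hZX : Z * X = 0 := by
    have := congrArg Matrix.transpose hcompl
    simpa [hZs.eq, (psd_symm hfeas.1).eq] using this
  have hCtr : ∀ Y : Matrix (Fin n) (Fin n) ℝ,
      (C * Y).trace = (∑ i ∈ I ∪ J, y i * (A i * Y).trace) - (Z * Y).trace := by
    intro Y
    rw [hZ.1.1, Matrix.sub_mul, trace_sub, Finset.sum_mul, trace_sum]
    simp
  have h31 : NoDir A (I ∪ activeJZ J y) Z → IsExtremePt {X' | PrimalFeas A b I J X'} X := by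
    intro hno
    refine ⟨hfeas, fun U hU V hV t ht0 ht1 hXe => ?_⟩
    have hs : 0 < 1 - t := by linarith
    have htr : ∀ B : Matrix (Fin n) (Fin n) ℝ,
        (B * X).trace = t * (B * U).trace + (1 - t) * (B * V).trace := by
      intro B
      rw [hXe, Matrix.mul_add, trace_add, Matrix.mul_smul, Matrix.mul_smul, trace_smul, trace_smul]
      rfl
    have hz := htr Z
    rw [hZX, trace_zero] at hz
    have hu := psd_trace_nonneg hZpsd hU.1
    have hv := psd_trace_nonneg hZpsd hV.1
    have hu0 : (Z * U).trace = 0 := by nlinarith [mul_nonneg hs.le hv, mul_nonneg ht0.le hu]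
    have hv0 : (Z * V).trace = 0 := by nlinarith [mul_nonneg hs.le hv, mul_nonneg ht0.le hu]
    have hUV : U - V = 0 := by
      apply hno _ ((psd_symm hU.1).sub (psd_symm hV.1))
      · rw [Matrix.mul_sub, psd_trace_zero hZpsd hU.1 hu0, psd_trace_zero hZpsd hV.1 hv0, sub_zero]
      · intro i hi
        rw [Matrix.mul_sub, trace_sub]
        rcases Finset.mem_union.mp hi with hi | hi
        · rw [hU.2.1 i hi, hV.2.1 i hi, sub_self]
        · rw [← hactive] at hi
          obtain ⟨hiJ, hib⟩ := Finset.mem_filter.mp hi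
          have h1 := htr (A i)
          have h2 := hU.2.2 i hiJ
          have h3 := hV.2.2 i hiJ
          have h4 : (A i * U).trace = b i := by
            nlinarith [mul_nonneg hs.le (sub_nonneg.mpr h3), mul_nonneg ht0.le (sub_nonneg.mpr h2)]
          have h5 : (A i * V).trace = b i := by
            nlinarith [mul_nonneg hs.le (sub_nonneg.mpr h3), mul_nonneg ht0.le (sub_nonneg.mpr h2)]
          rw [h4, h5, sub_self]
    have hUV' : U = V := sub_eq_zero.mp hUV
    subst hUV'
    have : X = U := by rw [hXe, ← add_smul]; simp
    exact ⟨this.symm, this.symm⟩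
  have h13 : IsExtremePt {X' | PrimalFeas A b I J X'} X → NoDir A (I ∪ activeJZ J y) Z := by
    intro hext M hM hZM hAM
    rw [← hactive] at hAM
    obtain ⟨t, ht, h1, h2⟩ := pert_feas A b I J hfeas hZpsd hcompl hstrict hM hZM hAM
    have := (hext.2 _ h1 _ h2 (1 / 2) (by norm_num) (by norm_num) (by module)).1
    have h3 : t • M = 0 := by simpa using this
    exact (smul_eq_zero.mp h3).resolve_left ht.ne'
  have h23 : (∀ X', PrimalOpt C A b I J X' → X' = X) → NoDir A (I ∪ activeJZ J y) Z := by
    intro huniq M hM hZM hAM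
    have hAM' := hAM
    rw [← hactive] at hAM'
    obtain ⟨t, ht, h1, -⟩ := pert_feas A b I J hfeas hZpsd hcompl hstrict hM hZM hAM'
    have hCM : (C * M).trace = 0 := by
      rw [hCtr, hZM, trace_zero, sub_zero]
      refine Finset.sum_eq_zero fun i hi => ?_
      rcases Finset.mem_union.mp hi with hi | hi
      · rw [hAM i (Finset.mem_union_left _ hi), mul_zero]
      · by_cases hy : 0 < y i
        · rw [hAM i (Finset.mem_union_right _ (Finset.mem_filter.mpr ⟨hi, hy⟩)), mul_zero]
        · have : y i = 0 := le_antisymm (not_lt.mp hy) (hZ.1.2.2 i hi)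
          rw [this, zero_mul]
    have := huniq (X + t • M) ⟨h1, fun X' hX' => by
      rw [Matrix.mul_add, trace_add, Matrix.mul_smul, trace_smul, hCM, smul_zero, add_zero]
      exact hX.2 X' hX'⟩
    have h3 : t • M = 0 := by simpa using this
    exact (smul_eq_zero.mp h3).resolve_left ht.ne'
  have h32 : NoDir A (I ∪ activeJZ J y) Z → (∀ X', PrimalOpt C A b I J X' → X' = X) := by
    intro hno X' hX'
    have hle : ∀ i ∈ I ∪ J, 0 ≤ b i * y i - y i * (A i * X').trace := by
      intro i hi
      rcases Finset.mem_union.mp hi with hi | hi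
      · rw [hX'.1.2.1 i hi]; linarith
      · nlinarith [mul_nonneg (hZ.1.2.2 i hi) (sub_nonneg.mpr (hX'.1.2.2 i hi))]
    have hobj : (C * X').trace = ∑ i ∈ I ∪ J, b i * y i :=
      (le_antisymm (hX.2 _ hX'.1) (hX'.2 _ hfeas)).trans heq
    have hsum := Finset.sum_nonneg hle
    have hzn := psd_trace_nonneg hZpsd hX'.1.1
    have h0 := hCtr X'
    have hsplit : ∑ i ∈ I ∪ J, (b i * y i - y i * (A i * X').trace) =
        ∑ i ∈ I ∪ J, b i * y i - ∑ i ∈ I ∪ J, y i * (A i * X').trace := Finset.sum_sub_distrib _ _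
    have hz0 : (Z * X').trace = 0 := by linarith
    have hs0 : ∑ i ∈ I ∪ J, (b i * y i - y i * (A i * X').trace) = 0 := by linarith
    have heach := (Finset.sum_eq_zero_iff_of_nonneg hle).mp hs0
    refine sub_eq_zero.mp (hno _ ((psd_symm hX'.1.1).sub (psd_symm hfeas.1)) ?_ ?_)
    · rw [Matrix.mul_sub, psd_trace_zero hZpsd hX'.1.1 hz0, hZX, sub_zero]
    · intro i hi
      rw [Matrix.mul_sub, trace_sub]
      rcases Finset.mem_union.mp hi with hi | hi
      · rw [hX'.1.2.1 i hi, hfeas.2.1 i hi, sub_self]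
      · have hi2 := hi
        rw [← hactive] at hi2
        obtain ⟨hiJ, hy⟩ := Finset.mem_filter.mp hi
        obtain ⟨_, hib⟩ := Finset.mem_filter.mp hi2
        have h1 := heach i (Finset.mem_union_right _ hiJ)
        have h2 : y i * (b i - (A i * X').trace) = 0 := by linarith
        have h3 := (mul_eq_zero.mp h2).resolve_left hy.ne'
        rw [hib]; linarith
  rw [dualNondeg_iff A hA I J y Z hZs]
  exact ⟨⟨fun h => h32 (h13 h), fun h => h31 (h23 h)⟩, h13, h31⟩


end Stmt5
end

section
/- Let G = ([n], E) be a tensegrity graph with E = B ∪ C ∪ S and let G(p) be a tensegrity framework with p_1, …, p_n ∈ ℝᵈ linearly spanning ℝᵈ. Suppose there exists a real symmetric n×n matrix Z satisfying: (i) Z is positive semidefinite; (ii) Z_ij = 0 for all non-adjacent pairs i ≠ j; (iii) Z_ij ≥ 0 for all cables {i,j} ∈ C and Z_ij ≤ 0 for all struts {i,j} ∈ S; (iv) Z has corank d; (v) Σ_j Z_ij p_j = 0 for all i ∈ [n]; (vi) for every symmetric d×d matrix R, if p_iᵀ R p_j = 0 for all pairs {i,j} ∈ V ∪ B and all {i,j}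 ∈ C ∪ S with Z_ij ≠ 0, then R = 0. Then the tensegrity framework G(p) is universally completable. -/
/- STATEMENT 6: sufficient condition for universal completability of a tensegrity
framework G(p): existence of a psd spherical stress matrix Z of corank d satisfying the
sign, support, equilibrium and nondegeneracy conditions (i)-(vi). -/

open Matrix BigOperators
open scoped RealInnerProductSpace

namespace Stmt6

variable {n d : ℕ}

/-- The quadratic form `xᵀ R y` for vectors of `ℝᵈ`. -/
def quadForm (R : Matrix (Fin d) (Fin d) ℝ) (x y : EuclideanSpace ℝ (Fin d)) : ℝ :=
  ∑ k, ∑ l, x k * R k l * y l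

/-- The tensegrity framework `G(p)` with bars `B`, cables `C` and struts `S` is universally
completable: the Gram matrix of `p` is the unique psd matrix `X` with `X_ii = ⟪p_i,p_i⟫`,
`X_ij = ⟪p_i,p_j⟫` on bars, `X_ij ≤ ⟪p_i,p_j⟫` on cables and `X_ij ≥ ⟪p_i,p_j⟫` on struts. -/
def UniversallyCompletable (B C S : Set (Fin n × Fin n))
    (p : Fin n → EuclideanSpace ℝ (Fin d)) : Prop :=
  ∀ X : Matrix (Fin n) (Fin n) ℝ, X.PosSemidef →
    (∀ i, X i i = ⟪p i, p i⟫) →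
    (∀ ij ∈ B, X ij.1 ij.2 = ⟪p ij.1, p ij.2⟫) →
    (∀ ij ∈ C, X ij.1 ij.2 ≤ ⟪p ij.1, p ij.2⟫) →
    (∀ ij ∈ S, ⟪p ij.1, p ij.2⟫ ≤ X ij.1 ij.2) →
    X = Matrix.of fun i j => ⟪p i, p j⟫

open scoped MatrixOrder in
theorem psd_trace_aux {n : ℕ} (Z X : Matrix (Fin n) (Fin n) ℝ) (hZ : Z.PosSemidef)
    (hX : X.PosSemidef) : 0 ≤ (Z * X).trace ∧ ((Z * X).trace = 0 → Z * X = 0) := by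
  obtain ⟨U, rfl⟩ := CStarAlgebra.nonneg_iff_eq_star_mul_self.mp hZ.nonneg
  obtain ⟨W, rfl⟩ := CStarAlgebra.nonneg_iff_eq_star_mul_self.mp hX.nonneg
  simp only [Matrix.star_eq_conjTranspose]
  have key : (Uᴴ * U * (Wᴴ * W)).trace = ((W * Uᴴ)ᴴ * (W * Uᴴ)).trace := by
    rw [Matrix.mul_assoc, Matrix.trace_mul_comm, Matrix.conjTranspose_mul,
      Matrix.conjTranspose_conjTranspose]
    simp only [Matrix.mul_assoc]
  rw [key]
  refine ⟨(Matrix.posSemidef_conjTranspose_mul_self _).trace_nonneg, fun h => ?_⟩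
  have h0 : W * Uᴴ = 0 := Matrix.trace_conjTranspose_mul_self_eq_zero_iff.mp h
  have h1 : U * Wᴴ = 0 := by
    have := congrArg Matrix.conjTranspose h0
    simpa [Matrix.conjTranspose_mul] using this
  rw [Matrix.mul_assoc, ← Matrix.mul_assoc U, h1]
  simp

theorem universally_completable_of_spherical_stress
    (B C S : Set (Fin n × Fin n))
    -- the edge set E = B ∪ C ∪ S is partitioned into bars, cables and struts,
    -- and the tensegrity graph has no loops:
    (hBC : Disjoint B C) (hBS : Disjoint B S) (hCS : Disjoint C S)
    (hloop : ∀ i : Fin n, (i, i) ∉ B ∪ C ∪ S)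
    -- the framework p₁, …, pₙ linearly spans ℝᵈ:
    (p : Fin n → EuclideanSpace ℝ (Fin d))
    (hspan : Submodule.span ℝ (Set.range p) = ⊤)
    (Z : Matrix (Fin n) (Fin n) ℝ)
    -- (i) Z is positive semidefinite:
    (hZpsd : Z.PosSemidef)
    -- (ii) Z_ij = 0 for all non-adjacent pairs i ≠ j:
    (hsupp : ∀ i j, i ≠ j → (i, j) ∉ B ∪ C ∪ S → (j, i) ∉ B ∪ C ∪ S → Z i j = 0)
    -- (iii) sign conditions on cables and struts:
    (hC : ∀ ij ∈ C, 0 ≤ Z ij.1 ij.2) (hS : ∀ ij ∈ S, Z ij.1 ij.2 ≤ 0)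
    -- (iv) Z has corank d:
    (hcorank : Z.rank + d = n)
    -- (v) equilibrium: Σ_j Z_ij p_j = 0 for all i:
    (hequil : ∀ i, ∑ j, Z i j • p j = 0)
    -- (vi) nondegeneracy:
    (hnondeg : ∀ R : Matrix (Fin d) (Fin d) ℝ, R.IsSymm →
      (∀ i, quadForm R (p i) (p i) = 0) →
      (∀ ij ∈ B, quadForm R (p ij.1) (p ij.2) = 0) →
      (∀ ij ∈ C ∪ S, Z ij.1 ij.2 ≠ 0 → quadForm R (p ij.1) (p ij.2) = 0) →
      R = 0) :
    UniversallyCompletable B C S p := by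
  intro X hX hXd hXB hXC hXS
  have hXs : ∀ i j, X i j = X j i := fun i j => by
    have := hX.isHermitian.apply i j
    simpa using this.symm
  have hZs : ∀ i j, Z i j = Z j i := fun i j => by
    have := hZpsd.isHermitian.apply i j
    simpa using this.symm
  have hG : ∀ i j, (⟪p i, p j⟫ : ℝ) = ∑ k, p i k * p j k := fun i j => by
    simp [PiLp.inner_apply, mul_comm]
  have hP0 : ∀ i k, ∑ j, Z i j * p j k = 0 := fun i k => by
    have := congrArg (fun v : EuclideanSpace ℝ (Fin d) => v k) (hequil i)
    simpa using this
  have hZG : ∀ i, ∑ j, Z i j * (⟪p i, p j⟫ : ℝ) = 0 := fun i => by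
    have : (⟪p i, ∑ j, Z i j • p j⟫ : ℝ) = 0 := by rw [hequil i, inner_zero_right]
    simpa [inner_sum, inner_smul_right] using this
  -- termwise sign
  have hedge : ∀ i j, (i, j) ∈ B ∪ C ∪ S → Z i j * (X i j - ⟪p i, p j⟫) ≤ 0 := by
    rintro i j ((h | h) | h)
    · have := hXB _ h
      simp only at this
      simp [this]
    · have h1 := hXC _ h
      have h2 := hC _ h
      simp only at h1 h2
      nlinarith
    · have h1 := hXS _ h
      have h2 := hS _ h
      simp only at h1 h2
      nlinarith
  have hterm : ∀ i j, Z i j * (X i j - ⟪p i, p j⟫) ≤ 0 := by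
    intro i j
    by_cases hij : i = j
    · subst hij
      simp [hXd]
    by_cases h1 : (i, j) ∈ B ∪ C ∪ S
    · exact hedge i j h1
    by_cases h2 : (j, i) ∈ B ∪ C ∪ S
    · have := hedge j i h2
      rwa [hZs j i, hXs j i, real_inner_comm] at this
    · simp [hsupp i j hij h1 h2]
  have htr : (Z * X).trace = ∑ i, ∑ j, Z i j * (X i j - ⟪p i, p j⟫) := by
    simp only [Matrix.trace, Matrix.diag_apply, Matrix.mul_apply, mul_sub,
      Finset.sum_sub_distrib, hZG, sub_zero]
    exact Finset.sum_congr rfl fun i _ => by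
      simp [fun j => hXs j i]
  obtain ⟨hnn, hzero⟩ := psd_trace_aux Z X hZpsd hX
  have hle : ∀ i, ∑ j, Z i j * (X i j - ⟪p i, p j⟫) ≤ 0 := fun i =>
    Finset.sum_nonpos fun j _ => hterm i j
  have hsum0 : ∑ i, ∑ j, Z i j * (X i j - ⟪p i, p j⟫) = 0 :=
    le_antisymm (Finset.sum_nonpos fun i _ => hle i) (htr ▸ hnn)
  have hall : ∀ i j, Z i j * (X i j - ⟪p i, p j⟫) = 0 := fun i j => by
    have h1 := (Finset.sum_eq_zero_iff_of_nonpos fun i _ => hle i).mp hsum0 i (Finset.mem_univ _)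
    exact (Finset.sum_eq_zero_iff_of_nonpos fun j _ => hterm i j).mp h1 j (Finset.mem_univ _)
  have hZX : Z * X = 0 := hzero (htr.trans hsum0)
  -- the kernel of Z
  let P : Matrix (Fin n) (Fin d) ℝ := Matrix.of fun i k => p i k
  have hZP : Z * P = 0 := by
    ext i k
    simpa [Matrix.mul_apply, P] using hP0 i k
  have hinj : LinearMap.ker P.mulVecLin = ⊥ := by
    rw [LinearMap.ker_eq_bot']
    intro v hv
    have hv' : ∀ i, (⟪p i, WithLp.toLp 2 v⟫ : ℝ) = 0 := fun i => by
      have := congrFun hv i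
      simp only [Matrix.mulVecLin_apply, Matrix.mulVec, dotProduct, P, Matrix.of_apply,
        Pi.zero_apply] at this
      simpa [PiLp.inner_apply, mul_comm] using this
    have hm : ∀ x ∈ Submodule.span ℝ (Set.range p), (⟪x, WithLp.toLp 2 v⟫ : ℝ) = 0 := by
      intro x hx
      induction hx using Submodule.span_induction with
      | mem x h => obtain ⟨i, rfl⟩ := h; exact hv' i
      | zero => simp
      | add x y _ _ hx hy => rw [inner_add_left, hx, hy, add_zero]
      | smul a x _ hx => rw [inner_smul_left, hx, mul_zero]
    have h0 := hm (WithLp.toLp 2 v) (hspan ▸ Submodule.mem_top)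
    have h1 := inner_self_eq_zero.mp h0
    ext k
    exact congrArg (fun w : EuclideanSpace ℝ (Fin d) => w k) h1
  have hrange : LinearMap.range P.mulVecLin = LinearMap.ker Z.mulVecLin := by
    apply Submodule.eq_of_le_of_finrank_eq
    · rintro _ ⟨v, rfl⟩
      simp [Matrix.mulVec_mulVec, hZP]
    · have h1 := LinearMap.finrank_range_add_finrank_ker Z.mulVecLin
      have h2 := LinearMap.finrank_range_of_inj (LinearMap.ker_eq_bot.mp hinj)
      simp only [Module.finrank_fin_fun] at h1 h2
      have h3 : Module.finrank ℝ (LinearMap.range Z.mulVecLin) = Z.rank := rfl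
      omega
  obtain ⟨g, hg⟩ := LinearMap.exists_leftInverse_of_injective P.mulVecLin hinj
  let L := LinearMap.toMatrix' g
  have hPLX : P * (L * X) = X := by
    have hcol : ∀ j, P *ᵥ (L *ᵥ (X.col j)) = X.col j := by
      intro j
      have hk : X.col j ∈ LinearMap.range P.mulVecLin := by
        rw [hrange, LinearMap.mem_ker]
        ext i
        exact congrFun (congrFun hZX i) j
      obtain ⟨v, hv⟩ := hk
      have hgv : g (X.col j) = v := by
        rw [← hv]; exact LinearMap.congr_fun hg v
      rw [LinearMap.toMatrix'_mulVec, hgv]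
      exact hv
    ext i j
    exact congrFun (hcol j) i
  have hXT : Xᵀ = X := by ext i j; exact hXs j i
  have hX2 : P * (L * X * Lᵀ) * Pᵀ = X := by
    have h := congrArg Matrix.transpose hPLX
    rw [Matrix.transpose_mul, Matrix.transpose_mul, hXT] at h
    calc P * (L * X * Lᵀ) * Pᵀ = P * (L * (X * Lᵀ * Pᵀ)) := by simp only [Matrix.mul_assoc]
      _ = X := by rw [h, hPLX]
  have hq : ∀ i j, quadForm (L * X * Lᵀ - 1) (p i) (p j) = X i j - ⟪p i, p j⟫ := by
    intro i j
    have hqm : ∀ R : Matrix (Fin d) (Fin d) ℝ, quadForm R (p i) (p j) = (P * R * Pᵀ) i j := by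
      intro R
      simp only [quadForm, Matrix.mul_apply, Matrix.transpose_apply, P, Matrix.of_apply,
        Finset.sum_mul]
      exact Finset.sum_comm
    rw [hqm, Matrix.mul_sub, Matrix.sub_mul, hX2, Matrix.mul_one, Matrix.sub_apply, hG]
    rfl
  have hR := hnondeg (L * X * Lᵀ - 1) (by
      simp [Matrix.IsSymm, Matrix.transpose_mul, hXT, Matrix.mul_assoc])
    (fun i => by rw [hq, hXd, sub_self])
    (fun ij h => by rw [hq, hXB _ h, sub_self])
    (fun ij _ hne => by
      rw [hq]
      exact (mul_eq_zero.mp (hall ij.1 ij.2)).resolve_left hne)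
  ext i j
  have h := hq i j
  rw [hR] at h
  simp only [quadForm, Matrix.zero_apply, mul_zero, zero_mul, Finset.sum_const_zero] at h
  simp only [Matrix.of_apply]
  linarith

end Stmt6
end

section
/- Let k ≥ 2 be an integer and let G = ([n], E) be a graph on n ≥ k + 1 nodes with minimum degree at least k. Then there exist vectors p_1, …, p_n ∈ ℝᵏ and a subset I ⊆ E with |I| = k(k+1)/2 such that the rank-one symmetric matrices (p_i − p_j)(p_i − p_j)ᵀ for {i,j} ∈ I are linearly independent; equivalently, the polynomial π_{k,G}(p) = Σ_{I ⊆ E, |I| = k(k+1)/2} (det 𝒫_p(I))², which has integer coefficients, is not identically zero as a polynomial in the kn coordinates of p. -/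
/- STATEMENT 8: for k ≥ 2 and a graph G on n ≥ k+1 nodes with minimum degree at least k,
there are vectors p₁, …, pₙ ∈ ℝᵏ and a set I of k(k+1)/2 edges of G such that the
rank-one matrices (p_i − p_j)(p_i − p_j)ᵀ, {i,j} ∈ I, are linearly independent
(equivalently, the polynomial π_{k,G} is not identically zero). -/

open Matrix BigOperators

namespace Stmt8

/-- The symmetric matrix `(p_i − p_j)(p_i − p_j)ᵀ` attached to an unordered pair `{i,j}`. -/
def edgeMat {n k : ℕ} (p : Fin n → Fin k → ℝ) : Sym2 (Fin n) → Matrix (Fin k) (Fin k) ℝ :=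
  Sym2.lift ⟨fun i j => Matrix.vecMulVec (p i - p j) (p i - p j), by
    intro i j
    ext a b
    simp only [Matrix.vecMulVec_apply, Pi.sub_apply]
    ring⟩

lemma exists_perturb {m k : ℕ} {V : Type} (O : Set (V → Fin k → ℝ)) (hO : IsOpen O)
    (q q1 : V → Fin k → ℝ) (hq : q ∈ O)
    (M : (V → Fin k → ℝ) → Matrix (Fin m) (Fin m) ℝ)
    (hM : ∀ t : ℝ, M (q + t • (q1 - q)) = M q + t • (M q1 - M q))
    (h1 : (M q1).det ≠ 0) : ∃ r ∈ O, (M r).det ≠ 0 := by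
  classical
  let P : Matrix (Fin m) (Fin m) (Polynomial ℝ) := fun i j =>
    Polynomial.C (M q i j) + Polynomial.X * Polynomial.C (M q1 i j - M q i j)
  have hev : ∀ t : ℝ, P.det.eval t = (M (q + t • (q1 - q))).det := by
    intro t
    rw [← Polynomial.coe_evalRingHom, RingHom.map_det, hM]
    congr 1
    ext i j
    rw [RingHom.mapMatrix_apply, Matrix.map_apply, Matrix.add_apply, Matrix.smul_apply,
      Matrix.sub_apply]
    simp [P]
  have hP : P.det ≠ 0 := by
    intro h
    have := hev 1
    rw [h] at this
    simp at this
    exact h1 this.symm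
  have hfin : {t : ℝ | P.det.IsRoot t}.Finite := Polynomial.finite_setOf_isRoot hP
  have hcont : Continuous (fun t : ℝ => q + t • (q1 - q)) := by fun_prop
  have hopen : IsOpen ((fun t : ℝ => q + t • (q1 - q)) ⁻¹' O) := hO.preimage hcont
  have h0 : (0 : ℝ) ∈ (fun t : ℝ => q + t • (q1 - q)) ⁻¹' O := by simpa using hq
  have hinf : ((fun t : ℝ => q + t • (q1 - q)) ⁻¹' O).Infinite :=
    infinite_of_mem_nhds 0 (hopen.mem_nhds h0)
  obtain ⟨t, ht, htn⟩ := hinf.exists_notMem_finite hfin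
  refine ⟨_, ht, ?_⟩
  rw [← hev]
  exact htn

lemma main_aux {V : Type} [Fintype V] [DecidableEq V] (G : SimpleGraph V) [DecidableRel G.Adj] :
    ∀ (k : ℕ) (S : Finset V), S.Nonempty →
      (∀ v ∈ S, k ≤ (S.filter (fun w => G.Adj v w)).card) →
      ∃ (ι : Type) (_ : Fintype ι) (a b : ι → V) (p : V → Fin k → ℝ),
        2 * Fintype.card ι = k * (k + 1) ∧
        (∀ i, a i ∈ S ∧ b i ∈ S ∧ G.Adj (a i) (b i)) ∧
        LinearIndependent ℝ
          (fun i => Matrix.vecMulVec (p (a i) - p (b i)) (p (a i) - p (b i))) := by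
  intro k
  induction k with
  | zero =>
    intro S _ _
    exact ⟨Empty, inferInstance, Empty.elim, Empty.elim, 0, by simp, by simp,
      linearIndependent_empty_type⟩
  | succ k ih =>
    rintro S ⟨v, hv⟩ hS
    have hNv := hS v hv
    obtain ⟨N, hNsub, hNcard⟩ := Finset.exists_subset_card_eq hNv
    have hNmem : ∀ w ∈ N, w ∈ S ∧ G.Adj v w := fun w hw => by
      simpa using hNsub hw
    have hne : (S.erase v).Nonempty := by
      have : N.Nonempty := by
        rw [← Finset.card_pos]; omega
      obtain ⟨w, hw⟩ := this
      exact ⟨w, Finset.mem_erase.2 ⟨(hNmem w hw).2.ne', (hNmem w hw).1⟩⟩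
    obtain ⟨ι, _, a, b, q, hcard, hab, hli⟩ := ih (S.erase v) hne (by
      intro w hw
      have h := hS w (Finset.mem_of_mem_erase hw)
      rw [Finset.filter_erase]
      have := Finset.pred_card_le_card_erase (s := S.filter (fun x => G.Adj w x)) (a := v)
      omega)
    let u : Fin (k + 1) → V := fun j => (N.equivFinOfCardEq hNcard).symm j
    have hu : Function.Injective u := fun i j h => by
      simpa [u, Subtype.val_inj] using h
    have huN : ∀ j, u j ∈ N := fun j => ((N.equivFinOfCardEq hNcard).symm j).2
    let O : Set (V → Fin k → ℝ) := {p | LinearIndependent ℝ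
          (fun i => Matrix.vecMulVec (p (a i) - p (b i)) (p (a i) - p (b i)))}
    have hO : IsOpen O := by
      let F : (V → Fin k → ℝ) → ι → Fin k → Fin k → ℝ := fun p i =>
        Matrix.vecMulVec (p (a i) - p (b i)) (p (a i) - p (b i))
      have hF : Continuous F := by
        refine continuous_pi fun i => continuous_pi fun x => continuous_pi fun y => ?_
        simp only [F, Matrix.vecMulVec_apply, Pi.sub_apply]
        fun_prop
      exact (isOpen_setOf_linearIndependent (𝕜 := ℝ) (ι := ι) (E := Fin k → Fin k → ℝ)).preimage hF
    let M : (V → Fin k → ℝ) → Matrix (Fin (k + 1)) (Fin (k + 1)) ℝ := fun p j =>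
      Fin.cons 1 (-p (u j))
    let q1 : V → Fin k → ℝ := fun w c => if w = u c.succ then 1 else 0
    obtain ⟨r, hr, hdet⟩ := exists_perturb O hO q q1 hli M (by
      intro t
      ext i j
      rw [Matrix.add_apply, Matrix.smul_apply, Matrix.sub_apply]
      refine Fin.cases ?_ (fun j => ?_) j
      · simp [M]
      · simp [M]; ring) (by
      rw [Matrix.det_of_lowerTriangular]
      · refine Finset.prod_ne_zero_iff.2 fun i _ => ?_
        refine Fin.cases ?_ (fun i => ?_) i <;> simp [M, q1]
      · intro i j hij
        have hij' : i < j := hij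
        revert hij'
        refine Fin.cases ?_ (fun j => ?_) j
        · intro h; simp at h
        · intro h
          simp [M, q1, hu.eq_iff, h.ne])
    let p : V → Fin (k + 1) → ℝ := fun w => if w = v then Fin.cons 1 0 else Fin.cons 0 (r w)
    have hpv : p v = Fin.cons 1 0 := by simp [p]
    have hpw : ∀ w, w ≠ v → p w = Fin.cons 0 (r w) := fun w hw => by simp [p, hw]
    refine ⟨ι ⊕ Fin (k + 1), inferInstance, Sum.elim a (fun _ => v), Sum.elim b u, p, ?_, ?_, ?_⟩
    · simp only [Fintype.card_sum, Fintype.card_fin]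
      linarith
    · rintro (i | j)
      · exact ⟨Finset.mem_of_mem_erase (hab i).1, Finset.mem_of_mem_erase (hab i).2.1, (hab i).2.2⟩
      · exact ⟨hv, (hNmem _ (huN j)).1, (hNmem _ (huN j)).2⟩
    · have hL : ∀ i, p (a i) - p (b i) = Fin.cons 0 (r (a i) - r (b i)) := fun i => by
        rw [hpw _ (Finset.ne_of_mem_erase (hab i).1), hpw _ (Finset.ne_of_mem_erase (hab i).2.1)]
        ext c
        refine Fin.cases ?_ (fun c => ?_) c <;> simp
      have hR : ∀ j, p v - p (u j) = M r j := fun j => by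
        rw [hpv, hpw _ (hNmem _ (huN j)).2.ne']
        ext c
        refine Fin.cases ?_ (fun c => ?_) c <;> simp [M]
      rw [Fintype.linearIndependent_iff]
      intro g hg
      simp only [Fintype.sum_sum_type, Sum.elim_inl, Sum.elim_inr, hL, hR] at hg
      have hd : (fun j => g (Sum.inr j)) = 0 := by
        apply Matrix.eq_zero_of_vecMul_eq_zero hdet
        ext c
        have h := congrFun (congrFun hg 0) c
        simp only [Matrix.add_apply, Matrix.sum_apply, Matrix.smul_apply, Matrix.vecMulVec_apply,
          Fin.cons_zero, zero_mul, smul_zero, Finset.sum_const_zero, zero_add] at h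
        simpa [Matrix.vecMul, dotProduct, M] using h
      have hd' : ∀ j, g (Sum.inr j) = 0 := fun j => congrFun hd j
      have hr' := Fintype.linearIndependent_iff.1 (show LinearIndependent ℝ
          (fun i => Matrix.vecMulVec (r (a i) - r (b i)) (r (a i) - r (b i))) from hr)
      have hc := hr' (fun i => g (Sum.inl i)) (by
        ext x y
        have h := congrFun (congrFun hg x.succ) y.succ
        simpa [Matrix.sum_apply, Matrix.vecMulVec_apply, hd'] using h)
      rintro (i | j)
      · exact hc i
      · exact hd' j

theorem exists_generic_edge_directions
    {k n : ℕ} (hk : 2 ≤ k) (G : SimpleGraph (Fin n)) [DecidableRel G.Adj]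
    (hn : k + 1 ≤ n) (hdeg : ∀ v : Fin n, k ≤ G.degree v) :
    ∃ (p : Fin n → Fin k → ℝ) (I : Finset (Sym2 (Fin n))),
      ↑I ⊆ G.edgeSet ∧ I.card = k * (k + 1) / 2 ∧
      LinearIndependent ℝ (fun e : I => edgeMat p e.1) := by
  obtain ⟨ι, _, a, b, p, hcard, hab, hli⟩ := main_aux G k Finset.univ
    ⟨⟨0, by omega⟩, Finset.mem_univ _⟩ (by
      intro v _
      have := hdeg v
      rwa [← SimpleGraph.card_neighborFinset_eq_degree, SimpleGraph.neighborFinset_eq_filter] at this)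
  have hli' : LinearIndependent ℝ (fun i => edgeMat p s(a i, b i)) := hli
  have hinj : Function.Injective (fun i => s(a i, b i)) := by
    intro i j h
    apply hli'.injective
    exact congrArg (edgeMat p) h
  refine ⟨p, Finset.univ.map ⟨_, hinj⟩, ?_, ?_, ?_⟩
  · intro e he
    simp only [Finset.coe_map, Function.Embedding.coeFn_mk, Finset.coe_univ, Set.image_univ,
      Set.mem_range] at he
    obtain ⟨i, rfl⟩ := he
    exact (hab i).2.2
  · rw [Finset.card_map, Finset.card_univ]
    omega
  · let f : {e // e ∈ Finset.univ.map ⟨_, hinj⟩} → ι := fun e =>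
      (Finset.mem_map.1 e.2).choose
    have hf : ∀ e, s(a (f e), b (f e)) = e.1 := fun e => (Finset.mem_map.1 e.2).choose_spec.2
    have hfi : Function.Injective f := fun e e' h => by
      apply Subtype.ext
      rw [← hf, ← hf, h]
    have := hli'.comp f hfi
    convert this using 2 with e
    simp [hf]

end Stmt8
end

section
/- Let G(p) be a generic d-dimensional framework on a graph G = ([n], E) with minimum degree at least d. Then the edge directions of G(p) do not lie on a conic at infinity; that is, the system of symmetric d×d matrices { (p_i − p_j)(p_i − p_j)ᵀ : {i,j} ∈ E } has full rank d(d+1)/2, i.e., spans the space of symmetric d×d matrices. -/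
/- STATEMENT 9: the edge directions of a generic d-dimensional framework on a graph of
minimum degree at least d do not lie on a conic at infinity: the matrices
(p_i − p_j)(p_i − p_j)ᵀ over the edges span the space of symmetric d×d matrices. -/

open Matrix BigOperators

namespace Stmt9

/-- The subspace of symmetric m×m real matrices. -/
def symmSub (m : ℕ) : Submodule ℝ (Matrix (Fin m) (Fin m) ℝ) where
  carrier := {X | X.IsSymm}
  add_mem' := fun hx hy => hx.add hy
  zero_mem' := by simp [Matrix.IsSymm]
  smul_mem' := fun c X hX => hX.smul c

theorem transfer_ker {σ E C : Type*} [Fintype E] [Fintype C] [DecidableEq C]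
    (M : Matrix E C (MvPolynomial σ ℚ)) (x x' : σ → ℝ) (hx : AlgebraicIndependent ℚ x)
    (h' : ∀ u : C → ℝ, (M.map (MvPolynomial.aeval x')) *ᵥ u = 0 → u = 0)
    (u : C → ℝ) (hu : (M.map (MvPolynomial.aeval x)) *ᵥ u = 0) : u = 0 := by
  have key : ∀ y : σ → ℝ, MvPolynomial.aeval y (Mᵀ * M).det =
      ((M.map (MvPolynomial.aeval y))ᵀ * (M.map (MvPolynomial.aeval y))).det := by
    intro y
    rw [AlgHom.map_det]
    congr 1
    ext a b
    simp [Matrix.mul_apply]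
  have h1 : MvPolynomial.aeval x' (Mᵀ * M).det ≠ 0 := by
    rw [key]
    intro h0
    obtain ⟨w, hw, hw0⟩ := Matrix.exists_mulVec_eq_zero_iff.mpr h0
    apply hw
    apply h'
    have := congrArg (fun z => w ⬝ᵥ z) hw0
    simp only [← Matrix.mulVec_mulVec, dotProduct_zero] at this
    rw [Matrix.dotProduct_mulVec, Matrix.vecMul_transpose] at this
    exact dotProduct_self_eq_zero.mp this
  have h2 : (Mᵀ * M).det ≠ 0 := by
    intro h0
    apply h1
    rw [h0, map_zero]
  have h3 : MvPolynomial.aeval x (Mᵀ * M).det ≠ 0 := by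
    intro h0
    exact h2 (hx (by rw [h0, map_zero]))
  rw [key] at h3
  by_contra hne
  apply h3
  apply Matrix.exists_mulVec_eq_zero_iff.mp
  refine ⟨u, hne, ?_⟩
  rw [← Matrix.mulVec_mulVec, hu, Matrix.mulVec_zero]

/-- `Q` (symmetric) vanishes on every edge direction. -/
def Van {V : Type} {d : ℕ} (G : SimpleGraph V) (p : V → Fin d → ℝ)
    (Q : Fin d → Fin d → ℝ) : Prop :=
  (∀ k l, Q k l = Q l k) ∧
  ∀ i j, G.Adj i j → ∑ k, ∑ l, Q k l * ((p i k - p j k) * (p i l - p j l)) = 0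

theorem transfer_van {V : Type} [Fintype V] [DecidableEq V] {d : ℕ} (G : SimpleGraph V)
    (p p' : V → Fin d → ℝ)
    (hgen : AlgebraicIndependent ℚ (fun x : V × Fin d => p x.1 x.2))
    (h' : ∀ Q, Van G p' Q → Q = 0) (Q) (hQ : Van G p Q) : Q = 0 := by
  classical
  let M : Matrix ((V × V) ⊕ (Fin d × Fin d)) (Fin d × Fin d) (MvPolynomial (V × Fin d) ℚ) :=
    fun r c => Sum.elim
      (fun e => if G.Adj e.1 e.2 then
        (MvPolynomial.X (e.1, c.1) - MvPolynomial.X (e.2, c.1)) *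
        (MvPolynomial.X (e.1, c.2) - MvPolynomial.X (e.2, c.2)) else 0)
      (fun a => (if c = a then 1 else 0) - (if c = a.swap then 1 else 0)) r
  have keyL : ∀ (y : V → Fin d → ℝ) (u : Fin d × Fin d → ℝ) (i j : V),
      ((M.map (MvPolynomial.aeval (fun x : V × Fin d => y x.1 x.2))) *ᵥ u) (Sum.inl (i, j)) =
      if G.Adj i j then ∑ k, ∑ l, u (k, l) * ((y i k - y j k) * (y i l - y j l)) else 0 := by
    intro y u i j
    simp only [Matrix.mulVec, dotProduct, Matrix.map_apply, Fintype.sum_prod_type]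
    by_cases hij : G.Adj i j
    · simp only [M, hij, if_true, Sum.elim_inl, map_mul, map_sub, MvPolynomial.aeval_X]
      refine Finset.sum_congr rfl fun k _ => Finset.sum_congr rfl fun l _ => mul_comm _ _
    · simp [M, hij]
  have keyR : ∀ (y : V → Fin d → ℝ) (u : Fin d × Fin d → ℝ) (k l : Fin d),
      ((M.map (MvPolynomial.aeval (fun x : V × Fin d => y x.1 x.2))) *ᵥ u) (Sum.inr (k, l)) =
      u (k, l) - u (l, k) := by
    intro y u k l
    simp only [Matrix.mulVec, dotProduct, Matrix.map_apply]
    simp only [M, Sum.elim_inr, map_sub, apply_ite (MvPolynomial.aeval _), map_one, map_zero,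
      sub_mul, Finset.sum_sub_distrib, ite_mul, one_mul, zero_mul, Finset.sum_ite_eq',
      Finset.sum_ite_eq, Finset.mem_univ, if_true, Prod.swap]
  have key : ∀ (y : V → Fin d → ℝ) (u : Fin d × Fin d → ℝ),
      (M.map (MvPolynomial.aeval (fun x : V × Fin d => y x.1 x.2))) *ᵥ u = 0 ↔
      Van G y (fun k l => u (k, l)) := by
    intro y u
    constructor
    · intro h
      constructor
      · intro k l
        have := congrFun h (Sum.inr (k, l))
        rw [keyR] at this
        exact sub_eq_zero.mp this
      · intro i j hij
        have := congrFun h (Sum.inl (i, j))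
        rw [keyL, if_pos hij] at this
        exact this
    · rintro ⟨h1, h2⟩
      ext r
      rcases r with ⟨i, j⟩ | ⟨k, l⟩
      · rw [keyL]
        split_ifs with hij
        · exact h2 i j hij
        · rfl
      · rw [keyR]
        exact sub_eq_zero.mpr (h1 k l)
  have := transfer_ker M (fun x : V × Fin d => p x.1 x.2) (fun x : V × Fin d => p' x.1 x.2) hgen
    (fun u hu => by
      have h0 := h' _ ((key p' u).mp hu)
      ext ⟨k, l⟩
      exact congrFun (congrFun h0 k) l)
    (fun c => Q c.1 c.2) ((key p _).mpr hQ)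
  ext k l
  exact congrFun this (k, l)

theorem affine_gen {V : Type} [Fintype V] [DecidableEq V] {d : ℕ}
    (q : V → Fin d → ℝ)
    (hgen : AlgebraicIndependent ℚ (fun x : V × Fin d => q x.1 x.2))
    (v : V) (f : Fin (d + 1) → V) (hf : Function.Injective f) (hv : ∀ k, f k ≠ v)
    (c : ℝ) (b : Fin d → ℝ) (h : ∀ j, c + ∑ k, b k * (q v k - q (f j) k) = 0) :
    c = 0 ∧ b = 0 := by
  classical
  let M : Matrix (Fin (d + 1)) (Fin (d + 1)) (MvPolynomial (V × Fin d) ℚ) :=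
    fun j a => (Fin.cons 1 (fun k => MvPolynomial.X (v, k) - MvPolynomial.X (f j, k)) :
      Fin (d + 1) → MvPolynomial (V × Fin d) ℚ) a
  have key : ∀ (y : V → Fin d → ℝ) (u : Fin (d + 1) → ℝ) (j : Fin (d + 1)),
      ((M.map (MvPolynomial.aeval (fun x : V × Fin d => y x.1 x.2))) *ᵥ u) j =
      u 0 + ∑ k : Fin d, u k.succ * (y v k - y (f j) k) := by
    intro y u j
    simp only [Matrix.mulVec, dotProduct, Matrix.map_apply]
    simp [M, Fin.sum_univ_succ, mul_comm]
  let q' : V → Fin d → ℝ := fun w k => if w = f k.succ then 1 else 0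
  have := transfer_ker M (fun x : V × Fin d => q x.1 x.2) (fun x : V × Fin d => q' x.1 x.2) hgen
    (fun u hu => by
      have h0 : u 0 = 0 := by
        have := congrFun hu 0
        rw [key] at this
        simpa [q', (hv _).symm, hf.eq_iff, (Fin.succ_ne_zero _).symm] using this
      ext a
      refine Fin.cases h0 (fun k => ?_) a
      have := congrFun hu k.succ
      rw [key] at this
      simpa [q', (hv _).symm, hf.eq_iff, h0] using this)
    (Fin.cons c b) (by
      ext j
      rw [key]
      simpa using h j)
  constructor
  · simpa using congrFun this 0
  · ext k
    simpa using congrFun this k.succ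

theorem main_van (d : ℕ) : ∀ (V : Type) [Fintype V] [DecidableEq V] [Nonempty V]
    (G : SimpleGraph V) (p : V → Fin d → ℝ)
    (_ : AlgebraicIndependent ℚ (fun x : V × Fin d => p x.1 x.2))
    (_ : ∀ v, ∃ f : Fin d → V, Function.Injective f ∧ ∀ k, G.Adj v (f k))
    (Q : Fin d → Fin d → ℝ), Van G p Q → Q = 0 := by
  induction d with
  | zero =>
    intro V _ _ _ G p _ _ Q _
    ext k
    exact k.elim0
  | succ d ih =>
    intro V _ _ _ G p hgen hdeg Q hQ
    obtain ⟨v⟩ := ‹Nonempty V›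
    obtain ⟨f, hf, hfv⟩ := hdeg v
    let q : V → Fin d → ℝ := fun w k => p w k.succ
    have hq : AlgebraicIndependent ℚ (fun x : V × Fin d => q x.1 x.2) :=
      hgen.comp (fun x : V × Fin d => (x.1, x.2.succ)) (by
        rintro ⟨a, b⟩ ⟨a', b'⟩ h
        simpa using h)
    let p' : V → Fin (d + 1) → ℝ := fun i => Fin.cons (if i = v then 1 else 0) (q i)
    refine transfer_van G p p' hgen ?_ Q hQ
    clear hQ Q
    rintro Q ⟨hsym, hQ⟩
    have hA : (fun k l : Fin d => Q k.succ l.succ) = 0 := by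
      have : Nonempty {w : V // w ≠ v} := ⟨⟨f 0, (hfv 0).ne'⟩⟩
      refine ih {w : V // w ≠ v} (G.comap Subtype.val) (fun w => q w.1) ?_ ?_ _ ⟨?_, ?_⟩
      · exact hq.comp (fun x : {w : V // w ≠ v} × Fin d => (x.1.1, x.2)) (by
          rintro ⟨a, b⟩ ⟨a', b'⟩ h
          simpa [Subtype.ext_iff] using h)
      · rintro ⟨w, hw⟩
        obtain ⟨g, hg, hgw⟩ := hdeg w
        obtain ⟨k0, hk0⟩ : ∃ k0, ∀ k, k ≠ k0 → g k ≠ v := by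
          by_cases hex : ∃ k0, g k0 = v
          · obtain ⟨k0, rfl⟩ := hex
            exact ⟨k0, fun k hk h => hk (hg h)⟩
          · exact ⟨0, fun k _ h => hex ⟨k, h⟩⟩
        refine ⟨fun k => ⟨g (k0.succAbove k), hk0 _ (Fin.succAbove_ne _ _)⟩, ?_, ?_⟩
        · intro a b h
          exact Fin.succAbove_right_injective (hg (congrArg Subtype.val h))
        · intro k
          exact hgw _
      · intro k l
        exact hsym _ _
      · rintro ⟨i, hi⟩ ⟨j, hj⟩ hij
        have := hQ i j hij
        simpa [p', hi, hj, Fin.sum_univ_succ] using this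
    have hA' : ∀ k l : Fin d, Q k.succ l.succ = 0 := fun k l => congrFun (congrFun hA k) l
    have hB := affine_gen q hq v f hf (fun k => (hfv k).ne') (Q 0 0)
      (fun k => 2 * Q 0 k.succ) (by
        intro j
        have := hQ v (f j) (hfv j)
        simp [p', (hfv j).ne', Fin.sum_univ_succ, hA', hsym _ 0] at this
        rw [← this, add_assoc, ← Finset.sum_add_distrib]
        congr 1
        refine Finset.sum_congr rfl fun k _ => by ring)
    have h0 : ∀ k : Fin d, Q 0 k.succ = 0 := fun k => by
      have := congrFun hB.2 k
      simpa using this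
    ext k l
    refine Fin.cases ?_ (fun k => ?_) k
    · exact Fin.cases hB.1 h0 l
    · refine Fin.cases ?_ (fun l => hA' k l) l
      rw [hsym]
      exact h0 k

theorem generic_edge_directions_span
    {d n : ℕ} (G : SimpleGraph (Fin n)) [DecidableRel G.Adj]
    (p : Fin n → Fin d → ℝ)
    -- the framework is d-dimensional: p₁, …, pₙ affinely span ℝᵈ:
    (hdim : affineSpan ℝ (Set.range p) = ⊤)
    -- the framework is generic: the dn coordinates are algebraically independent over ℚ:
    (hgen : AlgebraicIndependent ℚ (fun x : Fin n × Fin d => p x.1 x.2))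
    -- G has minimum degree at least d:
    (hdeg : ∀ v : Fin n, d ≤ G.degree v) :
    Submodule.span ℝ
        {M : Matrix (Fin d) (Fin d) ℝ |
          ∃ i j, G.Adj i j ∧ M = Matrix.vecMulVec (p i - p j) (p i - p j)} =
      symmSub d := by
  classical
  have hne : Nonempty (Fin n) := by
    by_contra h
    rw [not_nonempty_iff] at h
    rw [Set.range_eq_empty, AffineSubspace.span_empty] at hdim
    exact AffineSubspace.bot_ne_top ℝ _ _ hdim
  have hmain := main_van d (Fin n) G p hgen (by
    intro v
    have h := hdeg v
    obtain ⟨t, ht, htc⟩ := Finset.exists_subset_card_eq (s := G.neighborFinset v) h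
    refine ⟨fun k => (t.equivFinOfCardEq htc).symm k, ?_, ?_⟩
    · intro a b hab
      exact (t.equivFinOfCardEq htc).symm.injective (Subtype.ext hab)
    · intro k
      exact (G.mem_neighborFinset _ _).mp (ht ((t.equivFinOfCardEq htc).symm k).2))
  apply le_antisymm
  · rw [Submodule.span_le]
    rintro M ⟨i, j, -, rfl⟩
    change (Matrix.vecMulVec (p i - p j) (p i - p j)).IsSymm
    ext a b
    simp [Matrix.vecMulVec_apply, mul_comm]
  · intro X hX
    by_contra hnot
    obtain ⟨f, hfX, hf⟩ := Submodule.exists_le_ker_of_notMem hnot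
    have hrep : ∀ M : Matrix (Fin d) (Fin d) ℝ,
        f M = ∑ k, ∑ l, M k l * f (Matrix.single k l 1) := by
      intro M
      conv_lhs => rw [Matrix.matrix_eq_sum_single M]
      simp only [map_sum]
      refine Finset.sum_congr rfl fun k _ => Finset.sum_congr rfl fun l _ => ?_
      rw [← smul_eq_mul, ← map_smul, Matrix.smul_single, smul_eq_mul, mul_one]
    have hrep2 : ∀ M : Matrix (Fin d) (Fin d) ℝ, M.IsSymm →
        2 * f M = ∑ k, ∑ l, (f (Matrix.single k l 1) + f (Matrix.single l k 1)) * M k l := by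
      intro M hM
      simp only [add_mul, Finset.sum_add_distrib]
      rw [two_mul]
      congr 1
      · rw [hrep]
        refine Finset.sum_congr rfl fun k _ => Finset.sum_congr rfl fun l _ => mul_comm _ _
      · rw [hrep, Finset.sum_comm]
        refine Finset.sum_congr rfl fun k _ => Finset.sum_congr rfl fun l _ => ?_
        rw [hM.apply, mul_comm]
    have hQ := hmain (fun k l => f (Matrix.single k l 1) + f (Matrix.single l k 1))
      ⟨fun k l => add_comm _ _, fun i j hij => by
        have h1 : f (Matrix.vecMulVec (p i - p j) (p i - p j)) = 0 :=
          hf (Submodule.subset_span ⟨i, j, hij, rfl⟩)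
        have h2 := hrep2 (Matrix.vecMulVec (p i - p j) (p i - p j)) (by
          ext a b
          simp [Matrix.vecMulVec_apply, mul_comm])
        rw [h1, mul_zero] at h2
        simpa [Matrix.vecMulVec_apply] using h2.symm⟩
    have h3 := hrep2 X hX
    have hQ' : ∀ k l, f (Matrix.single k l 1) + f (Matrix.single l k 1) = 0 :=
      fun k l => congrFun (congrFun hQ k) l
    simp only [hQ', zero_mul, Finset.sum_const_zero] at h3
    exact hfX (by linarith)

end Stmt9
end

section
/- Let G = ([n], E) be a tensegrity graph with E = B ∪ C ∪ S, let G(p) be a tensegrity framework, and let ∇G(p̂) be its extended tensegrity framework on the suspension tensegrity graph ∇G (with p̂_0 = 0 and p̂_i = p_i). Then G(p) is universally completable if and only if ∇G(p̂) is universally rigid. -/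
/- STATEMENT 11: a tensegrity framework G(p) is universally completable if and only if
the extended tensegrity framework ∇G(p̂) on the suspension tensegrity graph (apex node 0
placed at the origin, bars B ∪ {{0,i}}, cables C' = S, struts S' = C) is universally
rigid. -/

open Matrix BigOperators
open scoped RealInnerProductSpace

namespace Stmt11

variable {n d : ℕ}

/-- The tensegrity framework `G(p)` with bars `B`, cables `C` and struts `S` is universally
completable. -/
def UniversallyCompletable (B C S : Set (Fin n × Fin n))
    (p : Fin n → EuclideanSpace ℝ (Fin d)) : Prop :=
  ∀ X : Matrix (Fin n) (Fin n) ℝ, X.PosSemidef →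
    (∀ i, X i i = ⟪p i, p i⟫) →
    (∀ ij ∈ B, X ij.1 ij.2 = ⟪p ij.1, p ij.2⟫) →
    (∀ ij ∈ C, X ij.1 ij.2 ≤ ⟪p ij.1, p ij.2⟫) →
    (∀ ij ∈ S, ⟪p ij.1, p ij.2⟫ ≤ X ij.1 ij.2) →
    X = Matrix.of fun i j => ⟪p i, p j⟫

/-- Domination of tensegrity frameworks on `m` nodes. -/
def Dominates {m e f : ℕ} (B C S : Set (Fin m × Fin m))
    (p : Fin m → EuclideanSpace ℝ (Fin e)) (q : Fin m → EuclideanSpace ℝ (Fin f)) : Prop :=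
  (∀ ij ∈ B, ‖p ij.1 - p ij.2‖ = ‖q ij.1 - q ij.2‖) ∧
  (∀ ij ∈ C, ‖q ij.1 - q ij.2‖ ≤ ‖p ij.1 - p ij.2‖) ∧
  (∀ ij ∈ S, ‖p ij.1 - p ij.2‖ ≤ ‖q ij.1 - q ij.2‖)

/-- Congruence of frameworks. -/
def Congruent {m e f : ℕ} (p : Fin m → EuclideanSpace ℝ (Fin e))
    (q : Fin m → EuclideanSpace ℝ (Fin f)) : Prop :=
  ∀ i j, ‖p i - p j‖ = ‖q i - q j‖

/-- Universal rigidity of a tensegrity framework. -/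
def UniversallyRigid {m e : ℕ} (B C S : Set (Fin m × Fin m))
    (p : Fin m → EuclideanSpace ℝ (Fin e)) : Prop :=
  ∀ (f : ℕ) (q : Fin m → EuclideanSpace ℝ (Fin f)), Dominates B C S p q → Congruent p q

/-- Lift a set of edges of `G` to the corresponding edges of the suspension graph `∇G`
(node `i` of `G` becomes node `i.succ` of `∇G`). -/
def liftPairs (T : Set (Fin n × Fin n)) : Set (Fin (n + 1) × Fin (n + 1)) :=
  (fun ij : Fin n × Fin n => ((ij.1.succ : Fin (n + 1)), (ij.2.succ : Fin (n + 1)))) '' T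

/-- The new edges of `∇G` joining the apex node `0` to all nodes of `G`. -/
def apexEdges (n : ℕ) : Set (Fin (n + 1) × Fin (n + 1)) :=
  {x | ∃ i : Fin n, x = ((0 : Fin (n + 1)), i.succ)}

/-- The extended framework `p̂` with `p̂₀ = 0` and `p̂ᵢ = pᵢ`. -/
noncomputable def extFramework (p : Fin n → EuclideanSpace ℝ (Fin d)) :
    Fin (n + 1) → EuclideanSpace ℝ (Fin d) :=
  Fin.cases (0 : EuclideanSpace ℝ (Fin d)) p

/-- The polarization identity in the form used below. -/
lemma norm_sub_sq' {f : ℕ} (x y : EuclideanSpace ℝ (Fin f)) :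
    ‖x - y‖ ^ 2 = ⟪x, x⟫ - 2 * ⟪x, y⟫ + ⟪y, y⟫ := by
  rw [norm_sub_sq_real, real_inner_self_eq_norm_sq, real_inner_self_eq_norm_sq]

/-- Lengths versus inner products when the vector norms agree. -/
lemma norm_sub_le_iff {e f : ℕ} {x y : EuclideanSpace ℝ (Fin e)} {u v : EuclideanSpace ℝ (Fin f)}
    (hx : ⟪x, x⟫ = ⟪u, u⟫) (hy : ⟪y, y⟫ = ⟪v, v⟫) :
    ‖x - y‖ ≤ ‖u - v‖ ↔ ⟪u, v⟫ ≤ ⟪x, y⟫ := by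
  rw [← sq_le_sq₀ (norm_nonneg _) (norm_nonneg _), norm_sub_sq', norm_sub_sq', hx, hy]
  constructor <;> intro h <;> linarith

/-- Lengths versus inner products when the vector norms agree, equality version. -/
lemma norm_sub_eq_iff {e f : ℕ} {x y : EuclideanSpace ℝ (Fin e)} {u v : EuclideanSpace ℝ (Fin f)}
    (hx : ⟪x, x⟫ = ⟪u, u⟫) (hy : ⟪y, y⟫ = ⟪v, v⟫) :
    ‖x - y‖ = ‖u - v‖ ↔ ⟪u, v⟫ = ⟪x, y⟫ := by
  rw [le_antisymm_iff, le_antisymm_iff, norm_sub_le_iff hx hy, norm_sub_le_iff hx.symm hy.symm]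

/-- Gram matrices are positive semidefinite. -/
lemma gram_posSemidef {f : ℕ} (q : Fin n → EuclideanSpace ℝ (Fin f)) :
    (Matrix.of fun i j => ⟪q i, q j⟫).PosSemidef :=
  Matrix.posSemidef_gram ℝ q

/-- Every positive semidefinite matrix is a Gram matrix. -/
lemma exists_gram (X : Matrix (Fin n) (Fin n) ℝ) (hX : X.PosSemidef) :
    ∃ q : Fin n → EuclideanSpace ℝ (Fin n), ∀ i j, X i j = ⟪q i, q j⟫ := by
  obtain ⟨A, rfl⟩ : ∃ A : Matrix (Fin n) (Fin n) ℝ, X = Aᴴ * A := by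
    open scoped MatrixOrder in
    exact CStarAlgebra.nonneg_iff_eq_star_mul_self.mp hX.nonneg
  refine ⟨fun i => WithLp.toLp 2 fun k => A k i, fun i j => ?_⟩
  simp [Matrix.mul_apply, PiLp.inner_apply, mul_comm]

theorem universallyCompletable_iff_suspension_universallyRigid
    (B C S : Set (Fin n × Fin n))
    -- the edge set E = B ∪ C ∪ S is partitioned into bars, cables and struts,
    -- and the tensegrity graph has no loops:
    (hBC : Disjoint B C) (hBS : Disjoint B S) (hCS : Disjoint C S)
    (hloop : ∀ i : Fin n, (i, i) ∉ B ∪ C ∪ S)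
    (p : Fin n → EuclideanSpace ℝ (Fin d)) :
    UniversallyCompletable B C S p ↔
      UniversallyRigid (liftPairs B ∪ apexEdges n) (liftPairs S) (liftPairs C)
        (extFramework p) := by
  constructor
  · rintro h f q ⟨hB, hC, hS⟩
    have hnorm : ∀ i : Fin n, ‖p i‖ = ‖q i.succ - q 0‖ := fun i => by
      have := hB (0, i.succ) (Or.inr ⟨i, rfl⟩)
      simp only [extFramework, Fin.cases_zero, Fin.cases_succ, zero_sub, norm_neg] at this
      rw [this, norm_sub_rev]
    have hin : ∀ i : Fin n, ⟪p i, p i⟫ = ⟪q i.succ - q 0, q i.succ - q 0⟫ := fun i => by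
      rw [real_inner_self_eq_norm_sq, real_inner_self_eq_norm_sq, hnorm]
    have hd : ∀ i j : Fin n,
        ‖q i.succ - q j.succ‖ = ‖(q i.succ - q 0) - (q j.succ - q 0)‖ := fun i j => by
      rw [sub_sub_sub_cancel_right]
    have key := h (Matrix.of fun i j => ⟪q i.succ - q 0, q j.succ - q 0⟫)
      (gram_posSemidef fun i : Fin n => q i.succ - q 0) (fun i => (hin i).symm)
      (fun ij hij => by
        have := hB (ij.1.succ, ij.2.succ) (Or.inl ⟨ij, hij, rfl⟩)
        simp only [extFramework, Fin.cases_succ, hd] at this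
        exact (norm_sub_eq_iff (hin _) (hin _)).1 this)
      (fun ij hij => by
        have := hS (ij.1.succ, ij.2.succ) ⟨ij, hij, rfl⟩
        simp only [extFramework, Fin.cases_succ, hd] at this
        exact (norm_sub_le_iff (hin _) (hin _)).1 this)
      (fun ij hij => by
        have := hC (ij.1.succ, ij.2.succ) ⟨ij, hij, rfl⟩
        simp only [extFramework, Fin.cases_succ, hd] at this
        exact (norm_sub_le_iff (hin _).symm (hin _).symm).1 this)
    intro i j
    refine Fin.cases ?_ (fun i => ?_) i <;> refine Fin.cases ?_ (fun j => ?_) j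
    · simp
    · simp only [extFramework, Fin.cases_zero, Fin.cases_succ, zero_sub, norm_neg]
      rw [hnorm, norm_sub_rev]
    · simp only [extFramework, Fin.cases_zero, Fin.cases_succ, sub_zero]
      rw [hnorm]
    · simp only [extFramework, Fin.cases_succ, hd]
      exact (norm_sub_eq_iff (hin _) (hin _)).2 (congrFun (congrFun key i) j)
  · intro h X hX hD hB hC hS
    obtain ⟨q, hq⟩ := exists_gram X hX
    simp only [hq] at hD hB hC hS
    have hcon := h n (extFramework q) ⟨?_, ?_, ?_⟩
    · ext i j
      have := hcon i.succ j.succ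
      simp only [extFramework, Fin.cases_succ] at this
      rw [hq]
      exact (norm_sub_eq_iff (hD i).symm (hD j).symm).1 this
    · rintro _ (⟨ij, hij, rfl⟩ | ⟨i, rfl⟩)
      · simp only [extFramework, Fin.cases_succ]
        exact (norm_sub_eq_iff (hD _).symm (hD _).symm).2 (hB ij hij)
      · simp only [extFramework, Fin.cases_zero, Fin.cases_succ, zero_sub, norm_neg]
        have := hD i
        rw [real_inner_self_eq_norm_sq, real_inner_self_eq_norm_sq] at this
        exact ((sq_eq_sq₀ (norm_nonneg _) (norm_nonneg _)).1 this).symm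
    · rintro _ ⟨ij, hij, rfl⟩
      simp only [extFramework, Fin.cases_succ]
      exact (norm_sub_le_iff (hD _) (hD _)).2 (hS ij hij)
    · rintro _ ⟨ij, hij, rfl⟩
      simp only [extFramework, Fin.cases_succ]
      exact (norm_sub_le_iff (hD _).symm (hD _).symm).2 (hC ij hij)

end Stmt11
end

section
/- Let G(p) be a bar framework (C = S = ∅) with p_1, …, p_n linearly spanning ℝᵈ, let ∇G(p̂) be its extended bar framework on the suspension graph (p̂_0 = 0, p̂_i = p_i). The following are equivalent: (i) there exists a positive semidefinite equilibrium stress matrix Ω ∈ 𝒮^{n+1} for ∇G(p̂) with corank Ω = d + 1; (ii) there exists a spherical stress matrix for G(p), i.e., a positive semidefinite symmetric n×n matrix Z with Z_ij = 0 for all non-adjacent pairs i ≠ j, Σ_j Z_ij p_j = 0 for all i, and corank Z = d. -/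
/- STATEMENT 12: for a bar framework G(p) with p₁, …, pₙ linearly spanning ℝᵈ, there is a
psd equilibrium stress matrix of corank d+1 for the extended framework ∇G(p̂) on the
suspension graph if and only if there is a spherical stress matrix for G(p), i.e. a psd
matrix Z supported by G with Z P = 0 and corank d. -/

open Matrix BigOperators

namespace Stmt12

variable {n d : ℕ}

/-- The extended framework `p̂` on the node set of the suspension graph `∇G`
(apex node `0` placed at the origin, node `i` of `G` becoming node `i.succ`). -/
def extFramework (p : Fin n → Fin d → ℝ) : Fin (n + 1) → Fin d → ℝ :=
  Fin.cases (0 : Fin d → ℝ) p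

/-- The matrix `[-e | I]`. -/
def cMat (n : ℕ) : Matrix (Fin n) (Fin (n + 1)) ℝ :=
  fun i => Fin.cases (-1) (fun j => if i = j then 1 else 0)

/-- The matrix `[0 ; I]`. -/
def dMat (n : ℕ) : Matrix (Fin (n + 1)) (Fin n) ℝ :=
  fun i j => if i = j.succ then 1 else 0

lemma dMat_conj (A : Matrix (Fin (n + 1)) (Fin (n + 1)) ℝ) (i j : Fin n) :
    ((dMat n)ᵀ * A * dMat n) i j = A i.succ j.succ := by
  simp [Matrix.mul_apply, dMat]

lemma cMat_mul_dMat : cMat n * dMat n = 1 := by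
  ext i j
  simp [Matrix.mul_apply, dMat, cMat, Matrix.one_apply]

lemma cMat_mulVec : (cMat n).mulVec (fun _ => 1) = 0 := by
  ext i
  simp [Matrix.mulVec, dotProduct, Fin.sum_univ_succ, cMat]

lemma cMat_mul_ext (p : Fin n → Fin d → ℝ) :
    cMat n * Matrix.of (extFramework p) = Matrix.of p := by
  ext i j
  simp [Matrix.mul_apply, Fin.sum_univ_succ, cMat, extFramework]

lemma dMat_mul (p : Fin n → Fin d → ℝ) :
    dMat n * Matrix.of p = Matrix.of (extFramework p) := by
  ext i j
  refine Fin.cases ?_ (fun i => ?_) i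
  · simp [Matrix.mul_apply, dMat, extFramework, (Fin.succ_ne_zero _).symm]
  · simp [Matrix.mul_apply, dMat, extFramework]

lemma mul_dMat_cMat (A : Matrix (Fin (n + 1)) (Fin (n + 1)) ℝ)
    (h : A.mulVec (fun _ => 1) = 0) : A * (dMat n * cMat n) = A := by
  rw [← Matrix.mul_assoc]
  ext i j
  have h1 := congrFun h i
  simp only [Matrix.mulVec, dotProduct, Fin.sum_univ_succ, mul_one, Pi.zero_apply] at h1
  refine Fin.cases ?_ (fun j => ?_) j
  · simp [Matrix.mul_apply, dMat, cMat]
    linarith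
  · simp [Matrix.mul_apply, dMat, cMat]

lemma equil_iff {m k : ℕ} (A : Matrix (Fin m) (Fin m) ℝ) (q : Fin m → Fin k → ℝ) :
    (∀ i, ∑ j, A i j • q j = 0) ↔ A * Matrix.of q = 0 := by
  constructor
  · intro h
    ext i j
    simpa [Matrix.mul_apply] using congrFun (h i) j
  · intro h i
    ext j
    simpa [Matrix.mul_apply] using congrFun (congrFun h i) j

lemma rank_conj_le {m k : ℕ} (A : Matrix (Fin m) (Fin m) ℝ) (B : Matrix (Fin m) (Fin k) ℝ) :
    (Bᵀ * A * B).rank ≤ A.rank :=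
  (Matrix.rank_mul_le_left _ _).trans (Matrix.rank_mul_le_right _ _)

lemma psd_conj {m k : ℕ} {A : Matrix (Fin m) (Fin m) ℝ} (hA : A.PosSemidef)
    (B : Matrix (Fin m) (Fin k) ℝ) : (Bᵀ * A * B).PosSemidef := by
  simpa [Matrix.conjTranspose_eq_transpose_of_trivial] using hA.conjTranspose_mul_mul_same B

theorem suspension_stress_iff_spherical_stress
    (G : SimpleGraph (Fin n)) (p : Fin n → Fin d → ℝ)
    -- p₁, …, pₙ linearly span ℝᵈ:
    (hspan : Submodule.span ℝ (Set.range p) = ⊤) :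
    -- (i) a psd equilibrium stress matrix for ∇G(p̂) of corank d+1
    -- (in ∇G the apex 0 is adjacent to every node, and i.succ, j.succ are adjacent
    --  iff i, j are adjacent in G):
    (∃ Ω : Matrix (Fin (n + 1)) (Fin (n + 1)) ℝ, Ω.PosSemidef ∧
        (∀ i j : Fin n, i ≠ j → ¬ G.Adj i j → Ω i.succ j.succ = 0) ∧
        (Ω.mulVec (fun _ => 1) = 0) ∧
        (∀ i : Fin (n + 1), ∑ j : Fin (n + 1), Ω i j • extFramework p j = 0) ∧
        Ω.rank + (d + 1) = n + 1) ↔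
    -- (ii) a spherical stress matrix for G(p):
    (∃ Z : Matrix (Fin n) (Fin n) ℝ, Z.PosSemidef ∧
        (∀ i j : Fin n, i ≠ j → ¬ G.Adj i j → Z i j = 0) ∧
        (∀ i : Fin n, ∑ j : Fin n, Z i j • p j = 0) ∧
        Z.rank + d = n) := by
  simp only [equil_iff]
  constructor
  · rintro ⟨A, hA, hs, he, hp, hr⟩
    have hsym : Aᵀ = A := by
      simpa [Matrix.conjTranspose_eq_transpose_of_trivial] using hA.isHermitian.eq
    have h1 := mul_dMat_cMat A he
    have h2 : (dMat n * cMat n)ᵀ * A = A := by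
      have := congrArg Matrix.transpose h1
      rwa [Matrix.transpose_mul, hsym] at this
    have h3 : (cMat n)ᵀ * ((dMat n)ᵀ * A * dMat n) * cMat n = A := by
      calc _ = (dMat n * cMat n)ᵀ * (A * (dMat n * cMat n)) := by
            simp only [Matrix.transpose_mul, Matrix.mul_assoc]
        _ = A := by rw [h1, h2]
    refine ⟨(dMat n)ᵀ * A * dMat n, psd_conj hA _, ?_, ?_, ?_⟩
    · intro i j hij hadj
      rw [dMat_conj]
      exact hs i j hij hadj
    · rw [Matrix.mul_assoc, dMat_mul, Matrix.mul_assoc, hp, Matrix.mul_zero]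
    · have h4 := rank_conj_le A (dMat n)
      have h5 := rank_conj_le ((dMat n)ᵀ * A * dMat n) (cMat n)
      rw [h3] at h5
      omega
  · rintro ⟨Z, hZ, hs, hp, hr⟩
    have h3 : (dMat n)ᵀ * ((cMat n)ᵀ * Z * cMat n) * dMat n = Z := by
      calc _ = (cMat n * dMat n)ᵀ * (Z * (cMat n * dMat n)) := by
            simp only [Matrix.transpose_mul, Matrix.mul_assoc]
        _ = Z := by simp [cMat_mul_dMat]
    refine ⟨(cMat n)ᵀ * Z * cMat n, psd_conj hZ _, ?_, ?_, ?_, ?_⟩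
    · intro i j hij hadj
      have h6 := dMat_conj ((cMat n)ᵀ * Z * cMat n) i j
      rw [h3] at h6
      rw [← h6]
      exact hs i j hij hadj
    · rw [← Matrix.mulVec_mulVec, cMat_mulVec, Matrix.mulVec_zero]
    · rw [Matrix.mul_assoc, cMat_mul_ext, Matrix.mul_assoc, hp, Matrix.mul_zero]
    · have h4 := rank_conj_le Z (cMat n)
      have h5 := rank_conj_le ((cMat n)ᵀ * Z * cMat n) (dMat n)
      rw [h3] at h5
      omega

end Stmt12
end

section
/- Let G = ([n], E) be a graph and M a symmetric n×n matrix with M_ij = 0 for all non-adjacent pairs i ≠ j and corank M = d. Let P be an n×d matrix whose columns form an orthonormal basis of Ker M, with row vectors p_1, …, p_n ∈ ℝᵈ. The following are equivalent: (i) M satisfies the Strong Arnold Property; (ii) P Pᵀ is an extreme point of the spectrahedron { X positive semidefinite : X_ij = p_iᵀ p_j for all {i,j} ∈ V ∪ E }; (iii) for every symmetric d×d matrix R, if p_iᵀ R p_j = 0 for all {i,j} ∈ V ∪ E, then R = 0. -/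
/- STATEMENT 13: for a matrix M supported by a graph G with corank d, and P an n×d matrix
whose columns form an orthonormal basis of Ker M (rows p₁, …, pₙ), TFAE:
(i) M has the Strong Arnold Property; (ii) P Pᵀ is an extreme point of the spectrahedron
{X ⪰ 0 : X_ij = p_iᵀ p_j on V ∪ E}; (iii) the only symmetric d×d matrix R with
p_iᵀ R p_j = 0 on V ∪ E is R = 0. -/

open Matrix BigOperators

namespace Stmt13

variable {n d : ℕ}

/-- `M` satisfies the Strong Arnold Property with respect to the graph `G`. -/
def SAP (G : SimpleGraph (Fin n)) (M : Matrix (Fin n) (Fin n) ℝ) : Prop :=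
  ∀ X : Matrix (Fin n) (Fin n) ℝ, X.IsSymm → M * X = 0 →
    (∀ i, X i i = 0) → (∀ i j, G.Adj i j → X i j = 0) → X = 0

/-- `x` is an extreme point of the convex set `C`. -/
def IsExtremePt {M : Type*} [AddCommGroup M] [Module ℝ M] (C : Set M) (x : M) : Prop :=
  x ∈ C ∧ ∀ y ∈ C, ∀ z ∈ C, ∀ t : ℝ, 0 < t → t < 1 → x = t • y + (1 - t) • z →
    y = x ∧ z = x

theorem proj_of_ker (M : Matrix (Fin n) (Fin n) ℝ) (hcorank : M.rank + d = n)
    (P : Matrix (Fin n) (Fin d) ℝ) (hker : M * P = 0) (horth : Pᵀ * P = 1)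
    (X : Matrix (Fin n) (Fin n) ℝ) (hX : M * X = 0) : P * Pᵀ * X = X := by
  have hle : LinearMap.range P.mulVecLin ≤ LinearMap.ker M.mulVecLin := by
    rintro _ ⟨w, rfl⟩
    simp [LinearMap.mem_ker, Matrix.mulVec_mulVec, hker]
  have hinj : Function.Injective P.mulVecLin := by
    intro a b hab
    have := congrArg (fun v => Pᵀ *ᵥ v) hab
    simpa [Matrix.mulVec_mulVec, horth] using this
  have h1 : Module.finrank ℝ (LinearMap.range P.mulVecLin) = d := by
    rw [LinearMap.finrank_range_of_inj hinj]; simp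
  have h2 := LinearMap.finrank_range_add_finrank_ker M.mulVecLin
  have h3 : Module.finrank ℝ (LinearMap.range M.mulVecLin) = M.rank := rfl
  rw [h3] at h2
  simp only [Module.finrank_fin_fun] at h2
  have heq := Submodule.eq_of_le_of_finrank_eq hle (by omega)
  apply Matrix.ext_of_mulVec_single
  intro j
  have hmem : X *ᵥ Pi.single j 1 ∈ LinearMap.range P.mulVecLin := by
    rw [heq]
    simp only [LinearMap.mem_ker, Matrix.mulVecLin_apply, Matrix.mulVec_mulVec, hX,
      Matrix.zero_mulVec]
  obtain ⟨w, hw⟩ := hmem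
  rw [← Matrix.mulVec_mulVec, ← hw]
  simp only [Matrix.mulVecLin_apply, Matrix.mulVec_mulVec, Matrix.mul_assoc, horth,
    Matrix.mul_one]

theorem entry_eq (P : Matrix (Fin n) (Fin d) ℝ) (R : Matrix (Fin d) (Fin d) ℝ) (i j : Fin n) :
    (P * R * Pᵀ) i j = P i ⬝ᵥ R.mulVec (P j) := by
  rw [Matrix.mul_assoc, Matrix.mul_apply_eq_vecMul, ← Matrix.vecMul_vecMul,
    Matrix.dotProduct_mulVec]
  rfl

theorem entry_one (P : Matrix (Fin n) (Fin d) ℝ) (i j : Fin n) :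
    (P * Pᵀ) i j = P i ⬝ᵥ P j := rfl

theorem quad_bound (R : Matrix (Fin d) (Fin d) ℝ) (v : Fin d → ℝ) :
    |v ⬝ᵥ R *ᵥ v| ≤ (∑ i, ∑ j, |R i j|) * (v ⬝ᵥ v) := by
  have hk : ∀ i, v i ^ 2 ≤ v ⬝ᵥ v := by
    intro i
    have := Finset.single_le_sum (f := fun i => v i * v i) (fun i _ => mul_self_nonneg _)
      (Finset.mem_univ i)
    simpa [dotProduct, sq] using this
  calc |v ⬝ᵥ R *ᵥ v| = |∑ i, ∑ j, v i * (R i j * v j)| := by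
        simp only [dotProduct, Matrix.mulVec, Finset.mul_sum]
    _ ≤ ∑ i, ∑ j, |v i * (R i j * v j)| :=
        (Finset.abs_sum_le_sum_abs _ _).trans
          (Finset.sum_le_sum fun i _ => Finset.abs_sum_le_sum_abs _ _)
    _ ≤ ∑ i, ∑ j, |R i j| * (v ⬝ᵥ v) := by
        refine Finset.sum_le_sum fun i _ => Finset.sum_le_sum fun j _ => ?_
        have h : |v i| * |v j| ≤ v ⬝ᵥ v := by
          nlinarith [hk i, hk j, sq_abs (v i), sq_abs (v j), sq_nonneg (|v i| - |v j|)]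
        rw [abs_mul, abs_mul]
        nlinarith [mul_le_mul_of_nonneg_left h (abs_nonneg (R i j))]
    _ = _ := by simp only [Finset.sum_mul]

theorem exists_psd (R : Matrix (Fin d) (Fin d) ℝ) (hR : R.IsSymm) :
    ∃ e : ℝ, 0 < e ∧ (1 + e • R).PosSemidef ∧ (1 - e • R).PosSemidef := by
  have hc : 0 ≤ ∑ i, ∑ j, |R i j| := by positivity
  set c := ∑ i, ∑ j, |R i j| with hcdef
  have key : ∀ v : Fin d → ℝ, |(c + 1)⁻¹ * (v ⬝ᵥ R *ᵥ v)| ≤ v ⬝ᵥ v := by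
    intro v
    have h0 : 0 ≤ v ⬝ᵥ v := by
      simp only [dotProduct]; exact Finset.sum_nonneg fun i _ => mul_self_nonneg _
    rw [abs_mul, abs_of_pos (by positivity : 0 < (c+1)⁻¹), inv_mul_le_iff₀ (by positivity)]
    have := quad_bound R v
    rw [← hcdef] at this
    nlinarith
  have hRh : R.IsHermitian := by
    simpa [Matrix.IsHermitian, Matrix.conjTranspose_eq_transpose_of_trivial] using hR.eq
  refine ⟨(c + 1)⁻¹, by positivity, ?_, ?_⟩
  · refine Matrix.PosSemidef.of_dotProduct_mulVec_nonneg ?_ fun v => ?_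
    · simp [Matrix.IsHermitian, Matrix.conjTranspose_eq_transpose_of_trivial, hR.eq]
    · have := abs_le.1 (key v)
      simp only [star_trivial, Matrix.add_mulVec, Matrix.one_mulVec, Matrix.smul_mulVec,
        dotProduct_add, dotProduct_smul, smul_eq_mul]
      linarith
  · refine Matrix.PosSemidef.of_dotProduct_mulVec_nonneg ?_ fun v => ?_
    · simp [Matrix.IsHermitian, Matrix.conjTranspose_eq_transpose_of_trivial, hR.eq]
    · have := abs_le.1 (key v)
      simp only [star_trivial, Matrix.sub_mulVec, Matrix.one_mulVec, Matrix.smul_mulVec,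
        dotProduct_sub, dotProduct_smul, smul_eq_mul]
      linarith

theorem psd_face (P : Matrix (Fin n) (Fin d) ℝ) (horth : Pᵀ * P = 1)
    (y z : Matrix (Fin n) (Fin n) ℝ) (hy : y.PosSemidef) (hz : z.PosSemidef) (t : ℝ)
    (h0 : 0 < t) (h1 : t < 1) (h : P * Pᵀ = t • y + (1 - t) • z) : y * (P * Pᵀ) = y := by
  have hv : ∀ v, Pᵀ *ᵥ v = 0 → y *ᵥ v = 0 := by
    intro v hPv
    have e : v ⬝ᵥ ((P * Pᵀ) *ᵥ v) = 0 := by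
      rw [← Matrix.mulVec_mulVec, hPv]; simp
    rw [h] at e
    simp only [Matrix.add_mulVec, Matrix.smul_mulVec, dotProduct_add, dotProduct_smul,
      smul_eq_mul] at e
    have a := hy.dotProduct_mulVec_nonneg v
    have b := hz.dotProduct_mulVec_nonneg v
    simp only [star_trivial] at a b
    have hb : 0 ≤ (1 - t) * (v ⬝ᵥ z *ᵥ v) := mul_nonneg (by linarith) b
    have ha : v ⬝ᵥ y *ᵥ v = 0 := by
      by_contra hne
      have : 0 < t * (v ⬝ᵥ y *ᵥ v) := mul_pos h0 (lt_of_le_of_ne a (Ne.symm hne))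
      linarith
    exact (hy.dotProduct_mulVec_zero_iff v).1 (by simpa using ha)
  apply Matrix.ext_of_mulVec_single
  intro j
  have := hv (Pi.single j 1 - (P * Pᵀ) *ᵥ Pi.single j 1) (by
    rw [Matrix.mulVec_sub, Matrix.mulVec_mulVec, ← Matrix.mul_assoc, horth, Matrix.one_mul,
      sub_self])
  rw [Matrix.mulVec_sub, Matrix.mulVec_mulVec, sub_eq_zero] at this
  exact this.symm

theorem sap_tfae
    (G : SimpleGraph (Fin n)) (M : Matrix (Fin n) (Fin n) ℝ)
    (hMsymm : M.IsSymm)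
    -- M is supported by G:
    (hsupp : ∀ i j, i ≠ j → ¬ G.Adj i j → M i j = 0)
    -- corank M = d:
    (hcorank : M.rank + d = n)
    -- the columns of P form an orthonormal basis of Ker M:
    (P : Matrix (Fin n) (Fin d) ℝ) (hker : M * P = 0) (horth : Pᵀ * P = 1) :
    -- (i) ↔ (iii):
    (SAP G M ↔
      ∀ R : Matrix (Fin d) (Fin d) ℝ, R.IsSymm →
        (∀ i, P i ⬝ᵥ R.mulVec (P i) = 0) →
        (∀ i j, G.Adj i j → P i ⬝ᵥ R.mulVec (P j) = 0) → R = 0) ∧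
    -- (i) ↔ (ii):
    (SAP G M ↔
      IsExtremePt
        {X : Matrix (Fin n) (Fin n) ℝ | X.PosSemidef ∧
          (∀ i, X i i = P i ⬝ᵥ P i) ∧ (∀ i j, G.Adj i j → X i j = P i ⬝ᵥ P j)}
        (P * Pᵀ)) := by
  have decomp : ∀ X : Matrix (Fin n) (Fin n) ℝ, X.IsSymm → M * X = 0 →
      P * (Pᵀ * X * P) * Pᵀ = X := by
    intro X hs hX
    have h1 := proj_of_ker M hcorank P hker horth X hX
    have h2 : X * (P * Pᵀ) = X := by
      have := congrArg Matrix.transpose h1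
      simpa [Matrix.transpose_mul, hs.eq] using this
    calc P * (Pᵀ * X * P) * Pᵀ = (P * Pᵀ * X) * (P * Pᵀ) := by simp only [Matrix.mul_assoc]
      _ = X := by rw [h1, h2]
  have hM : ∀ B : Matrix (Fin d) (Fin n) ℝ, M * (P * B) = 0 := by
    intro B; rw [← Matrix.mul_assoc, hker, Matrix.zero_mul]
  refine ⟨⟨?_, ?_⟩, ⟨?_, ?_⟩⟩
  · intro h R hR hd ho
    have hX := h (P * R * Pᵀ)
      (by simp [Matrix.IsSymm, Matrix.transpose_mul, hR.eq, Matrix.mul_assoc])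
      (by rw [Matrix.mul_assoc]; exact hM _)
      (fun i => by rw [entry_eq]; exact hd i)
      (fun i j hij => by rw [entry_eq]; exact ho i j hij)
    calc R = (Pᵀ * P) * R * (Pᵀ * P) := by rw [horth]; simp
      _ = Pᵀ * (P * R * Pᵀ) * P := by simp only [Matrix.mul_assoc]
      _ = 0 := by rw [hX]; simp
  · intro h X hs hX hd ho
    have hdec := decomp X hs hX
    have hR := h (Pᵀ * X * P)
      (by simp [Matrix.IsSymm, Matrix.transpose_mul, hs.eq, Matrix.mul_assoc])
      (fun i => by rw [← entry_eq, hdec]; exact hd i)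
      (fun i j hij => by rw [← entry_eq, hdec]; exact ho i j hij)
    rw [← hdec, hR]; simp
  · intro h
    refine ⟨⟨?_, fun i => rfl, fun i j _ => rfl⟩, ?_⟩
    · have := Matrix.posSemidef_self_mul_conjTranspose P
      rwa [Matrix.conjTranspose_eq_transpose_of_trivial] at this
    · rintro y ⟨hy, hyd, hyo⟩ z ⟨hz, hzd, hzo⟩ t h0 h1 heq
      have hface := psd_face P horth y z hy hz t h0 h1 heq
      have hys : yᵀ = y := by
        have := hy.isHermitian.eq
        rwa [Matrix.conjTranspose_eq_transpose_of_trivial] at this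
      have hface2 : P * (Pᵀ * y) = y := by
        have := congrArg Matrix.transpose hface
        simpa [Matrix.transpose_mul, hys, Matrix.mul_assoc] using this
      have hX := h (y - P * Pᵀ)
        (by simp [Matrix.IsSymm, Matrix.transpose_mul, hys])
        (by rw [Matrix.mul_sub, hM, ← hface2, hM, sub_zero])
        (fun i => by rw [Matrix.sub_apply, hyd i, entry_one, sub_self])
        (fun i j hij => by rw [Matrix.sub_apply, hyo i j hij, entry_one, sub_self])
      have hyx : y = P * Pᵀ := sub_eq_zero.1 hX
      refine ⟨hyx, ?_⟩
      rw [hyx] at heq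
      have h3 : (1 - t) • z = (1 - t) • (P * Pᵀ) := by
        rw [sub_smul (1 : ℝ) t (P * Pᵀ), one_smul, eq_sub_iff_add_eq, add_comm]
        exact heq.symm
      exact smul_right_injective _ (by linarith : (1 - t) ≠ 0) h3
  · rintro ⟨-, hext⟩ X hs hX hd ho
    have hdec := decomp X hs hX
    obtain ⟨e, he, hp, hm⟩ := exists_psd (Pᵀ * X * P)
      (by simp [Matrix.IsSymm, Matrix.transpose_mul, hs.eq, Matrix.mul_assoc])
    have hp' := hp.mul_mul_conjTranspose_same P
    have hm' := hm.mul_mul_conjTranspose_same P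
    rw [Matrix.conjTranspose_eq_transpose_of_trivial, Matrix.mul_add, Matrix.add_mul,
      Matrix.mul_one, Matrix.mul_smul, Matrix.smul_mul, hdec] at hp'
    rw [Matrix.conjTranspose_eq_transpose_of_trivial, Matrix.mul_sub, Matrix.sub_mul,
      Matrix.mul_one, Matrix.mul_smul, Matrix.smul_mul, hdec] at hm'
    have := (hext (P * Pᵀ + e • X)
      ⟨hp', fun i => by simp [hd i, entry_one], fun i j hij => by simp [ho i j hij, entry_one]⟩
      (P * Pᵀ - e • X)
      ⟨hm', fun i => by simp [hd i, entry_one], fun i j hij => by simp [ho i j hij, entry_one]⟩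
      (1/2) (by norm_num) (by norm_num) (by module)).1
    have h4 : e • X = 0 := by simpa using this
    exact (smul_eq_zero.1 h4).resolve_left he.ne'


end Stmt13
end

section
/- For every integer r ≥ 2, consider the graph F_r on r + r(r−1)/2 nodes v_1, …, v_r and v_{ij} (1 ≤ i < j ≤ r), consisting of the clique on v_1, …, v_r together with the triangles on {v_i, v_j, v_{ij}} for each i < j, and the framework in ℝʳ given by p_{v_i} = e_i for i ∈ [r] and p_{v_{ij}} = e_i + e_j for 1 ≤ i < j ≤ r. Then the associated F_r-partial matrix a, given by a_{uv} = p_uᵀ p_v for all nodes u and edges {u,v} of F_r, admits a unique positive semidefinite completion, namely the Gram matrix of the vectors p_v; equivalently, the bar framework F_r(p) is universally completable. -/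
/- STATEMENT 17: for every r ≥ 2, the F_r-partial matrix associated to the framework
p_{v_i} = e_i, p_{v_ij} = e_i + e_j of the graph F_r (a central r-clique v_1, …, v_r
together with the triangles {v_i, v_j, v_ij}) admits a unique psd completion, namely the
Gram matrix of the vectors p; i.e., the bar framework F_r(p) is universally completable. -/

open Matrix BigOperators

namespace Stmt17

/-- The vertices of `F_r`: the nodes `v_i`, `i ∈ [r]`, and the nodes `v_{ij}`, `i < j`. -/
abbrev Vtx (r : ℕ) := Fin r ⊕ {e : Fin r × Fin r // e.1 < e.2}

/-- The adjacency relation of `F_r`: a clique on `v_1, …, v_r`, with `v_{ij}` adjacent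
exactly to `v_i` and `v_j`. -/
def adjF {r : ℕ} : Vtx r → Vtx r → Prop
  | Sum.inl i, Sum.inl j => i ≠ j
  | Sum.inl i, Sum.inr e => i = e.1.1 ∨ i = e.1.2
  | Sum.inr e, Sum.inl i => i = e.1.1 ∨ i = e.1.2
  | Sum.inr _, Sum.inr _ => False

/-- The framework: `p_{v_i} = e_i` and `p_{v_{ij}} = e_i + e_j` in `ℝʳ`. -/
def pF (r : ℕ) : Vtx r → Fin r → ℝ
  | Sum.inl i => Pi.single i 1
  | Sum.inr e => Pi.single e.1.1 1 + Pi.single e.1.2 1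

theorem Fr_universally_completable (r : ℕ) (hr : 2 ≤ r) :
    ∀ X : Matrix (Vtx r) (Vtx r) ℝ, X.PosSemidef →
      (∀ u, X u u = pF r u ⬝ᵥ pF r u) →
      (∀ u v, adjF u v → X u v = pF r u ⬝ᵥ pF r v) →
      X = Matrix.of fun u v => pF r u ⬝ᵥ pF r v := by
  intro X hX hd ha
  have hs : ∀ u v, X u v = X v u := fun u v => by
    have := hX.isHermitian.apply v u
    simpa using this
  have key : ∀ (e : {e : Fin r × Fin r // e.1 < e.2}) (u : Vtx r),
      X u (Sum.inr e) = X u (Sum.inl e.1.1) + X u (Sum.inl e.1.2) := by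
    rintro ⟨⟨i, j⟩, hij⟩ u
    have hne : i ≠ j := ne_of_lt hij
    have h1 := hd (Sum.inr ⟨(i, j), hij⟩)
    have h2 := hd (Sum.inl i)
    have h3 := hd (Sum.inl j)
    have h4 := ha (Sum.inl i) (Sum.inl j) hne
    have h5 := ha (Sum.inl i) (Sum.inr ⟨(i, j), hij⟩) (Or.inl rfl)
    have h6 := ha (Sum.inl j) (Sum.inr ⟨(i, j), hij⟩) (Or.inr rfl)
    simp [pF, hne, hne.symm] at h1 h2 h3 h4 h5 h6
    have h7 := (hX.dotProduct_mulVec_zero_iff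
      (Pi.single (Sum.inr ⟨(i, j), hij⟩) 1 - Pi.single (Sum.inl i) 1
        - Pi.single (Sum.inl j) 1)).1 (by
        have e1 := hs (Sum.inl j) (Sum.inl i)
        have e2 := hs (Sum.inr ⟨(i, j), hij⟩) (Sum.inl i)
        have e3 := hs (Sum.inr ⟨(i, j), hij⟩) (Sum.inl j)
        simp only [star_trivial, mulVec_sub, mulVec_single_one, dotProduct_sub, sub_dotProduct,
          single_one_dotProduct, Matrix.col_apply]
        linarith)
    have h8 := congrFun h7 u
    simp only [mulVec_sub, mulVec_single_one, Pi.sub_apply, Matrix.col_apply,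
      Pi.zero_apply] at h8
    linarith
  have base : ∀ i j : Fin r, X (Sum.inl i) (Sum.inl j) = pF r (Sum.inl i) ⬝ᵥ pF r (Sum.inl j) := by
    intro i j
    by_cases h : i = j
    · subst h; exact hd _
    · exact ha _ _ h
  have left : ∀ (i : Fin r) (v : Vtx r),
      X (Sum.inl i) v = pF r (Sum.inl i) ⬝ᵥ pF r v := by
    rintro i (j | e)
    · exact base i j
    · rw [key, base, base]
      simp only [pF, dotProduct_add]
  ext u v
  rw [of_apply]
  rcases v with j | e
  · rw [hs, left, dotProduct_comm]
  · rw [key, hs u, hs u, left, left]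
    simp only [pF, dotProduct_add]
    rw [dotProduct_comm, dotProduct_comm (Pi.single e.1.2 1)]

end Stmt17
end

section
/- For every integer r ≥ 2, let G_r = (V_r, E_r) be the triangular grid graph with binom(r+1,2) vertices (i,l) for l ∈ [r] and i ∈ [r−l+1], arising as the edge graph of the subdivision of an equilateral triangle into (r−1)² congruent triangles, and consider the framework in ℝʳ given by p_{(i,1)} = e_i for i ∈ [r] and p_{(i,l)} = p_{(i,l−1)} + p_{(i+1,l−1)} for l ≥ 2 and i ∈ [r−l+1]. Then the associated G_r-partial matrix, given by the inner products p_uᵀ p_v on nodes and edges of G_r, admits a unique positive semidefinite completion; equivalently, the bar framework G_r(p) is universally completable. -/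
/- STATEMENT 18: for every r ≥ 2, the G_r-partial matrix associated to the framework
p_{(i,1)} = e_i, p_{(i,l)} = p_{(i,l-1)} + p_{(i+1,l-1)} on the triangular grid graph G_r
(the edge graph of the subdivision of an equilateral triangle into (r-1)² congruent
triangles) admits a unique psd completion; i.e., the bar framework G_r(p) is universally
completable.

Vertices are encoded 0-indexed: a vertex is a pair (i, l) with position i and level l
satisfying i + l < r (so level l carries r - l vertices); the paper's level l corresponds
to l - 1 here. Edges: (i,l) ~ (i+1,l) within a level, and (i,l+1) ~ (i,l), (i,l+1) ~
(i+1,l) between consecutive levels. -/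

open Matrix BigOperators

namespace Stmt18

/-- The vertices of the triangular grid graph `G_r` (0-indexed): pairs `(i, l)` of
position `i` and level `l` with `i + l < r`. -/
abbrev VtxT (r : ℕ) := {q : Fin r × Fin r // (q.1 : ℕ) + (q.2 : ℕ) < r}

/-- The adjacency relation of `G_r`. -/
def adjT {r : ℕ} (u v : VtxT r) : Prop :=
  ((u.1.2 : ℕ) = (v.1.2 : ℕ) ∧
      ((u.1.1 : ℕ) + 1 = (v.1.1 : ℕ) ∨ (v.1.1 : ℕ) + 1 = (u.1.1 : ℕ))) ∨
  ((u.1.2 : ℕ) + 1 = (v.1.2 : ℕ) ∧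
      ((u.1.1 : ℕ) = (v.1.1 : ℕ) ∨ (u.1.1 : ℕ) = (v.1.1 : ℕ) + 1)) ∨
  ((v.1.2 : ℕ) + 1 = (u.1.2 : ℕ) ∧
      ((v.1.1 : ℕ) = (u.1.1 : ℕ) ∨ (v.1.1 : ℕ) = (u.1.1 : ℕ) + 1))

/-- The recursively defined framework vectors: `pfun r 0 i = e_i` (bottom level) and
`pfun r (l+1) i = pfun r l i + pfun r l (i+1)`. -/
def pfun (r : ℕ) : ℕ → ℕ → Fin r → ℝ
  | 0, i => fun k => if (k : ℕ) = i then 1 else 0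
  | l + 1, i => pfun r l i + pfun r l (i + 1)

/-- The framework vector attached to a vertex of `G_r`. -/
def pT {r : ℕ} (u : VtxT r) : Fin r → ℝ := pfun r (u.1.2 : ℕ) (u.1.1 : ℕ)

/-- The combinatorial core: a symmetric difference form vanishing on nodes and edges and
compatible with the triangle relations vanishes identically. -/
theorem core (r : ℕ) (F : ℕ → ℕ → ℕ → ℕ → ℝ)
    (symm : ∀ i l j m, F i l j m = F j m i l)
    (diag : ∀ i l, i + l < r → F i l i l = 0)
    (adj : ∀ i l, i + 1 + l < r → F i l (i + 1) l = 0)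
    (lin : ∀ i l j m, i + l + 1 < r → j + m < r →
      F i (l + 1) j m = F i l j m + F (i + 1) l j m) :
    ∀ k a, a + k < r → ∀ i l j m, a ≤ i → i + l ≤ a + k → a ≤ j → j + m ≤ a + k →
      F i l j m = 0 := by
  intro k
  induction k with
  | zero =>
    intro a ha i l j m h1 h2 h3 h4
    obtain rfl : i = a := by omega
    obtain rfl : j = i := by omega
    obtain rfl : l = 0 := by omega
    obtain rfl : m = 0 := by omega
    exact diag _ _ ha
  | succ k ih =>
    intro a ha
    have s1 : ∀ s l, l + s = k → F a l (a + 1) k = 0 := by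
      intro s
      induction s with
      | zero =>
        intro l hl
        obtain rfl : l = k := by omega
        exact adj _ _ (by omega)
      | succ s ihs =>
        intro l hl
        have e := ihs (l + 1) (by omega)
        rw [lin a l (a + 1) k (by omega) (by omega),
          ih (a + 1) (by omega) (a + 1) l (a + 1) k (by omega) (by omega) (by omega) (by omega)] at e
        linarith
    have s2 : ∀ t m l, m + t = k → l ≤ k → F a l (a + 1 + t) m = 0 := by
      intro t
      induction t with
      | zero =>
        intro m l hm hl
        obtain rfl : m = k := by omega
        exact s1 (m - l) l (by omega)
      | succ t iht =>
        intro m l hm hl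
        have e := iht (m + 1) l (by omega) hl
        rw [symm, lin (a + 1 + t) m a l (by omega) (by omega),
          ih a (by omega) (a + 1 + t) m a l (by omega) (by omega) (by omega) (by omega), symm] at e
        have e2 : a + 1 + (t + 1) = a + 1 + t + 1 := by omega
        rw [e2]
        linarith
    have s3 : ∀ l q m, q + m = a + k + 1 → a < q → l ≤ k + 1 → F a l q m = 0 := by
      intro l q m hq haq hl
      have base : ∀ l, l ≤ k → F a l q m = 0 := by
        intro l hl
        have := s2 (q - (a + 1)) m l (by omega) hl
        rwa [show a + 1 + (q - (a + 1)) = q by omega] at this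
      rcases Nat.lt_or_ge k l with h | h
      · obtain rfl : l = k + 1 := by omega
        rw [lin a k q m (by omega) (by omega), base k le_rfl,
          ih (a + 1) (by omega) (a + 1) k q m (by omega) (by omega) (by omega) (by omega)]
        simp
      · exact base l h
    have s4 : ∀ l q m, q + m = a + k + 1 → a ≤ q → l ≤ k + 1 → F a l q m = 0 := by
      intro l q m hq haq hl
      rcases Nat.lt_or_ge a q with h | h
      · exact s3 l q m hq h hl
      · obtain rfl : q = a := by omega
        obtain rfl : m = k + 1 := by omega
        rcases Nat.lt_or_ge k l with h' | h'
        · obtain rfl : l = k + 1 := by omega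
          exact diag _ _ (by omega)
        · rw [symm, lin q k q l (by omega) (by omega),
            ih q (by omega) q k q l (by omega) (by omega) (by omega) (by omega), symm,
            zero_add]
          exact s3 l (q + 1) k (by omega) (by omega) hl
    have s5 : ∀ j m, a < j → j + m ≤ a + k → F a (k + 1) j m = 0 := by
      intro j m hj hm
      rw [lin a k j m (by omega) (by omega),
        ih a (by omega) a k j m (by omega) (by omega) (by omega) (by omega),
        ih (a + 1) (by omega) (a + 1) k j m (by omega) (by omega) (by omega) (by omega), add_zero]
    intro i l j m h1 h2 h3 h4
    by_cases c1 : i + l ≤ a + k ∧ j + m ≤ a + k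
    · exact ih a (by omega) i l j m h1 c1.1 h3 c1.2
    by_cases c2 : a + 1 ≤ i ∧ a + 1 ≤ j
    · exact ih (a + 1) (by omega) i l j m c2.1 (by omega) c2.2 (by omega)
    by_cases c3 : i = a ∧ j + m = a + k + 1
    · obtain ⟨rfl, h⟩ := c3
      exact s4 l j m h h3 (by omega)
    by_cases c4 : j = a ∧ i + l = a + k + 1
    · obtain ⟨rfl, h⟩ := c4
      rw [symm]
      exact s4 m i l h h1 (by omega)
    -- remaining: one vertex is the apex, the other is interior
    by_cases c5 : i = a
    · obtain rfl := c5
      obtain rfl : l = k + 1 := by omega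
      exact s5 j m (by omega) (by omega)
    · obtain rfl : j = a := by omega
      obtain rfl : m = k + 1 := by omega
      rw [symm]
      exact s5 i l (by omega) (by omega)

/-- The triangle relation in a psd matrix. -/
theorem tri {V : Type*} [Fintype V] [DecidableEq V] (X : Matrix V V ℝ) (hX : X.PosSemidef)
    (u v w : V)
    (h : X w w + X u u + X v v - 2 * X w u - 2 * X w v + 2 * X u v = 0) (t : V) :
    X w t = X u t + X v t := by
  have sy : ∀ a b, X a b = X b a := fun a b => by
    have := hX.1.apply a b
    simpa using this.symm
  set z : V → ℝ := Pi.single w 1 - Pi.single u 1 - Pi.single v 1 with hz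
  have h0 : star z ⬝ᵥ (X *ᵥ z) = 0 := by
    simp only [hz, star_trivial, Matrix.mulVec_sub, Matrix.mulVec_single_one, sub_dotProduct,
      single_dotProduct, Pi.sub_apply, Matrix.col_apply]
    rw [sy u w, sy v w, sy v u]
    linarith
  have h1 := (hX.dotProduct_mulVec_zero_iff z).1 h0
  have h2 := congrFun h1 t
  simp only [hz, Matrix.mulVec_sub, Matrix.mulVec_single_one, Pi.sub_apply, Matrix.col_apply,
    Pi.zero_apply] at h2
  rw [sy w t, sy u t, sy v t]
  linarith

theorem Gr_universally_completable (r : ℕ) (hr : 2 ≤ r) :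
    ∀ X : Matrix (VtxT r) (VtxT r) ℝ, X.PosSemidef →
      (∀ u, X u u = pT u ⬝ᵥ pT u) →
      (∀ u v, adjT u v → X u v = pT u ⬝ᵥ pT v) →
      X = Matrix.of fun u v => pT u ⬝ᵥ pT v := by
  intro X hX hd ha
  have sy : ∀ a b, X a b = X b a := fun a b => by
    have := hX.1.apply a b
    simpa using this.symm
  let vt : ∀ i l : ℕ, i + l < r → VtxT r := fun i l h =>
    ⟨(⟨i, by omega⟩, ⟨l, by omega⟩), h⟩
  have pvt : ∀ i l h, pT (vt i l h) = pfun r l i := fun i l h => rfl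
  have tr : ∀ i l (h : i + l + 1 < r) t,
      X (vt i (l + 1) (by omega)) t = X (vt i l (by omega)) t + X (vt (i + 1) l (by omega)) t := by
    intro i l h t
    apply tri X hX
    rw [hd, hd, hd, ha (vt i (l + 1) (by omega)) (vt i l (by omega)) (by simp [adjT, vt]),
      ha (vt i (l + 1) (by omega)) (vt (i + 1) l (by omega)) (by simp [adjT, vt]),
      ha (vt i l (by omega)) (vt (i + 1) l (by omega)) (by simp [adjT, vt])]
    simp only [pvt, pfun, add_dotProduct, dotProduct_add]
    rw [dotProduct_comm (pfun r l (i + 1)) (pfun r l i)]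
    ring
  let F : ℕ → ℕ → ℕ → ℕ → ℝ := fun i l j m =>
    if h : i + l < r ∧ j + m < r then
      X (vt i l h.1) (vt j m h.2) - pfun r l i ⬝ᵥ pfun r m j else 0
  have Fe : ∀ i l j m (h1 : i + l < r) (h2 : j + m < r),
      F i l j m = X (vt i l h1) (vt j m h2) - pfun r l i ⬝ᵥ pfun r m j := by
    intro i l j m h1 h2
    simp only [F]
    rw [dif_pos ⟨h1, h2⟩]
  have key := core r F
    (by
      intro i l j m
      by_cases h : i + l < r ∧ j + m < r
      · rw [Fe i l j m h.1 h.2, Fe j m i l h.2 h.1, sy, dotProduct_comm]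
      · simp only [F]
        rw [dif_neg h, dif_neg (by tauto)])
    (by
      intro i l h
      rw [Fe _ _ _ _ h h, hd, pvt, sub_self])
    (by
      intro i l h
      rw [Fe _ _ _ _ (by omega) (by omega), ha _ _ (by simp [adjT, vt]), pvt, pvt, sub_self])
    (by
      intro i l j m h1 h2
      rw [Fe _ _ _ _ (by omega) h2, Fe _ _ _ _ (by omega) h2, Fe _ _ _ _ (by omega) h2,
        tr i l h1]
      simp only [pfun, add_dotProduct]
      ring)
  ext u v
  obtain ⟨⟨i, l⟩, hu⟩ := u
  obtain ⟨⟨j, m⟩, hv⟩ := v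
  have hu' : (i : ℕ) + l < r := hu
  have hv' : (j : ℕ) + m < r := hv
  have := key (r - 1) 0 (by omega) i l j m (by omega) (by omega) (by omega) (by omega)
  rw [Fe _ _ _ _ hu hv] at this
  exact sub_eq_zero.1 this

end Stmt18
end
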